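/- For every integer α ≥ 1 there exist integers d(3,0) and d(n,0), d(n,1), d(n,2) for n ≥ 4 such that, in the d_5 tower, L_{2α−1} = 7·d(3,0)·(p_0 + p_1)·t^3 + p_0·∑_{n≥4} d(n,0)·7^{⌊(7n−20)/4⌋}·t^n + p_1·∑_{n≥4} d(n,1)·7^{⌊(7n−24)/4⌋}·t^n + ∑_{n≥4} d(n,2)·7^{⌊(7n−24)/4⌋}·t^n, where the infinite sums converge coefficientwise since t^n has q-order n. -/

import Mathlib

noncomputable section

/-- `J b = ∏_{k=1}^∞ (1 - q^{b·k})` as a formal power series with integer coefficients. -/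
def J (b : ℕ) : PowerSeries ℤ :=
  PowerSeries.mk fun n =>
    PowerSeries.coeff n
      (∏ k ∈ Finset.range (n + 1), (1 - (PowerSeries.X : PowerSeries ℤ) ^ (b * (k + 1))))

/-- The coefficientwise-convergent sum `∑_{n≥0} c(n)·t^n`: since `t` has q-order 1, the
coefficient of `q^m` only receives contributions from `n ≤ m`. -/
def tpowSum (t : PowerSeries ℤ) (c : ℕ → ℤ) : PowerSeries ℤ :=
  PowerSeries.mk fun m =>
    ∑ n ∈ Finset.range (m + 1), c n * PowerSeries.coeff m (t ^ n)

def EE : Nat := Nat.pow 2 1024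
def KK : Int := Int.ofNat EE
def KK1 : Int := Int.ofNat (Nat.succ EE)

structure C6 where
  a0 : Int
  a1 : Int
  a2 : Int
  a3 : Int
  a4 : Int
  a5 : Int
  bd : Nat

namespace C6
def add (x y : C6) : C6 :=
  ⟨x.a0 + y.a0, x.a1 + y.a1, x.a2 + y.a2, x.a3 + y.a3, x.a4 + y.a4, x.a5 + y.a5, x.bd + y.bd⟩
def sub (x y : C6) : C6 :=
  ⟨x.a0 - y.a0, x.a1 - y.a1, x.a2 - y.a2, x.a3 - y.a3, x.a4 - y.a4, x.a5 - y.a5, x.bd + y.bd⟩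
def neg (x : C6) : C6 := ⟨-x.a0, -x.a1, -x.a2, -x.a3, -x.a4, -x.a5, x.bd⟩
def sc (c : Int) (x : C6) : C6 :=
  ⟨c * x.a0, c * x.a1, c * x.a2, c * x.a3, c * x.a4, c * x.a5, c.natAbs * x.bd⟩
def sg (x : C6) : C6 :=
  ⟨KK * x.a0, KK * x.a1, KK * x.a2, KK * x.a3, KK * x.a4, KK * x.a5, x.bd⟩
def la (x : C6) : C6 :=
  ⟨x.a2, x.a0 + KK1 * x.a2, x.a1 + KK * x.a2, x.a5, x.a3 + KK1 * x.a5, x.a4 + KK * x.a5, 3 * x.bd⟩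
def mu (x : C6) : C6 :=
  ⟨KK1 * x.a3 - x.a4, KK * x.a3 - x.a5, - x.a3, x.a0 + KK * x.a3 - x.a5,
    x.a1 + KK * x.a4 - x.a3 - KK1 * x.a5, x.a2 - x.a4, 5 * x.bd⟩
def nu (x : C6) : C6 :=
  ⟨KK * x.a0 - x.a2 - KK1 * x.a3 + x.a4, KK * x.a1 - x.a0 - KK1 * x.a2 - KK * x.a3 + x.a5,
   x.a3 - x.a1, -x.a0, -x.a1, -x.a2, 6 * x.bd⟩
def zero : C6 := ⟨0, 0, 0, 0, 0, 0, 0⟩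
def one : C6 := ⟨1, 0, 0, 0, 0, 0, 1⟩
def isz (x : C6) : Bool :=
  decide (x.a0 = 0) && decide (x.a1 = 0) && decide (x.a2 = 0) && decide (x.a3 = 0) &&
  decide (x.a4 = 0) && decide (x.a5 = 0) && Nat.blt x.bd EE
def mA (x : C6) : C6 := (x.add x.la).la.nu
def mB (x : C6) : C6 := (x.add x.mu).la.mu
def mC (x : C6) : C6 := (x.add x.nu).mu.nu
def h (x : C6) : C6 :=
  ((x.sg).sub (x.sc 7)).sub ((x.nu.la.la).add ((x.la.mu.mu).add (x.mu.nu.nu)))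
def h2 (x : C6) : C6 :=
  ((x.sg).add ((x.sc 8).add ((x.mu.la.la).add ((x.nu.mu.mu).add (x.la.nu.nu))))).neg
/-- multiplication by `8v` -/
def v1 (x : C6) : C6 := x.add ((x.add x.mu).la)
def v2 (x : C6) : C6 := x.add ((x.add x.la).nu)
def v4 (x : C6) : C6 := x.add ((x.add x.nu).mu)
def v (x : C6) : C6 := x.v1.v2.v4.neg
/-- polynomial in `h` with integer coefficients -/
def ph : List Int → C6
  | [] => zero
  | a :: l => (one.sc a).add (ph l).h
end C6

structure C42 where
  o : C6
  a : C6
  b : C6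
  c : C6
  ab : C6
  bc : C6
  ca : C6

namespace C42
def one : C42 := ⟨.one, .zero, .zero, .zero, .zero, .zero, .zero⟩
def mulY (x : C42) : C42 :=
  ⟨((x.o.add x.ab).add (x.bc.add x.ca)).neg,
   (x.o.sub x.a).sub (((x.b.add x.bc).mB).add x.bc),
   (x.o.sub x.b).sub (((x.c.add x.ca).mC).add x.ca),
   (x.o.sub x.c).sub (((x.a.add x.ab).mA).add x.ab),
   ((x.a.add x.b).sub x.ab).sub x.ca.mC,
   ((x.b.add x.c).sub x.bc).sub x.ab.mA,
   ((x.c.add x.a).sub x.ca).sub x.bc.mB⟩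
def mulZ (x : C42) : C42 :=
  ⟨((x.o.add x.ab.la).add (x.bc.mu.add x.ca.nu)).neg,
   ((x.o.mu).sub (x.a.add x.b)).sub (x.b.mu.add ((x.bc.mB).add x.bc).la),
   ((x.o.nu).sub (x.b.add x.c)).sub (x.c.nu.add ((x.ca.mC).add x.ca).mu),
   ((x.o.la).sub (x.c.add x.a)).sub (x.a.la.add ((x.ab.mA).add x.ab).nu),
   ((x.b.mu).add (x.a.nu)).sub (((x.ca.add x.ca.nu)).add x.ab),
   ((x.c.nu).add (x.b.la)).sub (((x.ab.add x.ab.la)).add x.bc),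
   ((x.a.la).add (x.c.mu)).sub (((x.bc.add x.bc.mu)).add x.ca)⟩
def itZ : Nat → C42
  | 0 => one
  | n+1 => (itZ n).mulZ
def S (b : Nat) : Nat → C42
  | 0 => itZ b
  | n+1 => (S b n).mulY
end C42

abbrev W3 := List Int × List Int × List Int
def rhs (w : W3) : C6 :=
  let p0 := C6.ph w.1
  let p1 := C6.ph w.2.1
  let p2 := C6.ph w.2.2
  ((p0.h2.v.add (p1.h.sc 7)).h2).add (((p2.sc 7).sub p0).h.h)
def chk2 (b : Nat) : Nat → List W3 → Bool
  | _, [] => true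
  | k, w :: m => ((((C42.S b k).o.h.h.h).sc 7).sub (rhs w)).isz && chk2 b (k+1) m
def chk1 (b : Nat) : Nat → List W3 → Bool
  | _, [] => true
  | k, w :: m => ((((C42.S b k).o.h.h.h.h).sc 7).sub (rhs w).h2).isz && chk1 b (k+1) m
def chk0 (b b' : Nat) : Nat → List W3 → Bool
  | _, [] => true
  | k, w :: m => ((((C42.S b k).o.v.sub (C42.S b' (k+7)).o).h.h.h).sub (rhs w)).isz && chk0 b b' (k+1) m
def chkW : Bool :=
  let g := fun (f : C42 → C6) =>
    let s := fun n => f (C42.S 0 n)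
    let x := ((((s 7).add ((s 6).sc 7)).add ((s 5).sc 21)).add ((s 4).sc 49)).add ((s 3).sc 147)
    let y := (((s 3).sc 7).add ((s 2).sc 35)).add ((s 1).sc 49)
    (((x.add ((s 2).sc 343)).add ((s 1).sc 343)).add (y.sub (s 0).h).h).isz
  g C42.o && g C42.a && g C42.b && g C42.c && g C42.ab && g C42.bc && g C42.ca

def win00 : List (List Int × List Int × List Int) := [
  ([0, 0, 0, -6], [0, 0, 7], [0, 0, -7]),
  ([0, 0, 49], [], [0, -343, -49, -12]),
  ([0, 0, 343, 84, 1], [0, 0, -49, -1], [0, -2401, -441, 3]),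
  ([0, 0, -343], [], [0, 2401, 343]),
  ([0, 0, -2401, -294, 22], [0, 0, 0, -28], [0, 16807, 3430, 273, 3]),
  ([0, 0, 2401], [], [0, -16807, -2401, 0, 64]),
  ([0, 0, -16807, -8232, -910, -7], [0, 0, 4802, 735, 7], [0, 117649, 40817, 3136, -105])]

def win01 : List (List Int × List Int × List Int) := [
  ([0, 49, 7], [0, -7], [-343, -49, -4]),
  ([0, 343, 63], [0, -49], [-2401, -441, -8]),
  ([0, -343, -49], [0, 49], [2401, 343]),
  ([0, -2401, -490, -10], [0, 343, 7], [16807, 3430, 182]),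
  ([0, 2401, 343], [0, -343], [-16807, -2401, 0, 24]),
  ([0, -16807, -5831, -532, -1], [0, 2401, 441, 1], [117649, 40817, 3920, 35]),
  ([0, 100842, 28812, 2009, 8], [0, -14406, -1715, -7], [-705894, -201684, -16807, -280])]

def win02 : List (List Int × List Int × List Int) := [
  ([], [], [0, 1]),
  ([], [], [0, -1]),
  ([], [], [0, 1]),
  ([], [], [0, -7]),
  ([], [], [0, -7, -4]),
  ([], [], [0, 49, 10]),
  ([], [], [0, 49])]

def win10 : List (List Int × List Int × List Int) := [
  ([0, 0, 2401, 0, -133], [0, 0, 0, -931, -152], [0, -16807, -2401]),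
  ([0, 0, 16807, 4802, 266], [0, 0, -4802, 1862, 70], [0, -117649, -16807, -882]),
  ([0, 0, -16807, 0, 1225, 25], [0, 0, 0, 0, 700, 25], [0, 117649, 16807]),
  ([0, 0, 117649, 7203, -2597, -301], [0, 0, -16807, -6517, -2205, -302], [0, -823543, -184877, -6860, 98]),
  ([0, 0, -705894, -168070, -6517, 1190, 1], [0, 0, 117649, 4802, 8575, 1362, 1], [0, 4941258, 1058841, 64827, 490, 1]),
  ([0, 0, 823543, 134456, -18865, -3283, -15], [0, 0, 0, 9604, -23667, -2261, -15], [0, -5764801, -823543, -16807, 2401, -7]),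
  ([0, 0, -823543, 0, 0, -2009, -41], [0, 0, 0, 0, 0, -1148, -41], [0, 5764801, 823543])]

def win11 : List (List Int × List Int × List Int) := [
  ([0, 16807, 2401], [0, -2401, 0, -90], [-117649, -16807, -882]),
  ([0, -16807, -2401, 441, 9], [0, 2401, 0, 252, 9], [117649, 16807]),
  ([0, 117649, 26411, 98, -70], [0, -16807, -1372, -420, -70], [-823543, -184877, -6860, 98]),
  ([0, -705894, -151263, -6517, 154, 1], [0, 100842, 4802, 1323, 178, 1], [4941258, 1058841, 64827, 490, 1]),
  ([0, 823543, 117649, -3087, -441, -7], [0, -117649, 4802, -2597, 35, -7], [-5764801, -823543, -16807, 2401, -7]),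
  ([0, -823543, -117649, 0, -1617, -33], [0, 117649, 0, 0, -924, -33], [5764801, 823543]),
  ([0, 5764801, 823543, 2401, 4459, 511], [0, -823543, 16807, 5145, 2793, 512], [-40353607, -5764801, 0, 0, -588])]

def win12 : List (List Int × List Int × List Int) := [
  ([], [0, 0, 10], [0, 49]),
  ([0, 0, -49, -1], [0, 0, -28, -1], [0, 49]),
  ([0, 0, 98, 12], [0, 0, 56, 12], [0, -343, -14]),
  ([0, 0, 0, -35], [0, 0, -245, -40], [0, -343]),
  ([0, 0, 343, 91, 1], [0, 0, 441, 35, 1], [0, 0, -147, 1]),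
  ([], [], [0, 2401]),
  ([0, 0, -4802, -588, -70], [0, 0, 686, -98, -70], [0, 16807, 3430, 70])]

section Repr
variable {F : Type*} [CommRing F]

def CRep (s : F) (n : Int) (B : Nat) (z : F) : Prop :=
  ∃ P : Polynomial ℤ, P.eval KK = n ∧ (∀ i, (P.coeff i).natAbs ≤ B) ∧ Polynomial.aeval s P = z

theorem CRep.mono {s : F} {n B B' z} (h : CRep s n B z) (hB : B ≤ B') : CRep s n B' z := by
  obtain ⟨P, h1, h2, h3⟩ := h
  exact ⟨P, h1, fun i => (h2 i).trans hB, h3⟩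

theorem CRep.add {s : F} {n m B C z w} (h : CRep s n B z) (h' : CRep s m C w) :
    CRep s (n + m) (B + C) (z + w) := by
  obtain ⟨P, h1, h2, h3⟩ := h
  obtain ⟨Q, k1, k2, k3⟩ := h'
  refine ⟨P + Q, by simp [h1, k1], fun i => ?_, by simp [h3, k3]⟩
  rw [Polynomial.coeff_add]
  exact (Int.natAbs_add_le _ _).trans (add_le_add (h2 i) (k2 i))

theorem CRep.neg {s : F} {n B z} (h : CRep s n B z) : CRep s (-n) B (-z) := by
  obtain ⟨P, h1, h2, h3⟩ := h
  exact ⟨-P, by simp [h1], fun i => by simpa using h2 i, by simp [h3]⟩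

theorem CRep.sub {s : F} {n m B C z w} (h : CRep s n B z) (h' : CRep s m C w) :
    CRep s (n - m) (B + C) (z - w) := by
  rw [sub_eq_add_neg, sub_eq_add_neg]; exact h.add h'.neg

theorem CRep.sc {s : F} {n B z} (c : Int) (h : CRep s n B z) :
    CRep s (c * n) (c.natAbs * B) (c * z) := by
  obtain ⟨P, h1, h2, h3⟩ := h
  refine ⟨Polynomial.C c * P, by simp [h1], fun i => ?_, by simp [h3]⟩
  rw [Polynomial.coeff_C_mul, Int.natAbs_mul]
  exact Nat.mul_le_mul_left _ (h2 i)

theorem CRep.sg {s : F} {n B z} (h : CRep s n B z) : CRep s (KK * n) B (s * z) := by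
  obtain ⟨P, h1, h2, h3⟩ := h
  refine ⟨Polynomial.X * P, by simp [h1], fun i => ?_, by simp [h3]⟩
  cases i with
  | zero => simp
  | succ i => simpa using h2 i

theorem CRep.sg1 {s : F} {n B z} (h : CRep s n B z) : CRep s (KK1 * n) (B + B) ((1 + s) * z) := by
  have := h.sg.add h
  have e : KK1 * n = KK * n + n := by
    have : KK1 = KK + 1 := Int.natCast_succ EE
    rw [this]; ring
  rw [e, show (1 + s) * z = s * z + z by ring]; exact this

theorem CRep.zero {s : F} : CRep s 0 0 0 := ⟨0, by simp, by simp, by simp⟩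
theorem CRep.one {s : F} : CRep s 1 1 1 := by
  refine ⟨1, by simp, fun i => ?_, by simp⟩
  rw [Polynomial.coeff_one]; split_ifs <;> simp

theorem poly_zero_of_small (P : Polynomial ℤ) (B : Nat) (hB : B < EE)
    (h1 : P.eval KK = 0) (h2 : ∀ i, (P.coeff i).natAbs ≤ B) : P = 0 := by
  have key : ∀ n : ℕ, ∀ P : Polynomial ℤ, P.natDegree ≤ n → P.eval KK = 0 →
      (∀ i, (P.coeff i).natAbs ≤ B) → P = 0 := by
    have hKB : (B : ℤ) < KK := by
      unfold KK
      exact Int.ofNat_lt.2 hB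
    intro n
    induction n with
    | zero =>
      intro P hd h1 _
      rw [Polynomial.eq_C_of_natDegree_le_zero hd] at h1 ⊢
      simp only [Polynomial.eval_C] at h1
      rw [h1]; simp
    | succ n ih =>
      intro P hd h1 h2
      have e := Polynomial.divX_mul_X_add P
      have e0 : P.coeff 0 = 0 := by
        have : KK ∣ P.coeff 0 := by
          rw [← e] at h1
          simp only [Polynomial.eval_add, Polynomial.eval_mul, Polynomial.eval_X,
            Polynomial.eval_C] at h1
          exact ⟨- P.divX.eval KK, by linear_combination h1⟩
        refine Int.eq_zero_of_abs_lt_dvd this ?_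
        refine lt_of_le_of_lt ?_ hKB
        have := h2 0
        rw [Int.abs_eq_natAbs]; exact_mod_cast this
      have hx : P.divX = 0 := by
        apply ih
        · have := Polynomial.natDegree_divX_eq_natDegree_tsub_one (p := P)
          omega
        · rw [← e] at h1
          simp only [Polynomial.eval_add, Polynomial.eval_mul, Polynomial.eval_X,
            Polynomial.eval_C, e0, add_zero] at h1
          rcases mul_eq_zero.1 h1 with h | h
          · exact h
          · omega
        · intro i
          rw [Polynomial.coeff_divX]; exact h2 _
      rw [← e, hx, e0]; simp
  exact key _ P le_rfl h1 h2

theorem CRep.eq_zero {s : F} {n B z} (h : CRep s n B z) (hn : n = 0) (hB : B < EE) :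
    z = 0 := by
  obtain ⟨P, h1, h2, h3⟩ := h
  rw [← h3, poly_zero_of_small P B hB (h1.trans hn) h2]; simp

/-- `x` represents `z`. -/
def LRep (l m n : F) (x : C6) (z : F) : Prop :=
  ∃ z0 z1 z2 z3 z4 z5 : F, CRep (l + m + n) x.a0 x.bd z0 ∧ CRep (l + m + n) x.a1 x.bd z1 ∧
    CRep (l + m + n) x.a2 x.bd z2 ∧ CRep (l + m + n) x.a3 x.bd z3 ∧
    CRep (l + m + n) x.a4 x.bd z4 ∧ CRep (l + m + n) x.a5 x.bd z5 ∧
    z = z0 + z1 * l + z2 * l ^ 2 + (z3 + z4 * l + z5 * l ^ 2) * m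

variable {l m n : F}

theorem LRep.add {x y z w} (h : LRep l m n x z) (h' : LRep l m n y w) : LRep l m n (x.add y) (z + w) := by
  obtain ⟨z0, z1, z2, z3, z4, z5, h0, h1, h2, h3, h4, h5, e⟩ := h
  obtain ⟨w0, w1, w2, w3, w4, w5, k0, k1, k2, k3, k4, k5, f⟩ := h'
  exact ⟨_, _, _, _, _, _, h0.add k0, h1.add k1, h2.add k2, h3.add k3, h4.add k4, h5.add k5, by
    rw [e, f]; ring⟩
theorem LRep.sub {x y z w} (h : LRep l m n x z) (h' : LRep l m n y w) : LRep l m n (x.sub y) (z - w) := by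
  obtain ⟨z0, z1, z2, z3, z4, z5, h0, h1, h2, h3, h4, h5, e⟩ := h
  obtain ⟨w0, w1, w2, w3, w4, w5, k0, k1, k2, k3, k4, k5, f⟩ := h'
  exact ⟨_, _, _, _, _, _, h0.sub k0, h1.sub k1, h2.sub k2, h3.sub k3, h4.sub k4, h5.sub k5, by
    rw [e, f]; ring⟩
theorem LRep.neg {x z} (h : LRep l m n x z) : LRep l m n x.neg (-z) := by
  obtain ⟨z0, z1, z2, z3, z4, z5, h0, h1, h2, h3, h4, h5, e⟩ := h
  exact ⟨_, _, _, _, _, _, h0.neg, h1.neg, h2.neg, h3.neg, h4.neg, h5.neg, by rw [e]; ring⟩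
theorem LRep.sc {x z} (c : Int) (h : LRep l m n x z) : LRep l m n (x.sc c) (c * z) := by
  obtain ⟨z0, z1, z2, z3, z4, z5, h0, h1, h2, h3, h4, h5, e⟩ := h
  exact ⟨_, _, _, _, _, _, h0.sc c, h1.sc c, h2.sc c, h3.sc c, h4.sc c, h5.sc c, by rw [e]; ring⟩
theorem LRep.sg {x z} (h : LRep l m n x z) : LRep l m n x.sg ((l + m + n) * z) := by
  obtain ⟨z0, z1, z2, z3, z4, z5, h0, h1, h2, h3, h4, h5, e⟩ := h
  exact ⟨_, _, _, _, _, _, h0.sg, h1.sg, h2.sg, h3.sg, h4.sg, h5.sg, by rw [e]; ring⟩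
theorem LRep.zero : LRep l m n .zero 0 :=
  ⟨_, _, _, _, _, _, .zero, .zero, .zero, .zero, .zero, .zero, by ring⟩
theorem LRep.one : LRep l m n .one 1 :=
  ⟨1, 0, 0, 0, 0, 0, .one, CRep.zero.mono (by decide), CRep.zero.mono (by decide), CRep.zero.mono (by decide), CRep.zero.mono (by decide), CRep.zero.mono (by decide), by ring⟩

theorem LRep.la {x z} (r1 : l * m * n = 1) (r2 : l + m + n + l * m + m * n + n * l = -1)
    (h : LRep l m n x z) : LRep l m n x.la (l * z) := by
  obtain ⟨z0, z1, z2, z3, z4, z5, h0, h1, h2, h3, h4, h5, e⟩ := h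
  refine ⟨_, _, _, _, _, _, h2.mono ?_, (h0.add h2.sg1).mono ?_, (h1.add h2.sg).mono ?_,
    h5.mono ?_, (h3.add h5.sg1).mono ?_, (h4.add h5.sg).mono ?_, ?_⟩
  iterate 6 (unfold C6.la; dsimp only; omega)
  rw [e]
  linear_combination (z2 + z5 * m) * (r1 - l * r2)
theorem LRep.mu {x z} (r1 : l * m * n = 1) (r2 : l + m + n + l * m + m * n + n * l = -1)
    (h : LRep l m n x z) : LRep l m n x.mu (m * z) := by
  obtain ⟨z0, z1, z2, z3, z4, z5, h0, h1, h2, h3, h4, h5, e⟩ := h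
  refine ⟨_, _, _, _, _, _, (h3.sg1.sub h4).mono ?_, (h3.sg.sub h5).mono ?_, h3.neg.mono ?_,
    ((h0.add h3.sg).sub h5).mono ?_, (((h1.add h4.sg).sub h3).sub h5.sg1).mono ?_, (h2.sub h4).mono ?_, ?_⟩
  iterate 6 (unfold C6.mu; dsimp only; omega)
  rw [e]
  linear_combination (-(z3 + z4 * l + z5 * l ^ 2)) * r2 + (-z5 * m - z4 - z5 * l) * (r1 - l * r2)
theorem LRep.nu {x z} (r1 : l * m * n = 1) (r2 : l + m + n + l * m + m * n + n * l = -1)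
    (h : LRep l m n x z) : LRep l m n x.nu (n * z) := by
  obtain ⟨z0, z1, z2, z3, z4, z5, h0, h1, h2, h3, h4, h5, e⟩ := h
  refine ⟨_, _, _, _, _, _, (((h0.sg.sub h2).sub h3.sg1).add h4).mono ?_,
    ((((h1.sg.sub h0).sub h2.sg1).sub h3.sg).add h5).mono ?_, (h3.sub h1).mono ?_,
    h0.neg.mono ?_, h1.neg.mono ?_, h2.neg.mono ?_, ?_⟩
  iterate 6 (unfold C6.nu; dsimp only; omega)
  rw [e]
  linear_combination (z3 + z4 * l + z5 * l ^ 2) * r2 + (z5 * m + z4 + z5 * l) * (r1 - l * r2) - (z2 + z5 * m) * (r1 - l * r2)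
theorem LRep.eq_zero {x z} (h : LRep l m n x z) (hx : x.isz = true) : z = 0 := by
  obtain ⟨z0, z1, z2, z3, z4, z5, h0, h1, h2, h3, h4, h5, e⟩ := h
  simp only [C6.isz, Bool.and_eq_true, decide_eq_true_eq] at hx
  obtain ⟨⟨⟨⟨⟨⟨e0, e1⟩, e2⟩, e3⟩, e4⟩, e5⟩, hb⟩ := hx
  have hb : x.bd < EE := by simpa [Nat.blt] using hb
  rw [e, h0.eq_zero e0 hb, h1.eq_zero e1 hb, h2.eq_zero e2 hb, h3.eq_zero e3 hb, h4.eq_zero e4 hb,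
    h5.eq_zero e5 hb]; ring
end Repr

section Repr2
variable {F : Type*} [CommRing F] {l m n : F}

theorem LRep.congr {x : C6} {z w : F} (h : LRep l m n x z) (e : z = w) : LRep l m n x w := e ▸ h

section
variable (r1 : l * m * n = 1) (r2 : l + m + n + l * m + m * n + n * l = -1)
theorem LRep.mA {x : C6} {z : F} (r1 : l * m * n = 1) (r2 : l + m + n + l * m + m * n + n * l = -1)
    (h : LRep l m n x z) : LRep l m n x.mA ((l * n * (1 + l)) * z) :=
  (((h.add (h.la r1 r2)).la r1 r2).nu r1 r2).congr (by ring)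
theorem LRep.mB {x : C6} {z : F} (r1 : l * m * n = 1) (r2 : l + m + n + l * m + m * n + n * l = -1)
    (h : LRep l m n x z) : LRep l m n x.mB ((l * m * (1 + m)) * z) :=
  (((h.add (h.mu r1 r2)).la r1 r2).mu r1 r2).congr (by ring)
theorem LRep.mC {x : C6} {z : F} (r1 : l * m * n = 1) (r2 : l + m + n + l * m + m * n + n * l = -1)
    (h : LRep l m n x z) : LRep l m n x.mC ((m * n * (1 + n)) * z) :=
  (((h.add (h.nu r1 r2)).mu r1 r2).nu r1 r2).congr (by ring)

def hF (l m n : F) : F := l + m + n - 7 - (l ^ 2 * n + m ^ 2 * l + n ^ 2 * m)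
def h2F (l m n : F) : F := -(l ^ 2 * m + m ^ 2 * n + n ^ 2 * l) - (l + m + n) - 8
def vF (l m n : F) : F := (-1 - l - l * m) * (-1 - n - l * n) * (-1 - m - m * n)

theorem LRep.h {x : C6} {z : F} (r1 : l * m * n = 1) (r2 : l + m + n + l * m + m * n + n * l = -1)
    (h : LRep l m n x z) : LRep l m n x.h (hF l m n * z) :=
  ((h.sg.sub (h.sc 7)).sub ((((h.nu r1 r2).la r1 r2).la r1 r2).add
    ((((h.la r1 r2).mu r1 r2).mu r1 r2).add (((h.mu r1 r2).nu r1 r2).nu r1 r2)))).congr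
    (by unfold hF; push_cast; ring)
theorem LRep.h2 {x : C6} {z : F} (r1 : l * m * n = 1) (r2 : l + m + n + l * m + m * n + n * l = -1)
    (h : LRep l m n x z) : LRep l m n x.h2 (h2F l m n * z) :=
  (h.sg.add ((h.sc 8).add ((((h.mu r1 r2).la r1 r2).la r1 r2).add
    ((((h.nu r1 r2).mu r1 r2).mu r1 r2).add (((h.la r1 r2).nu r1 r2).nu r1 r2))))).neg.congr
    (by unfold h2F; push_cast; ring)
theorem LRep.v {x : C6} {z : F} (r1 : l * m * n = 1) (r2 : l + m + n + l * m + m * n + n * l = -1)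
    (h : LRep l m n x z) : LRep l m n x.v (vF l m n * z) := by
  have k1 : LRep l m n x.v1 ((1 + l + l * m) * z) :=
    (h.add ((h.add (h.mu r1 r2)).la r1 r2)).congr (by ring)
  have k2 : LRep l m n x.v1.v2 ((1 + n + l * n) * ((1 + l + l * m) * z)) :=
    (k1.add ((k1.add (k1.la r1 r2)).nu r1 r2)).congr (by ring)
  have k3 : LRep l m n x.v1.v2.v4 ((1 + m + m * n) * ((1 + n + l * n) * ((1 + l + l * m) * z))) :=
    (k2.add ((k2.add (k2.nu r1 r2)).mu r1 r2)).congr (by ring)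
  exact k3.neg.congr (by unfold vF; ring)
end

/-- evaluation of a list of integers as a polynomial -/
def pev (x : F) : List Int → F
  | [] => 0
  | a :: L => a + x * pev x L

theorem LRep.ph (r1 : l * m * n = 1) (r2 : l + m + n + l * m + m * n + n * l = -1) (L : List Int) :
    LRep l m n (C6.ph L) (pev (hF l m n) L) := by
  induction L with
  | nil => exact LRep.zero
  | cons a L ih => exact ((LRep.one.sc a).add (ih.h r1 r2)).congr (by simp [pev])

def rhsF (l m n : F) (w : W3) : F :=
  (vF l m n * h2F l m n ^ 2 - hF l m n ^ 2) * pev (hF l m n) w.1 +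
   7 * (hF l m n * h2F l m n * pev (hF l m n) w.2.1) + 7 * (hF l m n ^ 2 * pev (hF l m n) w.2.2)

theorem LRep.rhs (r1 : l * m * n = 1) (r2 : l + m + n + l * m + m * n + n * l = -1) (w : W3) :
    LRep l m n (rhs w) (rhsF l m n w) := by
  have p0 := LRep.ph r1 r2 w.1
  have p1 := LRep.ph r1 r2 w.2.1
  have p2 := LRep.ph r1 r2 w.2.2
  exact (((((p0.h2 r1 r2).v r1 r2).add ((p1.h r1 r2).sc 7)).h2 r1 r2).add
    ((((p2.sc 7).sub p0).h r1 r2).h r1 r2)).congr (by unfold rhsF; push_cast; ring)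

theorem chk2_sound (r1 : l * m * n = 1) (r2 : l + m + n + l * m + m * n + n * l = -1) (b : ℕ)
    (S : ℕ → F) (hS : ∀ k, LRep l m n (C42.S b k).o (S k)) (L : List W3) (k : ℕ)
    (h : chk2 b k L = true) :
    ∀ j (hj : j < L.length), 7 * hF l m n ^ 3 * S (k + j) = rhsF l m n L[j] := by
  induction L generalizing k with
  | nil => intro j hj; simp at hj
  | cons w L ih =>
    rw [chk2, Bool.and_eq_true] at h
    intro j hj
    cases j with
    | zero =>
      have := (((((hS k).h r1 r2).h r1 r2).h r1 r2).sc 7 |>.sub (LRep.rhs r1 r2 w)).eq_zero h.1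
      push_cast at this
      simp only [List.getElem_cons_zero, add_zero]
      linear_combination this
    | succ j =>
      have := ih (k + 1) h.2 j (by simpa using hj)
      rw [add_right_comm] at this
      simpa [add_assoc] using this

theorem chk1_sound (r1 : l * m * n = 1) (r2 : l + m + n + l * m + m * n + n * l = -1) (b : ℕ)
    (S : ℕ → F) (hS : ∀ k, LRep l m n (C42.S b k).o (S k)) (L : List W3) (k : ℕ)
    (h : chk1 b k L = true) :
    ∀ j (hj : j < L.length), 7 * hF l m n ^ 4 * S (k + j) = h2F l m n * rhsF l m n L[j] := by
  induction L generalizing k with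
  | nil => intro j hj; simp at hj
  | cons w L ih =>
    rw [chk1, Bool.and_eq_true] at h
    intro j hj
    cases j with
    | zero =>
      have := ((((((hS k).h r1 r2).h r1 r2).h r1 r2).h r1 r2).sc 7 |>.sub
        ((LRep.rhs r1 r2 w).h2 r1 r2)).eq_zero h.1
      push_cast at this
      simp only [List.getElem_cons_zero, add_zero]
      linear_combination this
    | succ j =>
      have := ih (k + 1) h.2 j (by simpa using hj)
      rw [add_right_comm] at this
      simpa [add_assoc] using this

theorem chk0_sound (r1 : l * m * n = 1) (r2 : l + m + n + l * m + m * n + n * l = -1) (b b' : ℕ)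
    (S S' : ℕ → F) (hS : ∀ k, LRep l m n (C42.S b k).o (S k))
    (hS' : ∀ k, LRep l m n (C42.S b' k).o (S' k)) (L : List W3) (k : ℕ)
    (h : chk0 b b' k L = true) :
    ∀ j (hj : j < L.length), hF l m n ^ 3 * (vF l m n * S (k + j) - S' (k + j + 7))
      = rhsF l m n L[j] := by
  induction L generalizing k with
  | nil => intro j hj; simp at hj
  | cons w L ih =>
    rw [chk0, Bool.and_eq_true] at h
    intro j hj
    cases j with
    | zero =>
      have := (((((((hS k).v r1 r2).sub (hS' (k + 7))).h r1 r2).h r1 r2).h r1 r2).sub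
        (LRep.rhs r1 r2 w)).eq_zero h.1
      simp only [List.getElem_cons_zero, add_zero]
      linear_combination this
    | succ j =>
      have := ih (k + 1) h.2 j (by simpa using hj)
      rw [show k + 1 + j = k + (j + 1) by ring] at this
      simpa using this
end Repr2

/-- The abstract algebraic situation. -/
structure Dis {F : Type*} [CommRing F] (V : F →+* F) (U : F →+ F) (al be ga l m n : F) : Prop where
  UV : ∀ a b, U (V a * b) = a * U b
  U1 : U 1 = 1
  Ua : U al = 0
  Ub : U be = 0
  Uc : U ga = 0
  Uab : U (al * be) = 0
  Ubc : U (be * ga) = 0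
  Uca : U (ga * al) = 0
  abc : al * be * ga = -1
  aa : al ^ 2 = -V (l * n * (1 + l)) * ga
  bb : be ^ 2 = -V (l * m * (1 + m)) * al
  cc : ga ^ 2 = -V (m * n * (1 + n)) * be
  r1 : l * m * n = 1
  r2 : l + m + n + l * m + m * n + n * l = -1

namespace Dis
variable {F : Type*} [CommRing F] {V : F →+* F} {U : F →+ F} {al be ga l m n : F}

def Rp (V : F →+* F) (al be ga l m n : F) (x : C42) (z : F) : Prop :=
  ∃ o a b c ab bc ca : F, LRep l m n x.o o ∧ LRep l m n x.a a ∧ LRep l m n x.b b ∧ LRep l m n x.c c ∧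
    LRep l m n x.ab ab ∧ LRep l m n x.bc bc ∧ LRep l m n x.ca ca ∧
    z = V o + V a * al + V b * be + V c * ga + V ab * (al * be) + V bc * (be * ga) + V ca * (ga * al)

theorem Rp.mulY (D : Dis V U al be ga l m n) {x z} (h : Rp V al be ga l m n x z) :
    Rp V al be ga l m n x.mulY ((al + be + ga - 1) * z) := by
  obtain ⟨o, a, b, c, ab, bc, ca, ho, ha, hb, hc, hab, hbc, hca, e⟩ := h
  have r1 := D.r1
  have r2 := D.r2
  refine ⟨_, _, _, _, _, _, _,
   ((ho.add hab).add (hbc.add hca)).neg,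
   (ho.sub ha).sub (((hb.add hbc).mB r1 r2).add hbc),
   (ho.sub hb).sub (((hc.add hca).mC r1 r2).add hca),
   (ho.sub hc).sub (((ha.add hab).mA r1 r2).add hab),
   ((ha.add hb).sub hab).sub (hca.mC r1 r2),
   ((hb.add hc).sub hbc).sub (hab.mA r1 r2),
   ((hc.add ha).sub hca).sub (hbc.mB r1 r2), ?_⟩
  have aa := D.aa
  have bb := D.bb
  have cc := D.cc
  have abc := D.abc
  have vr1 := congrArg V r1
  have vr2 := congrArg V r2
  simp only [map_add, map_mul, map_neg, map_sub, map_one] at *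
  generalize V l = L at *
  generalize V m = M at *
  generalize V n = N at *
  rw [e]
  have AC : L * N * (1 + L) * (M * N * (1 + N)) = -(1 + M * N * (1 + N)) := by
    linear_combination (N * (1 + L) * (1 + N) - 1) * vr1 + N * vr2
  have BA : L * M * (1 + M) * (L * N * (1 + L)) = -(1 + L * N * (1 + L)) := by
    linear_combination (L * (1 + M) * (1 + L) - 1) * vr1 + L * vr2
  have CB : M * N * (1 + N) * (L * M * (1 + M)) = -(1 + L * M * (1 + M)) := by
    linear_combination (M * (1 + N) * (1 + M) - 1) * vr1 + M * vr2
  linear_combination (V a * aa + V ab * be * aa + V bc * abc + V ca * (ga * aa - L * N * (1 + L) * cc + be * AC)) +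
    (V b * bb + V bc * ga * bb + V ca * abc + V ab * (al * bb - L * M * (1 + M) * aa + ga * BA)) +
    (V c * cc + V ca * al * cc + V ab * abc + V bc * (be * cc - M * N * (1 + N) * bb + al * CB))

theorem Rp.mulZ (D : Dis V U al be ga l m n) {x z} (h : Rp V al be ga l m n x z) :
    Rp V al be ga l m n x.mulZ ((V m * al + V n * be + V l * ga - 1) * z) := by
  obtain ⟨o, a, b, c, ab, bc, ca, ho, ha, hb, hc, hab, hbc, hca, e⟩ := h
  have r1 := D.r1
  have r2 := D.r2
  refine ⟨_, _, _, _, _, _, _,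
   ((ho.add (hab.la r1 r2)).add ((hbc.mu r1 r2).add (hca.nu r1 r2))).neg,
   ((ho.mu r1 r2).sub (ha.add hb)).sub ((hb.mu r1 r2).add (((hbc.mB r1 r2).add hbc).la r1 r2)),
   ((ho.nu r1 r2).sub (hb.add hc)).sub ((hc.nu r1 r2).add (((hca.mC r1 r2).add hca).mu r1 r2)),
   ((ho.la r1 r2).sub (hc.add ha)).sub ((ha.la r1 r2).add (((hab.mA r1 r2).add hab).nu r1 r2)),
   ((hb.mu r1 r2).add (ha.nu r1 r2)).sub (((hca.add (hca.nu r1 r2))).add hab),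
   ((hc.nu r1 r2).add (hb.la r1 r2)).sub (((hab.add (hab.la r1 r2))).add hbc),
   ((ha.la r1 r2).add (hc.mu r1 r2)).sub (((hbc.add (hbc.mu r1 r2))).add hca), ?_⟩
  have aa := D.aa
  have bb := D.bb
  have cc := D.cc
  have abc := D.abc
  have vr1 := congrArg V r1
  have vr2 := congrArg V r2
  simp only [map_add, map_mul, map_neg, map_sub, map_one] at *
  generalize V l = L at *
  generalize V m = M at *
  generalize V n = N at *
  rw [e]
  have AC : L * N * (1 + L) * (M * N * (1 + N)) = -(1 + M * N * (1 + N)) := by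
    linear_combination (N * (1 + L) * (1 + N) - 1) * vr1 + N * vr2
  have BA : L * M * (1 + M) * (L * N * (1 + L)) = -(1 + L * N * (1 + L)) := by
    linear_combination (L * (1 + M) * (1 + L) - 1) * vr1 + L * vr2
  have CB : M * N * (1 + N) * (L * M * (1 + M)) = -(1 + L * M * (1 + M)) := by
    linear_combination (M * (1 + N) * (1 + M) - 1) * vr1 + M * vr2
  linear_combination M * (V a * aa + V ab * be * aa + V bc * abc + V ca * (ga * aa - L * N * (1 + L) * cc + be * AC)) +
    N * (V b * bb + V bc * ga * bb + V ca * abc + V ab * (al * bb - L * M * (1 + M) * aa + ga * BA)) +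
    L * (V c * cc + V ca * al * cc + V ab * abc + V bc * (be * cc - M * N * (1 + N) * bb + al * CB))
    - ((V a * ga + V ab * (be * ga)) * (1 + L) + (V b * al + V bc * (ga * al)) * (1 + M)
     + (V c * be + V ca * (al * be)) * (1 + N)) * vr1

theorem Rp.S (D : Dis V U al be ga l m n) (b k : ℕ) :
    Rp V al be ga l m n (C42.S b k)
      ((al + be + ga - 1) ^ k * (V m * al + V n * be + V l * ga - 1) ^ b) := by
  induction k with
  | zero =>
    rw [pow_zero, one_mul]
    induction b with
    | zero => exact ⟨1, 0, 0, 0, 0, 0, 0, .one, .zero, .zero, .zero, .zero, .zero, .zero, by simp⟩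
    | succ b ih => rw [pow_succ']; exact Rp.mulZ D ih
  | succ k ih => rw [pow_succ', mul_assoc]; exact Rp.mulY D ih

theorem SU (D : Dis V U al be ga l m n) (b k : ℕ) :
    LRep l m n (C42.S b k).o
      (U ((al + be + ga - 1) ^ k * (V m * al + V n * be + V l * ga - 1) ^ b)) := by
  obtain ⟨o, a, b, c, ab, bc, ca, ho, ha, hb, hc, hab, hbc, hca, e⟩ := Rp.S D b k
  rw [e]
  refine ho.congr ?_
  have : U (V o) = o := by simpa [D.U1] using D.UV o 1
  simp [this, D.UV, D.Ua, D.Ub, D.Uc, D.Uab, D.Ubc, D.Uca]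

theorem cW : chkW = true := by decide +kernel

theorem W_eq (D : Dis V U al be ga l m n) :
    let Y := al + be + ga - 1
    let h := V (hF l m n)
    Y ^ 7 + 7 * Y ^ 6 + 21 * Y ^ 5 + 49 * Y ^ 4 + (7 * h + 147) * Y ^ 3 + (35 * h + 343) * Y ^ 2
      + (49 * h + 343) * Y - h ^ 2 = 0 := by
  intro Y h
  have H := cW
  simp only [chkW, Bool.and_eq_true] at H
  obtain ⟨⟨⟨⟨⟨⟨H0, H1⟩, H2⟩, H3⟩, H4⟩, H5⟩, H6⟩ := H
  have S : ∀ k, Rp V al be ga l m n (C42.S 0 k) (Y ^ k) := fun k => by simpa using Rp.S D 0 k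
  choose o a b c ab bc ca ho ha hb hc hab hbc hca e using S
  have r1 := D.r1
  have r2 := D.r2
  have key : ∀ (f : C42 → C6) (s : ℕ → F) (hs : ∀ k, LRep l m n (f (C42.S 0 k)) (s k))
     (H : (((((((((f (C42.S 0 7)).add ((f (C42.S 0 6)).sc 7)).add ((f (C42.S 0 5)).sc 21)).add
       ((f (C42.S 0 4)).sc 49)).add ((f (C42.S 0 3)).sc 147)).add ((f (C42.S 0 2)).sc 343)).add
       ((f (C42.S 0 1)).sc 343)).add
       (((((f (C42.S 0 3)).sc 7).add ((f (C42.S 0 2)).sc 35)).add ((f (C42.S 0 1)).sc 49)).sub (f (C42.S 0 0)).h).h)).isz = true),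
     V (s 7) + 7 * V (s 6) + 21 * V (s 5) + 49 * V (s 4) + 147 * V (s 3) + 343 * V (s 2) + 343 * V (s 1)
      + h * (7 * V (s 3) + 35 * V (s 2) + 49 * V (s 1) - h * V (s 0)) = 0 := by
    intro f s hs H
    have := ((((((((hs 7).add ((hs 6).sc 7)).add ((hs 5).sc 21)).add
       ((hs 4).sc 49)).add ((hs 3).sc 147)).add ((hs 2).sc 343)).add
       ((hs 1).sc 343)).add
       ((((((hs 3).sc 7).add ((hs 2).sc 35)).add ((hs 1).sc 49)).sub ((hs 0).h r1 r2)).h r1 r2)).eq_zero H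
    have := congrArg V this
    simp only [map_add, map_mul, map_sub, map_zero, map_intCast] at this
    push_cast at this
    exact this
  have k0 := key _ o ho H0
  have k1 := key _ a ha H1
  have k2 := key _ b hb H2
  have k3 := key _ c hc H3
  have k4 := key _ ab hab H4
  have k5 := key _ bc hbc H5
  have k6 := key _ ca hca H6
  have e0 : V (o 0) + V (a 0) * al + V (b 0) * be + V (c 0) * ga + V (ab 0) * (al * be) + V (bc 0) * (be * ga) + V (ca 0) * (ga * al) = 1 := by
    rw [← e]; simp
  have e1 : V (o 1) + V (a 1) * al + V (b 1) * be + V (c 1) * ga + V (ab 1) * (al * be) + V (bc 1) * (be * ga) + V (ca 1) * (ga * al) = Y := by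
    rw [← e]; simp
  linear_combination k0 + al * k1 + be * k2 + ga * k3 + al * be * k4 + be * ga * k5 + ga * al * k6
    + e 7 + 7 * e 6 + 21 * e 5 + 49 * e 4 + (7 * h + 147) * e 3 + (35 * h + 343) * e 2
    - (49 * h + 343) * e1 + h ^ 2 * e0
end Dis

/-- The full situation. -/
structure Sys {F : Type*} [CommRing F] (V : F →+* F) (U : F →+ F) (al be ga l m n : F)
    (t : Fˣ) (y p0 p1 A5 : F) : Prop where
  D : Dis V U al be ga l m n
  th : (t : F) * hF l m n = 1
  yY : y * (al + be + ga - 1) = 1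
  tY : (t : F) = V (hF l m n) * y ^ 4
  p1u : V (h2F l m n) * p1 = V (hF l m n) * (V m * al + V n * be + V l * ga - 1) ^ 4 * y ^ 4
  p0u : 1 + 7 * p0 = V (vF l m n) * (V m * al + V n * be + V l * ga - 1) ^ 7 * y ^ 7
  A5u : A5 = (V m * al + V n * be + V l * ga - 1) ^ 5 * y ^ 16
  p1l : p1 = t * h2F l m n
  p0l : 1 + 7 * p0 = vF l m n * h2F l m n ^ 2 * (t : F) ^ 2
  h2ne : h2F l m n ≠ 0

def Adm0 (w a b c : ℤ) : Prop :=
  ((w < -3 → a = 0) ∧ (w < 4 → b = 0) ∧ (w < 0 → c = 0)) ∧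
  (7 ^ ((w + 2) / 4).toNat ∣ a) ∧ (7 ^ ((w - 1) / 4).toNat ∣ b) ∧ (7 ^ ((w - 1) / 4).toNat ∣ c)

def Adm1 (e : Bool) (w a b c : ℤ) : Prop :=
  ((w < 18 → a = 0) ∧ (w ≤ 23 → a = b) ∧ (w < 25 → c = 0)) ∧ (e = true → w = 21 → 7 ∣ a) ∧
  (7 ^ ((w - 20) / 4).toNat ∣ a) ∧ (7 ^ ((w - 23) / 4).toNat ∣ b) ∧ (7 ^ ((w - 23) / 4).toNat ∣ c)

instance (w a b c : ℤ) : Decidable (Adm0 w a b c) := by unfold Adm0; infer_instance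
instance (e : Bool) (w a b c : ℤ) : Decidable (Adm1 e w a b c) := by unfold Adm1; infer_instance

theorem dvd_aux {r i j : ℕ} {k a : ℤ} (hk : (7 : ℤ) ^ r ∣ k) (ha : (7 : ℤ) ^ i ∣ a) (h : j ≤ r + i) :
    (7 : ℤ) ^ j ∣ k * a :=
  (pow_dvd_pow 7 h).trans (by rw [pow_add]; exact mul_dvd_mul hk ha)

def StepOK (Ad : ℤ → ℤ → ℤ → ℤ → Prop) : Prop :=
  ∀ (w a b c k : ℤ) (r : ℕ) (s : ℤ), Ad w a b c → (7 : ℤ) ^ r ∣ k → 0 ≤ s → s ≤ 4 * r →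
    Ad (w + s) (k * a) (k * b) (k * c)

theorem step0 : StepOK Adm0 := by
  rintro w a b c k r s ⟨⟨h1, h2, h3⟩, h4, h5, h6⟩ hk hs hr
  refine ⟨⟨fun h => ?_, fun h => ?_, fun h => ?_⟩, dvd_aux hk h4 ?_, dvd_aux hk h5 ?_, dvd_aux hk h6 ?_⟩
  · rw [h1 (by omega), mul_zero]
  · rw [h2 (by omega), mul_zero]
  · rw [h3 (by omega), mul_zero]
  all_goals omega

theorem step1 (e : Bool) : StepOK (Adm1 e) := by
  rintro w a b c k r s ⟨⟨h1, h2, h3⟩, h0, h4, h5, h6⟩ hk hs hr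
  refine ⟨⟨fun h => ?_, fun h => ?_, fun h => ?_⟩, fun he hw => ?_,
    dvd_aux hk h4 ?_, dvd_aux hk h5 ?_, dvd_aux hk h6 ?_⟩
  · rw [h1 (by omega), mul_zero]
  · rw [h2 (by omega)]
  · rw [h3 (by omega), mul_zero]
  · rcases Nat.eq_zero_or_pos r with h | h
    · exact (h0 he (by subst h; push_cast at hr; omega)).mul_left k
    · exact ((dvd_pow_self 7 h.ne').trans hk).mul_right a
  all_goals omega

def admL (Ad : ℤ → ℤ → ℤ → ℤ → Prop) : ℕ → ℤ → List Int → List Int → List Int → Prop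
  | 0, _, p, q, r => p = [] ∧ q = [] ∧ r = []
  | i + 1, w, p, q, r =>
    Ad w (p.headD 0) (q.headD 0) (r.headD 0) ∧ admL Ad i (w - 7) p.tail q.tail r.tail

instance (Ad : ℤ → ℤ → ℤ → ℤ → Prop) [∀ w a b c, Decidable (Ad w a b c)] (i : ℕ) :
   ∀ (w : ℤ) (p q r : List Int), Decidable (admL Ad i w p q r) := by
  induction i with
  | zero => intro w p q r; unfold admL; infer_instance
  | succ i ih => intro w p q r; unfold admL; infer_instance

def admW (Ad : ℤ → ℤ → ℤ → ℤ → Prop) : ℤ → List W3 → Prop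
  | _, [] => True
  | k, w :: L => admL Ad 8 (7 + 2 * k) w.1 w.2.1 w.2.2 ∧ admW Ad (k + 1) L

instance (Ad : ℤ → ℤ → ℤ → ℤ → Prop) [∀ w a b c, Decidable (Ad w a b c)] (L : List W3) :
   ∀ (k : ℤ), Decidable (admW Ad k L) := by
  induction L with
  | nil => intro k; unfold admW; infer_instance
  | cons i L ih => intro k; unfold admW; infer_instance

theorem aw00 : admW Adm0 7 win00 := by decide +kernel
theorem aw01 : admW Adm0 4 win01 := by decide +kernel
theorem aw02 : admW Adm0 0 win02 := by decide +kernel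
theorem aw10 : admW (Adm1 false) 23 win10 := by decide +kernel
theorem aw11 : admW (Adm1 false) 20 win11 := by decide +kernel
theorem aw12 : admW (Adm1 true) 16 win12 := by decide +kernel
theorem c02 : chk2 0 0 win02 = true := by decide +kernel
theorem c01 : chk1 4 0 win01 = true := by decide +kernel
theorem c00 : chk0 7 0 0 win00 = true := by decide +kernel
theorem c12 : chk2 5 0 win12 = true := by decide +kernel
theorem c11 : chk1 9 0 win11 = true := by decide +kernel
theorem c10 : chk0 12 5 0 win10 = true := by decide +kernel

theorem admW_get (Ad : ℤ → ℤ → ℤ → ℤ → Prop) (L : List W3) (k : ℤ) (h : admW Ad k L) (j : ℕ)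
    (hj : j < L.length) : admL Ad 8 (7 + 2 * (k + j)) L[j].1 L[j].2.1 L[j].2.2 := by
  induction L generalizing k j with
  | nil => simp at hj
  | cons w L ih =>
    cases j with
    | zero => simpa using h.1
    | succ j =>
      have := ih (k + 1) h.2 j (by simpa using hj)
      push_cast
      rw [show k + (j + 1 : ℤ) = k + 1 + j by ring]
      simpa using this

section
variable {F : Type*} [CommRing F] (t : Fˣ) (p0 p1 : F)

/-- the span of `p0 t^m, p1 t^m, t^m` with coefficients subject to `E m`. -/
def Mod3 (E : ℤ → ℤ → ℤ → ℤ → Prop) : AddSubgroup F :=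
  AddSubgroup.closure {x | ∃ m a b c : ℤ, E m a b c ∧ x = (a * p0 + b * p1 + c) * ((t ^ m : Fˣ) : F)}

variable {t p0 p1}

theorem Mod3.mem {E : ℤ → ℤ → ℤ → ℤ → Prop} (m a b c : ℤ) (h : E m a b c) :
    (a * p0 + b * p1 + c) * ((t ^ m : Fˣ) : F) ∈ Mod3 t p0 p1 E :=
  AddSubgroup.subset_closure ⟨m, a, b, c, h, rfl⟩

theorem Mod3.map {E E' : ℤ → ℤ → ℤ → ℤ → Prop} (k r : ℤ)
    (h : ∀ m a b c, E m a b c → E' (m + r) (k * a) (k * b) (k * c)) {x : F}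
    (hx : x ∈ Mod3 t p0 p1 E) : (k : F) * ((t ^ r : Fˣ) : F) * x ∈ Mod3 t p0 p1 E' := by
  induction hx using AddSubgroup.closure_induction with
  | mem x hx =>
    obtain ⟨m, a, b, c, hE, rfl⟩ := hx
    convert Mod3.mem (E := E') (t := t) (p0 := p0) (p1 := p1) _ _ _ _ (h m a b c hE) using 1
    rw [zpow_add]; push_cast; ring
  | zero => simp
  | add x y _ _ hx hy => rw [mul_add]; exact add_mem hx hy
  | neg x _ hx => rw [mul_neg]; exact neg_mem hx

theorem pev_head (x : F) (L : List Int) : pev x L = (L.headD 0 : ℤ) + x * pev x L.tail := by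
  cases L <;> simp [pev]

theorem admL_mem {Ad : ℤ → ℤ → ℤ → ℤ → Prop} (h : F) (hh : (t : F) * h = 1) (N : ℤ) (i : ℕ) :
    ∀ (m : ℤ) (p q r : List Int), admL Ad i (7 * m - 2 * N) p q r →
    ((t ^ m : Fˣ) : F) * (p0 * pev h p + p1 * pev h q + pev h r) ∈
      Mod3 t p0 p1 (fun m => Ad (7 * m - 2 * N)) := by
  have hi : h = ((t⁻¹ : Fˣ) : F) := (Units.inv_eq_of_mul_eq_one_right hh).symm
  induction i with
  | zero => rintro m p q r ⟨rfl, rfl, rfl⟩; simp [pev]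
  | succ i ih =>
    rintro m p q r ⟨h1, h2⟩
    rw [show 7 * m - 2 * N - 7 = 7 * (m - 1) - 2 * N by ring] at h2
    have h3 := ih _ _ _ _ h2
    have h4 := Mod3.mem (t := t) (p0 := p0) (p1 := p1) (E := fun m => Ad (7 * m - 2 * N)) m _ _ _ h1
    convert add_mem h4 h3 using 1
    rw [pev_head h p, pev_head h q, pev_head h r, zpow_sub, zpow_one, Units.val_mul, ← hi]
    ring
end

namespace Sys
variable {F : Type*} [CommRing F] {V : F →+* F} {U : F →+ F} {al be ga l m n : F}
    {t : Fˣ} {y p0 p1 A5 : F}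

theorem y_rec (S : Sys V U al be ga l m n t y p0 p1 A5) :
    y ^ 7 = V t ^ 2 * 1 + 7 * V t ^ 2 * y + 21 * V t ^ 2 * y ^ 2 + 49 * V t ^ 2 * y ^ 3
      + (7 * V t + 147 * V t ^ 2) * y ^ 4 + (35 * V t + 343 * V t ^ 2) * y ^ 5
      + (49 * V t + 343 * V t ^ 2) * y ^ 6 := by
  have W := S.D.W_eq
  have hT : V t * V (hF l m n) = 1 := by rw [← map_mul, S.th, map_one]
  have yY := S.yY
  simp only at W
  generalize al + be + ga - 1 = Y at *
  generalize V (hF l m n) = h at *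
  generalize V (t : F) = T at *
  have e1 : ∀ k, (y ^ k * Y ^ k) = 1 := fun k => by rw [← mul_pow, yY, one_pow]
  linear_combination (-(y ^ 7 * T ^ 2)) * W + T ^ 2 * e1 7 + 7 * T ^ 2 * y * e1 6
    + 21 * T ^ 2 * y ^ 2 * e1 5 + 49 * T ^ 2 * y ^ 3 * e1 4
    + (7 * h + 147) * T ^ 2 * y ^ 4 * e1 3 + (35 * h + 343) * T ^ 2 * y ^ 5 * e1 2
    + (49 * h + 343) * T ^ 2 * y ^ 6 * e1 1 + (-(T * h + 1) * y ^ 7 + T * (7 * y ^ 4 + 35 * y ^ 5 + 49 * y ^ 6)) * hT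

theorem rec_mem (S : Sys V U al be ga l m n t y p0 p1 A5) {Ad : ℤ → ℤ → ℤ → ℤ → Prop} (hA : StepOK Ad)
    (f : F) (K : ℤ) (h0 : ∀ i < 7, U (f * y ^ i) ∈ Mod3 t p0 p1 (fun m => Ad (7 * m - 2 * ((i : ℕ) - K)))) (i : ℕ) :
    U (f * y ^ i) ∈ Mod3 t p0 p1 (fun m => Ad (7 * m - 2 * ((i : ℕ) - K))) := by
  induction i using Nat.strong_induction_on with
  | _ i ih =>
    rcases lt_or_ge i 7 with hi | hi
    · exact h0 i hi
    obtain ⟨i, rfl⟩ := Nat.exists_eq_add_of_le' hi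
    have e : f * y ^ (i + 7) = V t ^ 2 * (f * y ^ (i + 0)) + (7 : ℕ) • (V t ^ 2 * (f * y ^ (i + 1)))
        + 21 • (V t ^ 2 * (f * y ^ (i + 2))) + 49 • (V t ^ 2 * (f * y ^ (i + 3)))
        + 7 • (V t * (f * y ^ (i + 4))) + 147 • (V t ^ 2 * (f * y ^ (i + 4)))
        + 35 • (V t * (f * y ^ (i + 5))) + 343 • (V t ^ 2 * (f * y ^ (i + 5)))
        + 49 • (V t * (f * y ^ (i + 6))) + 343 • (V t ^ 2 * (f * y ^ (i + 6))) := by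
      rw [pow_add y i 7, S.y_rec]
      simp only [nsmul_eq_mul]
      push_cast
      ring
    rw [e]
    simp only [← map_pow, map_add, map_nsmul, S.D.UV]
    have key : ∀ (j : ℕ) (r : ℕ) (k : ℕ) (q : ℕ), j < 7 → (7 : ℤ) ^ q ∣ k → 14 ≤ 7 * r + 2 * j →
        7 * r + 2 * j ≤ 14 + 4 * q →
        k • ((t : F) ^ r * U (f * y ^ (i + j))) ∈
          Mod3 t p0 p1 (fun m => Ad (7 * m - 2 * ((i + 7 : ℕ) - K))) := by
      intro j r k q hj hk h1 h2
      have := Mod3.map (t := t) (p0 := p0) (p1 := p1) (E' := fun m => Ad (7 * m - 2 * ((i + 7 : ℕ) - K)))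
        (k : ℤ) r ?_ (ih (i + j) (by omega))
      · convert this using 1
        simp [mul_assoc]
      · intro m a b c h
        have := hA _ _ _ _ (k : ℤ) q (7 * r + 2 * j - 14) h hk (by omega) (by omega)
        convert this using 1
        push_cast; ring
    have k1 := key 0 2 1 0 (by norm_num) (by norm_num) (by norm_num) (by norm_num)
    rw [one_smul] at k1
    have k2 := key 1 2 7 1 (by norm_num) (by norm_num) (by norm_num) (by norm_num)
    have k3 := key 2 2 21 1 (by norm_num) (by norm_num) (by norm_num) (by norm_num)
    have k4 := key 3 2 49 2 (by norm_num) (by norm_num) (by norm_num) (by norm_num)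
    have k5 := key 4 1 7 1 (by norm_num) (by norm_num) (by norm_num) (by norm_num)
    have k6 := key 4 2 147 2 (by norm_num) (by norm_num) (by norm_num) (by norm_num)
    have k7 := key 5 1 35 1 (by norm_num) (by norm_num) (by norm_num) (by norm_num)
    have k8 := key 5 2 343 3 (by norm_num) (by norm_num) (by norm_num) (by norm_num)
    have k9 := key 6 1 49 2 (by norm_num) (by norm_num) (by norm_num) (by norm_num)
    have k10 := key 6 2 343 3 (by norm_num) (by norm_num) (by norm_num) (by norm_num)
    rw [pow_one] at k5 k7 k9
    exact add_mem (add_mem (add_mem (add_mem (add_mem (add_mem (add_mem (add_mem (add_mem k1 k2) k3) k4)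
      k5) k6) k7) k8) k9) k10

/-- from windows to all `U (f t^n)`. -/
theorem t_mem (S : Sys V U al be ga l m n t y p0 p1 A5) {Ad : ℤ → ℤ → ℤ → ℤ → Prop} (hA : StepOK Ad)
    (f : F) (k0 : ℕ) (L : List W3) (hlen : L.length = 7) (hL : admW Ad k0 L)
    (hw : ∀ j (hj : j < L.length), U (f * (al + be + ga - 1) ^ (k0 + j)) =
      t * (p0 * pev (hF l m n) L[j].1 + p1 * pev (hF l m n) L[j].2.1 + pev (hF l m n) L[j].2.2)) (r : ℕ) :
    U (f * (t : F) ^ r) ∈ Mod3 t p0 p1 (fun m => Ad (7 * m - r)) := by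
  have yY : ∀ k, (al + be + ga - 1) ^ k * y ^ k = 1 := fun k => by
    rw [← mul_pow, mul_comm, S.yY, one_pow]
  have h1 := rec_mem S hA (f * (al + be + ga - 1) ^ (k0 + 6)) ((k0 + 6 : ℕ) : ℤ) (fun i hi => by
    have h2 := hw (6 - i) (by omega)
    have h3 := admL_mem (Ad := Ad) (p0 := p0) (p1 := p1) (hF l m n) S.th (i - (k0 + 6 : ℕ)) 8 1 _ _ _
      (by
        have := admW_get Ad L k0 hL (6 - i) (by omega)
        convert this using 1
        push_cast [Nat.cast_sub (show i ≤ 6 by omega)]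
        ring)
    rw [zpow_one, ← h2] at h3
    convert h3 using 2
    have : k0 + 6 = k0 + (6 - i) + i := by omega
    rw [this, pow_add _ (k0 + (6 - i)) i]
    have yi := yY i
    generalize (al + be + ga - 1) ^ (k0 + (6 - i)) = Y' at *
    generalize (al + be + ga - 1) ^ i = Y at *
    linear_combination f * Y' * yi) (4 * r + (k0 + 6))
  have h4 : U (f * (t : F) ^ r) = hF l m n ^ r * U (f * (al + be + ga - 1) ^ (k0 + 6) * y ^ (4 * r + (k0 + 6))) := by
    rw [← S.D.UV, S.tY, mul_pow, map_pow, ← pow_mul]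
    congr 1
    have yi := yY (k0 + 6)
    rw [pow_add y]
    generalize (al + be + ga - 1) ^ (k0 + 6) = Y at *
    linear_combination (-f * V (hF l m n) ^ r * y ^ (4 * r)) * yi
  have hi : hF l m n = ((t⁻¹ : Fˣ) : F) := (Units.inv_eq_of_mul_eq_one_right S.th).symm
  have h5 := Mod3.map (t := t) (p0 := p0) (p1 := p1) (E' := fun m => Ad (7 * m - r)) 1 (-(r : ℤ)) ?_ h1
  · rw [h4]
    convert h5 using 1
    rw [hi]; simp
  · intro m a b c h
    simp only [one_mul]
    convert h using 1
    push_cast; ring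

variable [IsDomain F] [CharZero F]

theorem rhs_eq (S : Sys V U al be ga l m n t y p0 p1 A5) (w : W3) (u : F)
    (hu : 7 * hF l m n ^ 3 * u = rhsF l m n w) :
    u = t * (p0 * pev (hF l m n) w.1 + p1 * pev (hF l m n) w.2.1 + pev (hF l m n) w.2.2) := by
  have th := S.th
  have p1l := S.p1l
  have p0l := S.p0l
  unfold rhsF at hu
  generalize hF l m n = h at *
  generalize h2F l m n = k at *
  generalize vF l m n = v at *
  generalize pev h w.1 = A at *
  generalize pev h w.2.1 = B at *
  generalize pev h w.2.2 = C at *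
  generalize (t : F) = T at *
  have h7 : (7 : F) ≠ 0 := by norm_num
  apply mul_left_cancel₀ h7
  have e : v * k ^ 2 = (1 + 7 * p0) * h ^ 2 := by
    rw [p0l]; linear_combination -(v * k ^ 2) * (T * h + 1) * th
  have e2 : k = p1 * h := by rw [p1l]; linear_combination -k * th
  have : h ^ 3 * (7 * u) = h ^ 2 * (7 * (p0 * A + p1 * B + C)) := by
    linear_combination hu + A * e + 7 * h * B * e2
  have t3 : T ^ 3 * h ^ 3 = 1 := by rw [← mul_pow, th, one_pow]
  linear_combination T ^ 3 * this - 7 * u * t3 + T * (7 * (p0 * A + p1 * B + C)) * (T * h + 1) * th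

theorem win2 (S : Sys V U al be ga l m n t y p0 p1 A5) (j : ℕ) (hj : j < win02.length) :
    U (1 * (al + be + ga - 1) ^ (0 + j)) = t * (p0 * pev (hF l m n) win02[j].1
      + p1 * pev (hF l m n) win02[j].2.1 + pev (hF l m n) win02[j].2.2) := by
  apply S.rhs_eq
  have := chk2_sound S.D.r1 S.D.r2 0 _ (fun k => S.D.SU 0 k) win02 0 c02 j hj
  simpa using this

theorem win1 (S : Sys V U al be ga l m n t y p0 p1 A5) (j : ℕ) (hj : j < win01.length) :
    U (p1 * (al + be + ga - 1) ^ (4 + j)) = t * (p0 * pev (hF l m n) win01[j].1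
      + p1 * pev (hF l m n) win01[j].2.1 + pev (hF l m n) win01[j].2.2) := by
  apply S.rhs_eq
  have := chk1_sound S.D.r1 S.D.r2 4 _ (fun k => S.D.SU 4 k) win01 0 c01 j hj
  apply mul_left_cancel₀ S.h2ne
  rw [← this, zero_add]
  have e : h2F l m n * U (p1 * (al + be + ga - 1) ^ (4 + j)) =
      hF l m n * U ((al + be + ga - 1) ^ j * (V m * al + V n * be + V l * ga - 1) ^ 4) := by
    rw [← S.D.UV, ← S.D.UV]
    congr 1
    have y4 : y ^ 4 * (al + be + ga - 1) ^ 4 = 1 := by rw [← mul_pow, S.yY, one_pow]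
    have p1u := S.p1u
    rw [pow_add]
    generalize al + be + ga - 1 = Y at *
    generalize V m * al + V n * be + V l * ga - 1 = Z at *
    linear_combination Y ^ 4 * Y ^ j * p1u + V (hF l m n) * Z ^ 4 * Y ^ j * y4
  generalize hF l m n = H at *
  linear_combination 7 * H ^ 3 * e

theorem win0 (S : Sys V U al be ga l m n t y p0 p1 A5) (j : ℕ) (hj : j < win00.length) :
    U (p0 * (al + be + ga - 1) ^ (7 + j)) = t * (p0 * pev (hF l m n) win00[j].1
      + p1 * pev (hF l m n) win00[j].2.1 + pev (hF l m n) win00[j].2.2) := by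
  apply S.rhs_eq
  have := chk0_sound S.D.r1 S.D.r2 7 0 _ _ (fun k => S.D.SU 7 k) (fun k => S.D.SU 0 k) win00 0 c00 j hj
  rw [← this, zero_add]
  have e : 7 * U (p0 * (al + be + ga - 1) ^ (7 + j)) =
      vF l m n * U ((al + be + ga - 1) ^ j * (V m * al + V n * be + V l * ga - 1) ^ 7)
        - U ((al + be + ga - 1) ^ (j + 7) * (V m * al + V n * be + V l * ga - 1) ^ 0) := by
    have : (7 : F) * U (p0 * (al + be + ga - 1) ^ (7 + j)) = U (7 * (p0 * (al + be + ga - 1) ^ (7 + j))) := by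
      have := S.D.UV (7 : F) (p0 * (al + be + ga - 1) ^ (7 + j))
      rw [map_ofNat] at this; exact this.symm
    rw [this, ← S.D.UV, ← map_sub]
    congr 1
    have y4 : y ^ 7 * (al + be + ga - 1) ^ 7 = 1 := by rw [← mul_pow, S.yY, one_pow]
    have p0u := S.p0u
    rw [pow_add, pow_add]
    generalize al + be + ga - 1 = Y at *
    generalize V m * al + V n * be + V l * ga - 1 = Z at *
    linear_combination Y ^ 7 * Y ^ j * p0u + V (vF l m n) * Z ^ 7 * Y ^ j * y4
  generalize hF l m n = H at *
  linear_combination H ^ 3 * e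

theorem win2' (S : Sys V U al be ga l m n t y p0 p1 A5) (j : ℕ) (hj : j < win12.length) :
    U (A5 * (al + be + ga - 1) ^ (16 + j)) = t * (p0 * pev (hF l m n) win12[j].1
      + p1 * pev (hF l m n) win12[j].2.1 + pev (hF l m n) win12[j].2.2) := by
  apply S.rhs_eq
  have := chk2_sound S.D.r1 S.D.r2 5 _ (fun k => S.D.SU 5 k) win12 0 c12 j hj
  rw [← this, zero_add]
  congr 2
  rw [S.A5u, pow_add]
  have y4 : y ^ 16 * (al + be + ga - 1) ^ 16 = 1 := by rw [← mul_pow, S.yY, one_pow]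
  generalize al + be + ga - 1 = Y at *
  generalize V m * al + V n * be + V l * ga - 1 = Z at *
  linear_combination Z ^ 5 * Y ^ j * y4

theorem win1' (S : Sys V U al be ga l m n t y p0 p1 A5) (j : ℕ) (hj : j < win11.length) :
    U (A5 * p1 * (al + be + ga - 1) ^ (20 + j)) = t * (p0 * pev (hF l m n) win11[j].1
      + p1 * pev (hF l m n) win11[j].2.1 + pev (hF l m n) win11[j].2.2) := by
  apply S.rhs_eq
  have := chk1_sound S.D.r1 S.D.r2 9 _ (fun k => S.D.SU 9 k) win11 0 c11 j hj
  apply mul_left_cancel₀ S.h2ne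
  rw [← this, zero_add]
  have e : h2F l m n * U (A5 * p1 * (al + be + ga - 1) ^ (20 + j)) =
      hF l m n * U ((al + be + ga - 1) ^ j * (V m * al + V n * be + V l * ga - 1) ^ 9) := by
    rw [← S.D.UV, ← S.D.UV]
    congr 1
    have y4 : y ^ 20 * (al + be + ga - 1) ^ 20 = 1 := by rw [← mul_pow, S.yY, one_pow]
    have p1u := S.p1u
    rw [pow_add, S.A5u]
    generalize al + be + ga - 1 = Y at *
    generalize V m * al + V n * be + V l * ga - 1 = Z at *
    linear_combination Z ^ 5 * y ^ 16 * Y ^ 20 * Y ^ j * p1u + V (hF l m n) * Z ^ 9 * Y ^ j * y4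
  generalize hF l m n = H at *
  linear_combination 7 * H ^ 3 * e

theorem win0' (S : Sys V U al be ga l m n t y p0 p1 A5) (j : ℕ) (hj : j < win10.length) :
    U (A5 * p0 * (al + be + ga - 1) ^ (23 + j)) = t * (p0 * pev (hF l m n) win10[j].1
      + p1 * pev (hF l m n) win10[j].2.1 + pev (hF l m n) win10[j].2.2) := by
  apply S.rhs_eq
  have := chk0_sound S.D.r1 S.D.r2 12 5 _ _ (fun k => S.D.SU 12 k) (fun k => S.D.SU 5 k) win10 0 c10 j hj
  rw [← this, zero_add]
  have e : 7 * U (A5 * p0 * (al + be + ga - 1) ^ (23 + j)) =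
      vF l m n * U ((al + be + ga - 1) ^ j * (V m * al + V n * be + V l * ga - 1) ^ 12)
        - U ((al + be + ga - 1) ^ (j + 7) * (V m * al + V n * be + V l * ga - 1) ^ 5) := by
    have : (7 : F) * U (A5 * p0 * (al + be + ga - 1) ^ (23 + j)) =
        U (7 * (A5 * p0 * (al + be + ga - 1) ^ (23 + j))) := by
      have := S.D.UV (7 : F) (A5 * p0 * (al + be + ga - 1) ^ (23 + j))
      rw [map_ofNat] at this; exact this.symm
    rw [this, ← S.D.UV, ← map_sub]
    congr 1
    have y4 : y ^ 23 * (al + be + ga - 1) ^ 23 = 1 := by rw [← mul_pow, S.yY, one_pow]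
    have y5 : y ^ 16 * (al + be + ga - 1) ^ 16 = 1 := by rw [← mul_pow, S.yY, one_pow]
    have p0u := S.p0u
    rw [pow_add, pow_add, S.A5u]
    generalize al + be + ga - 1 = Y at *
    generalize V m * al + V n * be + V l * ga - 1 = Z at *
    linear_combination Z ^ 5 * y ^ 16 * Y ^ 23 * Y ^ j * p0u + V (vF l m n) * Z ^ 12 * Y ^ j * y4
     - Z ^ 5 * Y ^ 7 * Y ^ j * y5
  generalize hF l m n = H at *
  linear_combination H ^ 3 * e

theorem T0 (S : Sys V U al be ga l m n t y p0 p1 A5) (r : ℕ) :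
    U (p0 * (t : F) ^ r) ∈ Mod3 t p0 p1 (fun m => Adm0 (7 * m - r)) :=
  S.t_mem step0 p0 7 win00 rfl aw00 S.win0 r
theorem T1 (S : Sys V U al be ga l m n t y p0 p1 A5) (r : ℕ) :
    U (p1 * (t : F) ^ r) ∈ Mod3 t p0 p1 (fun m => Adm0 (7 * m - r)) :=
  S.t_mem step0 p1 4 win01 rfl aw01 S.win1 r
theorem T2 (S : Sys V U al be ga l m n t y p0 p1 A5) (r : ℕ) :
    U ((t : F) ^ r) ∈ Mod3 t p0 p1 (fun m => Adm0 (7 * m - r)) := by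
  have := S.t_mem step0 1 0 win02 rfl aw02 S.win2 r
  rwa [one_mul] at this
theorem T0' (S : Sys V U al be ga l m n t y p0 p1 A5) (r : ℕ) :
    U (A5 * p0 * (t : F) ^ r) ∈ Mod3 t p0 p1 (fun m => Adm1 false (7 * m - r)) :=
  S.t_mem (step1 _) _ 23 win10 rfl aw10 S.win0' r
theorem T1' (S : Sys V U al be ga l m n t y p0 p1 A5) (r : ℕ) :
    U (A5 * p1 * (t : F) ^ r) ∈ Mod3 t p0 p1 (fun m => Adm1 false (7 * m - r)) :=
  S.t_mem (step1 _) _ 20 win11 rfl aw11 S.win1' r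
theorem T2' (S : Sys V U al be ga l m n t y p0 p1 A5) (r : ℕ) :
    U (A5 * (t : F) ^ r) ∈ Mod3 t p0 p1 (fun m => Adm1 true (7 * m - r)) :=
  S.t_mem (step1 _) _ 16 win12 rfl aw12 S.win2' r
end Sys

def EvC (m a b c : ℤ) : Prop :=
  ((m < 0 → a = 0) ∧ (m < 1 → b = 0 ∧ c = 0)) ∧ (7 ∣ a ∧ 7 ∣ b ∧ 7 ∣ c) ∧
  (7 ^ ((7 * m + 2) / 4).toNat ∣ a) ∧ (7 ^ ((7 * m - 1) / 4).toNat ∣ b) ∧ (7 ^ ((7 * m - 1) / 4).toNat ∣ c)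

def OdC (m a b c : ℤ) : Prop :=
  (m < 3 → a = 0 ∧ b = 0 ∧ c = 0) ∧ (m = 3 → 7 ∣ a ∧ b = a ∧ c = 0) ∧
  (7 ^ ((7 * m - 20) / 4).toNat ∣ a) ∧ (7 ^ ((7 * m - 24) / 4).toNat ∣ b) ∧ (7 ^ ((7 * m - 24) / 4).toNat ∣ c)

theorem ev_aux (n m k a b c : ℤ) (i : ℕ) (hk : (7 : ℤ) ^ i ∣ k) (hn : 3 ≤ n) (hi : 1 ≤ i)
    (hi' : 7 * n - 24 ≤ 4 * i + 3) (h : Adm0 (7 * m - n) a b c) : EvC m (k * a) (k * b) (k * c) := by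
  obtain ⟨⟨h1, h2, h3⟩, h4, h5, h6⟩ := h
  have h7 : (7 : ℤ) ∣ k := (dvd_pow_self 7 (by omega)).trans hk
  refine ⟨⟨fun h => ?_, fun h => ⟨?_, ?_⟩⟩, ⟨h7.mul_right _, h7.mul_right _, h7.mul_right _⟩, ?_, ?_, ?_⟩
  · rw [h1 (by omega), mul_zero]
  · rw [h2 (by omega), mul_zero]
  · rw [h3 (by omega), mul_zero]
  · exact dvd_aux hk h4 (by omega)
  · exact dvd_aux hk h5 (by omega)
  · exact dvd_aux hk h6 (by omega)

theorem od_aux (e : Bool) (n m k a b c : ℤ) (i : ℕ) (hk : (7 : ℤ) ^ i ∣ k) (hn : 0 ≤ n) (hi : 1 ≤ i)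
    (hi' : 7 * n - 1 ≤ 4 * i + 3)
    (h : Adm1 e (7 * m - n) a b c) : OdC m (k * a) (k * b) (k * c) := by
  obtain ⟨⟨h1, h2, h3⟩, -, h4, h5, h6⟩ := h
  have h7 : (7 : ℤ) ∣ k := (dvd_pow_self 7 (by omega)).trans hk
  refine ⟨fun h => ⟨?_, ?_, ?_⟩, fun h => ⟨h7.mul_right _, ?_, ?_⟩, ?_, ?_, ?_⟩
  · rw [h1 (by omega), mul_zero]
  · rw [← h2 (by omega), h1 (by omega), mul_zero]
  · rw [h3 (by omega), mul_zero]
  · rw [h2 (by omega)]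
  · rw [h3 (by omega), mul_zero]
  · exact dvd_aux hk h4 (by omega)
  · exact dvd_aux hk h5 (by omega)
  · exact dvd_aux hk h6 (by omega)

namespace Sys
variable {F : Type*} [CommRing F] {V : F →+* F} {U : F →+ F} {al be ga l m n : F}
    {t : Fˣ} {y p0 p1 A5 : F} [IsDomain F] [CharZero F]

theorem map_gen {E E' : ℤ → ℤ → ℤ → ℤ → Prop} (U' : F →+ F) 
    (h : ∀ m a b c, E m a b c →
      (a : F) * U' (p0 * ((t ^ m : Fˣ) : F)) + b * U' (p1 * ((t ^ m : Fˣ) : F)) +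
      c * U' ((t ^ m : Fˣ) : F) ∈ Mod3 t p0 p1 E') {x : F} (hx : x ∈ Mod3 t p0 p1 E) :
    U' x ∈ Mod3 t p0 p1 E' := by
  induction hx using AddSubgroup.closure_induction with
  | mem x hx =>
    obtain ⟨m, a, b, c, hE, rfl⟩ := hx
    convert h m a b c hE using 1
    have e : ∀ (k : ℤ) (z : F), (k : F) * U' z = U' (k * z) := fun k z => by
      rw [← zsmul_eq_mul, ← zsmul_eq_mul, map_zsmul]
    rw [e, e, e, ← map_add, ← map_add]
    congr 1; ring
  | zero => simp
  | add x y _ _ hx hy => rw [map_add]; exact add_mem hx hy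
  | neg x _ hx => rw [map_neg]; exact neg_mem hx

theorem scale {E E' : ℤ → ℤ → ℤ → ℤ → Prop} (k : ℤ)
    (h : k = 0 ∨ ∀ m a b c, E m a b c → E' m (k * a) (k * b) (k * c)) {x : F}
    (hx : k = 0 ∨ x ∈ Mod3 t p0 p1 E) : (k : F) * x ∈ Mod3 t p0 p1 E' := by
  by_cases hk : k = 0
  · subst hk; simp
  have := Mod3.map (t := t) (p0 := p0) (p1 := p1) (E' := E') k 0 
    (by simpa using h.resolve_left hk) (hx.resolve_left hk)
  simpa using this

theorem odd_even (S : Sys V U al be ga l m n t y p0 p1 A5) {x : F} (hx : x ∈ Mod3 t p0 p1 OdC) :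
    U x ∈ Mod3 t p0 p1 EvC := by
  refine map_gen U ?_ hx
  rintro m a b c ⟨h1, h2, h3, h4, h5⟩
  rcases lt_or_ge m 3 with hm | hm
  · obtain ⟨rfl, rfl, rfl⟩ := h1 hm; simp
  obtain ⟨r, rfl⟩ := Int.eq_ofNat_of_zero_le (show 0 ≤ m by omega)
  simp only [zpow_natCast, Units.val_pow_eq_pow_val]
  rcases eq_or_lt_of_le hm with hm | hm
  · obtain ⟨h6, rfl, rfl⟩ := h2 hm.symm
    refine add_mem (add_mem (scale _ (Or.inr ?_) (Or.inr (S.T0 r))) (scale _ (Or.inr ?_) (Or.inr (S.T1 r))))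
      (scale (E := OdC) _ (Or.inl rfl) (Or.inl rfl)) <;>
    · intro m a' b' c' h
      exact ev_aux r m _ a' b' c' 1 (by simpa using h6) (by omega) le_rfl (by omega) h
  · refine add_mem (add_mem (scale _ (Or.inr ?_) (Or.inr (S.T0 r))) (scale _ (Or.inr ?_) (Or.inr (S.T1 r))))
      (scale _ (Or.inr ?_) (Or.inr (S.T2 r)))
    · intro m a' b' c' h
      exact ev_aux r m _ a' b' c' _ h3 (by omega) (by omega) (by omega) h
    · intro m a' b' c' h
      exact ev_aux r m _ a' b' c' _ h4 (by omega) (by omega) (by omega) h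
    · intro m a' b' c' h
      exact ev_aux r m _ a' b' c' _ h5 (by omega) (by omega) (by omega) h

theorem even_odd (S : Sys V U al be ga l m n t y p0 p1 A5) {x : F} (hx : x ∈ Mod3 t p0 p1 EvC) :
    U (A5 * x) ∈ Mod3 t p0 p1 OdC := by
  refine map_gen (U.comp (AddMonoidHom.mulLeft A5)) ?_ hx
  rintro m a b c ⟨⟨h1, h2⟩, ⟨ha, hb, hc⟩, h3, h4, h5⟩
  rcases lt_or_ge m 0 with hm | hm
  · obtain ⟨rfl, rfl⟩ := h2 (by omega)
    rw [h1 hm]; simp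
  obtain ⟨r, rfl⟩ := Int.eq_ofNat_of_zero_le hm
  simp only [zpow_natCast, Units.val_pow_eq_pow_val, AddMonoidHom.comp_apply,
    AddMonoidHom.coe_mulLeft, ← mul_assoc A5]
  have key : ∀ (k : ℤ) (e : Bool) (i : ℕ), 7 ∣ k → (7 : ℤ) ^ i ∣ k → 7 * (r : ℤ) - 1 ≤ 4 * i + 3 →
      ∀ m a b c, Adm1 e (7 * m - r) a b c → OdC m (k * a) (k * b) (k * c) := by
    intro k e i h7 hk hi m a b c h
    rcases Nat.eq_zero_or_pos i with h0 | h0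
    · exact od_aux e r m k a b c 1 (by simpa using h7) (by omega) le_rfl (by omega) h
    · exact od_aux e r m k a b c i hk (by omega) h0 (by omega) h
  exact add_mem (add_mem (scale _ (Or.inr (key _ _ _ ha h3 (by omega))) (Or.inr (S.T0' r)))
    (scale _ (Or.inr (key _ _ _ hb h4 (by omega))) (Or.inr (S.T1' r))))
      (scale _ (Or.inr (key _ _ _ hc h5 (by omega))) (Or.inr (S.T2' r)))

theorem first (S : Sys V U al be ga l m n t y p0 p1 A5) : U A5 ∈ Mod3 t p0 p1 OdC := by
  have := S.T2' 0
  rw [pow_zero, mul_one] at this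
  have := scale (E' := OdC) 1 (Or.inr ?_) (Or.inr this)
  · simpa using this
  rintro m a b c ⟨⟨h1, h2, h3⟩, h0, h4, h5, h6⟩
  simp only [one_mul]
  push_cast at *
  refine ⟨fun h => ⟨h1 (by omega), ?_, h3 (by omega)⟩, fun h => ⟨h0 rfl (by omega), (h2 (by omega)).symm, h3 (by omega)⟩, ?_, ?_, ?_⟩
  · rw [← h2 (by omega), h1 (by omega)]
  · exact (pow_dvd_pow 7 (by omega)).trans h4
  · exact (pow_dvd_pow 7 (by omega)).trans h5
  · exact (pow_dvd_pow 7 (by omega)).trans h6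

theorem tower (S : Sys V U al be ga l m n t y p0 p1 A5) (L : ℕ → F) (h0 : L 0 = 1)
    (h1 : ∀ i, L (2 * i + 1) = U (A5 * L (2 * i))) (h2 : ∀ i, L (2 * i + 2) = U (L (2 * i + 1))) (i : ℕ) :
    L (2 * i + 1) ∈ Mod3 t p0 p1 OdC := by
  induction i with
  | zero => rw [h1, mul_zero, h0, mul_one]; exact S.first
  | succ i ih => rw [h1, show 2 * (i + 1) = 2 * i + 2 by ring, h2]; exact S.even_odd (S.odd_even ih)
end Sys

namespace QS
open PowerSeries

section lim
variable {R : Type*} [CommRing R]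

def Lim (f : ℕ → PowerSeries R) (g : PowerSeries R) : Prop :=
  ∀ K : ℕ, ∃ N0 : ℕ, ∀ N ≥ N0, (X : PowerSeries R) ^ K ∣ f N - g

theorem Lim.const (g : PowerSeries R) : Lim (fun _ => g) g := fun K => ⟨0, fun N _ => by simp⟩

theorem Lim.mul {f f' : ℕ → PowerSeries R} {g g' : PowerSeries R} (h : Lim f g) (h' : Lim f' g') :
    Lim (fun N => f N * f' N) (g * g') := by
  intro K
  obtain ⟨a, ha⟩ := h K
  obtain ⟨b, hb⟩ := h' K
  refine ⟨max a b, fun N hN => ?_⟩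
  have e : f N * f' N - g * g' = f N * (f' N - g') + (f N - g) * g' := by ring
  rw [e]
  exact dvd_add (Dvd.dvd.mul_left (hb N (le_trans (le_max_right _ _) hN)) _)
    (Dvd.dvd.mul_right (ha N (le_trans (le_max_left _ _) hN)) _)

theorem Lim.prod {ι : Type*} (s : Finset ι) {f : ι → ℕ → PowerSeries R} {g : ι → PowerSeries R}
    (h : ∀ i ∈ s, Lim (f i) (g i)) : Lim (fun N => ∏ i ∈ s, f i N) (∏ i ∈ s, g i) := by
  classical
  induction s using Finset.induction_on with
  | empty => simpa using Lim.const 1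
  | insert i s hi ih =>
    simp only [Finset.prod_insert hi]
    exact (h i (by simp)).mul (ih fun j hj => h j (by simp [hj]))

theorem Lim.unique {f : ℕ → PowerSeries R} {g g' : PowerSeries R} (h : Lim f g) (h' : Lim f g') :
    g = g' := by
  ext n
  obtain ⟨a, ha⟩ := h (n + 1)
  obtain ⟨b, hb⟩ := h' (n + 1)
  have := dvd_sub (ha (max a b) (le_max_left _ _)) (hb (max a b) (le_max_right _ _))
  rw [X_pow_dvd_iff] at this
  have := this n (by omega)
  simp only [map_sub] at this
  linear_combination -this

theorem Lim.of_sub {f f' : ℕ → PowerSeries R} {g : PowerSeries R} (h : Lim f g)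
    (h' : ∀ K : ℕ, ∃ N0 : ℕ, ∀ N ≥ N0, (X : PowerSeries R) ^ K ∣ f' N - f N) : Lim f' g := by
  intro K
  obtain ⟨a, ha⟩ := h K
  obtain ⟨b, hb⟩ := h' K
  refine ⟨max a b, fun N hN => ?_⟩
  have := dvd_add (ha N (le_trans (le_max_left _ _) hN)) (hb N (le_trans (le_max_right _ _) hN))
  convert this using 1; ring

theorem Lim.sub_seq {f : ℕ → PowerSeries R} {g : PowerSeries R} (h : Lim f g) (σ : ℕ → ℕ)
    (hσ : ∀ n, n ≤ σ n) : Lim (fun N => f (σ N)) g := by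
  intro K
  obtain ⟨a, ha⟩ := h K
  exact ⟨a, fun N hN => ha _ (le_trans hN (hσ N))⟩

theorem Lim.map {S : Type*} [CommRing S] {f : ℕ → PowerSeries R} {g : PowerSeries R} (h : Lim f g)
    (φ : PowerSeries R →+* PowerSeries S) (hφ : (X : PowerSeries S) ∣ φ X) :
    Lim (fun N => φ (f N)) (φ g) := by
  intro K
  obtain ⟨a, ha⟩ := h K
  refine ⟨a, fun N hN => ?_⟩
  rw [← map_sub]
  refine dvd_trans (pow_dvd_pow_of_dvd hφ K) ?_
  rw [← map_pow]
  exact map_dvd φ (ha N hN)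

end lim

def PP (a s : ℕ) : PowerSeries ℤ :=
  PowerSeries.mk fun n => coeff n (∏ k ∈ Finset.range (n + 1), (1 - (X : PowerSeries ℤ) ^ (a + s * k)))

theorem J_eq (b : ℕ) : J b = PP b b := by
  unfold J PP
  congr 1; ext n; congr 2; ext k; congr 2; ring

theorem prod_sub_one {R : Type*} [CommRing R] (x : R) (s : Finset ℕ) (f : ℕ → R)
    (h : ∀ k ∈ s, x ∣ f k - 1) : x ∣ ∏ k ∈ s, f k - 1 := by
  classical
  induction s using Finset.induction_on with
  | empty => simp
  | insert i s hi ih =>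
    rw [Finset.prod_insert hi]
    have e : f i * ∏ k ∈ s, f k - 1 = (f i - 1) * ∏ k ∈ s, f k + (∏ k ∈ s, f k - 1) := by ring
    rw [e]
    exact dvd_add (Dvd.dvd.mul_right (h i (by simp)) _) (ih fun j hj => h j (by simp [hj]))

theorem fin_dvd (a s : ℕ) (hs : 1 ≤ s) (M N : ℕ) (h : M ≤ N) :
    (X : PowerSeries ℤ) ^ M ∣ ∏ k ∈ Finset.range N, (1 - (X : PowerSeries ℤ) ^ (a + s * k)) -
      ∏ k ∈ Finset.range M, (1 - (X : PowerSeries ℤ) ^ (a + s * k)) := by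
  rw [← Finset.prod_range_mul_prod_Ico _ h, ← mul_sub_one]
  refine Dvd.dvd.mul_left (prod_sub_one _ _ _ fun k hk => ?_) _
  rw [Finset.mem_Ico] at hk
  have : M ≤ a + s * k := by nlinarith
  rw [show (1 : PowerSeries ℤ) - X ^ (a + s * k) - 1 = - X ^ (a + s * k) by ring]
  exact (pow_dvd_pow _ this).neg_right

theorem PP_dvd (a s : ℕ) (hs : 1 ≤ s) (M : ℕ) : (X : PowerSeries ℤ) ^ M ∣
    ∏ k ∈ Finset.range M, (1 - (X : PowerSeries ℤ) ^ (a + s * k)) - PP a s := by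
  rw [X_pow_dvd_iff]
  intro n hn
  have := fin_dvd a s hs (n + 1) M (by omega)
  rw [X_pow_dvd_iff] at this
  have := this n (by omega)
  rw [map_sub] at this ⊢
  rw [PP, coeff_mk]; exact this

theorem PP_lim (a s : ℕ) (hs : 1 ≤ s) :
    Lim (fun N => ∏ k ∈ Finset.range N, (1 - (X : PowerSeries ℤ) ^ (a + s * k))) (PP a s) :=
  fun K => ⟨K, fun N hN => dvd_trans (pow_dvd_pow _ hN) (PP_dvd a s hs N)⟩

theorem PP_const (a s : ℕ) (ha : 1 ≤ a) : constantCoeff (PP a s) = 1 := by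
  rw [← coeff_zero_eq_constantCoeff_apply, PP, coeff_mk]
  simp
  omega

theorem J_const (b : ℕ) (hb : 1 ≤ b) : constantCoeff (J b) = 1 := by rw [J_eq, PP_const _ _ hb]

theorem J_unit (b : ℕ) (hb : 1 ≤ b) : IsUnit (J b) := by
  rw [isUnit_iff_constantCoeff, J_const b hb]; exact isUnit_one

theorem PP_split (a s d : ℕ) (hs : 1 ≤ s) (hd : 1 ≤ d) :
    PP a s = ∏ i ∈ Finset.range d, PP (a + s * i) (s * d) := by
  have h1 := (PP_lim a s hs).sub_seq (fun N => N * d) (fun n => Nat.le_mul_of_pos_right n hd)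
  refine h1.unique ?_
  have h2 := Lim.prod (Finset.range d) (f := fun i N => ∏ k ∈ Finset.range N, (1 - (X : PowerSeries ℤ) ^ (a + s * i + s * d * k))) (g := fun i => PP (a + s * i) (s * d)) fun i _ => PP_lim _ _ (Nat.mul_pos hs hd)
  convert h2 using 2 with N
  rw [Finset.prod_comm]
  induction N with
  | zero => simp
  | succ N ih =>
    rw [Finset.prod_range_succ, ← ih, add_mul, one_mul, Finset.prod_range_add]
    congr 1
    refine Finset.prod_congr rfl fun i _ => ?_
    congr 2; ring

theorem PP_expand (k : ℕ) (hk : k ≠ 0) (a s : ℕ) (hs : 1 ≤ s) : expand k hk (PP a s) = PP (k * a) (k * s) := by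
  have h := (PP_lim a s hs).map (expand k hk : PowerSeries ℤ →ₐ[ℤ] PowerSeries ℤ).toRingHom
    (by simpa using dvd_pow_self (X : PowerSeries ℤ) hk)
  refine h.unique ?_
  convert PP_lim (k * a) (k * s) (Nat.mul_pos (Nat.pos_of_ne_zero hk) hs) using 2 with N
  simp only [AlgHom.toRingHom_eq_coe, map_prod, map_sub, map_one, map_pow, RingHom.coe_coe, expand_X]
  refine Finset.prod_congr rfl fun i _ => ?_
  rw [← pow_mul]; congr 2; ring

theorem J_expand (k : ℕ) (hk : k ≠ 0) (b : ℕ) (hb : 1 ≤ b) : expand k hk (J b) = J (k * b) := by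
  rw [J_eq, J_eq, PP_expand k hk b b hb]
end QS

namespace QS
open PowerSeries

section jtp
variable {R : Type*} [CommRing R]

def gB (q : R) : ℕ → ℤ → R
  | 0, m => if m = 0 then 1 else 0
  | N + 1, m => (1 + q ^ (2 * N + 1)) * gB q N m + q ^ ((N : ℤ) + 1 - m).toNat * gB q N (m - 1)
      + q ^ ((N : ℤ) + 1 + m).toNat * gB q N (m + 1)

theorem gB_zero (q : R) (N : ℕ) (m : ℤ) (h : (N : ℤ) < |m|) : gB q N m = 0 := by
  induction N generalizing m with
  | zero => simp only [gB]; rw [if_neg]; rintro rfl; simp at h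
  | succ N ih =>
    push_cast at h
    rw [lt_abs] at h
    rw [gB, ih m (by rw [lt_abs]; omega), ih (m - 1) (by rw [lt_abs]; omega), ih (m + 1) (by rw [lt_abs]; omega)]
    ring

def poch (q : R) (M : ℕ) : R := ∏ k ∈ Finset.range M, (1 - q ^ (k + 1))

theorem poch_succ (q : R) (M : ℕ) : poch q (M + 1) = poch q M * (1 - q ^ (M + 1)) := by
  rw [poch, Finset.prod_range_succ]; rfl

theorem gB_poch (q : R) (N i j : ℕ) (h : i + j = 2 * N) :
    poch q i * poch q j * gB q N ((i : ℤ) - N) = poch q (2 * N) := by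
  induction N generalizing i j with
  | zero =>
    obtain rfl : i = 0 := by omega
    obtain rfl : j = 0 := by omega
    simp [gB, poch]
  | succ N ih =>
    have e0 : poch q (2 * (N + 1)) = poch q (2 * N) * (1 - q ^ (2 * N + 1)) * (1 - q ^ (2 * N + 2)) := by
      rw [show 2 * (N + 1) = 2 * N + 1 + 1 by ring, poch_succ, poch_succ]
    have e1 : ((N : ℤ) + 1 - ((i : ℤ) - ((N + 1 : ℕ) : ℤ))).toNat = j := by omega
    have e2 : ((N : ℤ) + 1 + ((i : ℤ) - ((N + 1 : ℕ) : ℤ))).toNat = i := by omega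
    rw [gB, e1, e2, e0]
    rcases i with _ | i
    · rw [gB_zero q N (((0 : ℕ) : ℤ) - ((N + 1 : ℕ) : ℤ)) (by push_cast; rw [abs_of_nonpos] <;> omega),
        gB_zero q N (((0 : ℕ) : ℤ) - ((N + 1 : ℕ) : ℤ) - 1) (by push_cast; rw [abs_of_nonpos] <;> omega)]
      have := ih 0 (2 * N) (by ring)
      obtain rfl : j = 2 * N + 1 + 1 := by omega
      rw [show (((0 : ℕ) : ℤ) - ((N + 1 : ℕ) : ℤ) + 1) = ((0 : ℕ) : ℤ) - N by push_cast; ring,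
        poch_succ, poch_succ]
      linear_combination (1 - q ^ (2 * N + 1)) * (1 - q ^ (2 * N + 2)) * this
    rcases j with _ | j
    · obtain rfl : i = 2 * N + 1 := by omega
      rw [gB_zero q N (((2 * N + 1 + 1 : ℕ) : ℤ) - ((N + 1 : ℕ) : ℤ)) (by push_cast; rw [abs_of_nonneg] <;> omega),
        gB_zero q N (((2 * N + 1 + 1 : ℕ) : ℤ) - ((N + 1 : ℕ) : ℤ) + 1) (by push_cast; rw [abs_of_nonneg] <;> omega)]
      have := ih (2 * N) 0 (by ring)
      rw [show (((2 * N + 1 + 1 : ℕ) : ℤ) - ((N + 1 : ℕ) : ℤ) - 1) = ((2 * N : ℕ) : ℤ) - N by push_cast; ring,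
        poch_succ, poch_succ]
      linear_combination (1 - q ^ (2 * N + 1)) * (1 - q ^ (2 * N + 2)) * this
    have h1 := ih i j (by omega)
    rw [show (((i + 1 : ℕ) : ℤ) - ((N + 1 : ℕ) : ℤ)) = (i : ℤ) - N by push_cast; ring]
    have e3 : q ^ (2 * N) = q ^ i * q ^ j := by rw [← pow_add]; congr 1; omega
    have h2 : poch q (i + 1) * poch q (j + 1) * gB q N ((i : ℤ) - N - 1) = (1 - q ^ i) * (1 - q ^ (i + 1)) * poch q (2 * N) := by
      rcases i with _ | i
      · rw [gB_zero q N _ (by push_cast; rw [abs_of_nonpos] <;> omega)]; simp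
      · have := ih i (j + 1) (by omega)
        rw [show (((i + 1 : ℕ) : ℤ) - (N : ℤ) - 1) = (i : ℤ) - N by push_cast; ring, poch_succ q (i + 1), poch_succ q i]
        linear_combination (1 - q ^ (i + 1)) * (1 - q ^ (i + 2)) * this
    have h3 : poch q (i + 1) * poch q (j + 1) * gB q N ((i : ℤ) - N + 1) = (1 - q ^ j) * (1 - q ^ (j + 1)) * poch q (2 * N) := by
      rcases j with _ | j
      · rw [gB_zero q N _ (by rw [abs_of_nonneg] <;> omega)]; simp
      · have := ih (i + 1) j (by omega)
        rw [show ((i : ℤ) - (N : ℤ) + 1) = ((i + 1 : ℕ) : ℤ) - N by push_cast; ring, poch_succ q (j + 1), poch_succ q j]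
        linear_combination (1 - q ^ (j + 1)) * (1 - q ^ (j + 2)) * this
    have h4 : poch q (i + 1) * poch q (j + 1) * gB q N ((i : ℤ) - N) = (1 - q ^ (i + 1)) * (1 - q ^ (j + 1)) * poch q (2 * N) := by
      rw [poch_succ, poch_succ]
      linear_combination (1 - q ^ (i + 1)) * (1 - q ^ (j + 1)) * h1
    simp only [pow_succ, e3] at *
    linear_combination (1 + q ^ i * q ^ j * q) * h4 + q ^ j * q * h2 + q ^ i * q * h3

def TT (u w : R) (m : ℤ) : R :=
  (-1) ^ m.natAbs * (u ^ (m * (m + 1) / 2).toNat * w ^ (m * (m - 1) / 2).toNat)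

theorem TT_up (u w : R) (N : ℕ) (m : ℤ) (h : m ≤ N + 1) :
    -(u * (u * w) ^ N) * TT u w (m - 1) = (u * w) ^ ((N : ℤ) + 1 - m).toNat * TT u w m := by
  obtain ⟨p, hp⟩ := (Int.even_mul_succ_self m).two_dvd
  obtain ⟨p1, hp1⟩ := (Int.even_mul_pred_self m).two_dvd
  obtain ⟨p2, hp2⟩ := (Int.even_mul_pred_self (m - 1)).two_dvd
  have q0 : 0 ≤ p := by nlinarith [sq_nonneg (2 * m + 1)]
  have q1 : 0 ≤ p1 := by nlinarith [sq_nonneg (2 * m - 1)]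
  have q2 : 0 ≤ p2 := by nlinarith [sq_nonneg (2 * m - 3)]
  have e1 : p1 + m = p := by linarith [hp, hp1]
  have e2 : p2 + m - 1 = p1 := by linarith [hp2, hp1]
  unfold TT
  rw [show (m - 1) * (m - 1 + 1) = m * (m - 1) by ring, hp, hp1, hp2]
  simp only [ne_eq, OfNat.ofNat_ne_zero, not_false_eq_true, Int.mul_ediv_cancel_left]
  have s : (-1 : R) ^ (m - 1).natAbs = - (-1) ^ m.natAbs := by
    rw [neg_one_pow_eq_pow_mod_two, neg_one_pow_eq_pow_mod_two (n := m.natAbs)]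
    rcases Nat.mod_two_eq_zero_or_one m.natAbs with h | h
    · rw [h, show (m - 1).natAbs % 2 = 1 by omega]; simp
    · rw [h, show (m - 1).natAbs % 2 = 0 by omega]; simp
  rw [s]
  have f1 : u * u ^ N * u ^ p1.toNat = u ^ ((N : ℤ) + 1 - m).toNat * u ^ p.toNat := by
    rw [← pow_succ', ← pow_add, ← pow_add]; congr 1; omega
  have f2 : w ^ N * w ^ p2.toNat = w ^ ((N : ℤ) + 1 - m).toNat * w ^ p1.toNat := by
    rw [← pow_add, ← pow_add]; congr 1; omega
  rw [mul_pow, mul_pow]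
  linear_combination (-1) ^ m.natAbs * (w ^ N * w ^ p2.toNat) * f1 + (-1) ^ m.natAbs * (u ^ ((N : ℤ) + 1 - m).toNat * u ^ p.toNat) * f2

theorem TT_symm (u w : R) (m : ℤ) : TT w u (-m) = TT u w m := by
  unfold TT
  rw [Int.natAbs_neg, show -m * (-m + 1) = m * (m - 1) by ring, show -m * (-m - 1) = m * (m + 1) by ring]
  ring

theorem TT_dn (u w : R) (N : ℕ) (m : ℤ) (h : -m ≤ N + 1) :
    -(w * (u * w) ^ N) * TT u w (m + 1) = (u * w) ^ ((N : ℤ) + 1 + m).toNat * TT u w m := by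
  have := TT_up w u N (-m) h
  rw [← TT_symm u w m, ← TT_symm u w, neg_add, ← sub_eq_add_neg, mul_comm u w, this, sub_neg_eq_add]

theorem finJTP (u w : R) (N : ℕ) :
    ∏ n ∈ Finset.range N, ((1 - u * (u * w) ^ n) * (1 - w * (u * w) ^ n)) =
      ∑ m ∈ Finset.Icc (-(N : ℤ)) N, gB (u * w) N m * TT u w m := by
  have fs : ∀ (N : ℕ) (f : ℤ → R), (Function.support fun m => gB (u * w) N m * f m) ⊆ Finset.Icc (-(N : ℤ)) N := by
    intro N f m hm
    rw [Function.mem_support] at hm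
    by_contra hc
    apply hm
    rw [gB_zero, zero_mul]
    simp only [Finset.coe_Icc, Set.mem_Icc, not_and_or, not_le] at hc
    rw [lt_abs]; omega
  rw [← finsum_eq_sum_of_support_subset _ (fs N _)]
  induction N with
  | zero =>
    rw [finsum_eq_single _ (0 : ℤ)]
    · simp [gB, TT]
    · intro m hm; simp [gB, hm]
  | succ N ih =>
    rw [Finset.prod_range_succ, ih]
    have fin : ∀ f : ℤ → R, (Function.support fun m => gB (u * w) N m * f m).Finite :=
      fun f => (Finset.finite_toSet _).subset (fs N f)
    have s1 : ∑ᶠ m, gB (u * w) N (m - 1) * (-(u * (u * w) ^ N) * TT u w (m - 1)) =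
        ∑ᶠ m, gB (u * w) N m * (-(u * (u * w) ^ N) * TT u w m) :=
      finsum_comp_equiv (Equiv.subRight (1 : ℤ)) (f := fun m => gB (u * w) N m * (-(u * (u * w) ^ N) * TT u w m))
    have s2 : ∑ᶠ m, gB (u * w) N (m + 1) * (-(w * (u * w) ^ N) * TT u w (m + 1)) =
        ∑ᶠ m, gB (u * w) N m * (-(w * (u * w) ^ N) * TT u w m) :=
      finsum_comp_equiv (Equiv.addRight (1 : ℤ)) (f := fun m => gB (u * w) N m * (-(w * (u * w) ^ N) * TT u w m))
    have f1 : (Function.support fun m => gB (u * w) N (m - 1) * (-(u * (u * w) ^ N) * TT u w (m - 1))).Finite :=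
      (fin fun m => (-(u * (u * w) ^ N) * TT u w m)).preimage (f := fun m : ℤ => m - 1) (fun a _ b _ h => by simpa using h)
    have f2 : (Function.support fun m => gB (u * w) N (m + 1) * (-(w * (u * w) ^ N) * TT u w (m + 1))).Finite :=
      (fin fun m => (-(w * (u * w) ^ N) * TT u w m)).preimage (f := fun m : ℤ => m + 1) (fun a _ b _ h => by simpa using h)
    have key : ∀ m, gB (u * w) (N + 1) m * TT u w m = gB (u * w) N m * ((1 + (u * w) ^ (2 * N + 1)) * TT u w m)
        + gB (u * w) N (m - 1) * (-(u * (u * w) ^ N) * TT u w (m - 1))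
        + gB (u * w) N (m + 1) * (-(w * (u * w) ^ N) * TT u w (m + 1)) := by
      intro m
      have a1 : gB (u * w) N (m - 1) * (-(u * (u * w) ^ N) * TT u w (m - 1)) =
          gB (u * w) N (m - 1) * ((u * w) ^ ((N : ℤ) + 1 - m).toNat * TT u w m) := by
        by_cases hm : m ≤ N + 1
        · rw [TT_up u w N m hm]
        · rw [gB_zero _ _ _ (lt_abs.2 (Or.inl (by omega))), zero_mul, zero_mul]
      have a2 : gB (u * w) N (m + 1) * (-(w * (u * w) ^ N) * TT u w (m + 1)) =
          gB (u * w) N (m + 1) * ((u * w) ^ ((N : ℤ) + 1 + m).toNat * TT u w m) := by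
        by_cases hm : -m ≤ N + 1
        · rw [TT_dn u w N m hm]
        · rw [gB_zero _ _ _ (lt_abs.2 (Or.inr (by omega))), zero_mul, zero_mul]
      rw [a1, a2, gB]; ring
    rw [finsum_congr key, finsum_add_distrib ((fin _).union f1 |>.subset (Function.support_add _ _)) f2,
      finsum_add_distrib (fin _) f1, s1, s2, ← finsum_add_distrib (fin _) (fin _), ← finsum_add_distrib
        (((fin _).union (fin _)).subset (Function.support_add _ _)) (fin _), finsum_mul' _ _ (fin _)]
    exact finsum_congr fun m => by ring
end jtp

def TS (c : ℤ → ℤ) (e : ℤ → ℕ) : PowerSeries ℤ :=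
  PowerSeries.mk fun n => ∑ᶠ m : ℤ, if e m = n then c m else 0

theorem TS_lim (c : ℤ → ℤ) (e : ℤ → ℕ) (he : ∀ m, |m| ≤ e m + 2) :
    Lim (fun N => ∑ m ∈ Finset.Icc (-(N : ℤ)) N, C (c m) * X ^ e m) (TS c e) := by
  intro K
  refine ⟨K + 2, fun N hN => ?_⟩
  rw [X_pow_dvd_iff]
  intro n hn
  rw [map_sub, TS, coeff_mk, map_sum, finsum_eq_sum_of_support_subset (s := Finset.Icc (-(N : ℤ)) N), sub_eq_zero]
  · refine Finset.sum_congr rfl fun m _ => ?_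
    rw [coeff_C_mul, coeff_X_pow]
    simp [eq_comm]
  · intro m hm
    simp only [Function.mem_support, ne_eq, ite_eq_right_iff, Classical.not_imp] at hm
    have := he m
    rw [abs_le] at this
    simp only [Finset.coe_Icc, Set.mem_Icc]
    omega

theorem poch_dvd (s M : ℕ) (hs : 1 ≤ s) : (X : PowerSeries ℤ) ^ M ∣ poch ((X : PowerSeries ℤ) ^ s) M - J s := by
  have := PP_dvd s s hs M
  rw [← J_eq] at this
  convert this using 2
  refine Finset.prod_congr rfl fun k _ => ?_
  rw [← pow_mul]; congr 2; ring

theorem gB_lim (s : ℕ) (hs : 1 ≤ s) (N : ℕ) (m : ℤ) (hm : |m| ≤ N) :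
    (X : PowerSeries ℤ) ^ ((N : ℤ) - |m|).toNat ∣ J s * gB ((X : PowerSeries ℤ) ^ s) N m - 1 := by
  have key : ∀ i j M : ℕ, i + j = 2 * N → M ≤ i → M ≤ j → (X : PowerSeries ℤ) ^ M ∣
      J s * gB ((X : PowerSeries ℤ) ^ s) N ((i : ℤ) - N) - 1 := by
    intro i j M h hi hj
    have h1 := dvd_trans (pow_dvd_pow _ hi) (poch_dvd s i hs)
    have h2 := dvd_trans (pow_dvd_pow _ hj) (poch_dvd s j hs)
    have h3 := dvd_trans (pow_dvd_pow _ (show M ≤ 2 * N by omega)) (poch_dvd s (2 * N) hs)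
    have h4 := gB_poch ((X : PowerSeries ℤ) ^ s) N i j h
    rw [← (J_unit s hs).dvd_mul_left]
    set g := gB ((X : PowerSeries ℤ) ^ s) N ((i : ℤ) - N)
    set a := poch ((X : PowerSeries ℤ) ^ s) i
    set b := poch ((X : PowerSeries ℤ) ^ s) j
    have : J s * (J s * g - 1) = (poch ((X : PowerSeries ℤ) ^ s) (2 * N) - J s) - (a - J s) * (b * g) - (b - J s) * (J s * g) := by
      linear_combination h4
    rw [this]
    exact dvd_sub (dvd_sub h3 (Dvd.dvd.mul_right h1 _)) (Dvd.dvd.mul_right h2 _)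
  have := key (m + N).toNat ((N : ℤ) - m).toNat ((N : ℤ) - |m|).toNat
    (by rw [abs_le] at hm; omega) (by have := neg_abs_le m; omega) (by have := le_abs_self m; omega)
  rwa [show (((m + N).toNat : ℤ) - N) = m by rw [abs_le] at hm; omega] at this

theorem theta_lim (c : ℤ → ℤ) (e : ℤ → ℕ) (he : ∀ m, |m| ≤ e m + 2) (s : ℕ) (hs : 1 ≤ s) :
    Lim (fun N => J s * ∑ m ∈ Finset.Icc (-(N : ℤ)) N, gB ((X : PowerSeries ℤ) ^ s) N m * (C (c m) * X ^ e m)) (TS c e) := by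
  refine (TS_lim c e he).of_sub fun K => ⟨K + 2, fun N hN => ?_⟩
  rw [Finset.mul_sum, ← Finset.sum_sub_distrib]
  refine Finset.dvd_sum fun m hm => ?_
  have hm' : |m| ≤ N := by rw [abs_le]; simpa using hm
  rw [show J s * (gB ((X : PowerSeries ℤ) ^ s) N m * (C (c m) * X ^ e m)) - C (c m) * X ^ e m =
    C (c m) * ((J s * gB ((X : PowerSeries ℤ) ^ s) N m - 1) * X ^ e m) by ring]
  refine Dvd.dvd.mul_left ?_ _
  have := mul_dvd_mul (gB_lim s hs N m hm') (dvd_refl ((X : PowerSeries ℤ) ^ e m))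
  rw [← pow_add] at this
  refine dvd_trans (pow_dvd_pow _ ?_) this
  have := he m
  omega

theorem JTP (a b s : ℕ) (h : s = a + b) (ha : 1 ≤ a) (hb : 1 ≤ b) (e : ℤ → ℕ)
    (he : ∀ m, (2 * e m : ℤ) = a * (m * (m + 1)) + b * (m * (m - 1))) :
    J s * (PP a s * PP b s) = TS (fun m => (-1) ^ m.natAbs) e := by
  have he' : ∀ m, |m| ≤ e m + 2 := by
    intro m
    have h1 := he m
    have h2 : 0 ≤ m * (m + 1) := by
      rcases le_or_gt 0 m with h | h <;> nlinarith
    have h3 : 0 ≤ m * (m - 1) := by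
      rcases le_or_gt m 0 with h | h <;> nlinarith
    have : m * (m + 1) + m * (m - 1) ≤ 2 * e m := by
      rw [h1]
      have : (1 : ℤ) ≤ a := by exact_mod_cast ha
      have : (1 : ℤ) ≤ b := by exact_mod_cast hb
      nlinarith
    rw [abs_le]; constructor <;> nlinarith [sq_nonneg (m - 1), sq_nonneg (m + 1)]
  have hs : 1 ≤ s := by omega
  have h1 := (Lim.const (J s)).mul ((PP_lim a s hs).mul (PP_lim b s hs))
  refine h1.unique ?_
  convert theta_lim (fun m => (-1) ^ m.natAbs) e he' s hs using 2 with N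
  congr 1
  have := finJTP ((X : PowerSeries ℤ) ^ a) (X ^ b) N
  rw [← pow_add, ← h] at this
  rw [← Finset.prod_mul_distrib]
  convert this using 1
  · refine Finset.prod_congr rfl fun k _ => ?_
    rw [← pow_mul, ← pow_add, ← pow_add]
  · refine Finset.sum_congr rfl fun m _ => ?_
    congr 1
    rw [TT, map_pow, map_neg, map_one, ← pow_mul, ← pow_mul, ← pow_add]
    congr 2
    obtain ⟨p, hp⟩ := (Int.even_mul_succ_self m).two_dvd
    obtain ⟨p1, hp1⟩ := (Int.even_mul_pred_self m).two_dvd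
    have q0 : 0 ≤ p := by nlinarith [sq_nonneg (2 * m + 1)]
    have q1 : 0 ≤ p1 := by nlinarith [sq_nonneg (2 * m - 1)]
    have := he m
    rw [hp, hp1] at this ⊢
    simp only [ne_eq, OfNat.ofNat_ne_zero, not_false_eq_true, Int.mul_ediv_cancel_left]
    zify
    rw [Int.toNat_of_nonneg q0, Int.toNat_of_nonneg q1]
    linarith
end QS

namespace QS
open PowerSeries

theorem gB_map {R S : Type*} [CommRing R] [CommRing S] (φ : R →+* S) (q : R) (N : ℕ) (m : ℤ) :
    gB (φ q) N m = φ (gB q N m) := by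
  induction N generalizing m with
  | zero => simp only [gB]; split_ifs <;> simp
  | succ N ih => simp only [gB, ih, map_add, map_mul, map_pow, map_one]

def e3 (m : ℤ) : ℕ := (m * (m - 1) / 2).toNat
def e1 (m : ℤ) : ℕ := (m * (3 * m + 1) / 2).toNat
def e2 (m : ℤ) : ℕ := (m * m).toNat

theorem e3_eq (m : ℤ) : (2 * e3 m : ℤ) = m * (m - 1) := by
  obtain ⟨p1, hp1⟩ := (Int.even_mul_pred_self m).two_dvd
  have q1 : 0 ≤ p1 := by nlinarith [sq_nonneg (2 * m - 1)]
  rw [e3, hp1]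
  simp [q1]

theorem e2_eq (m : ℤ) : (e2 m : ℤ) = m * m := Int.toNat_of_nonneg (mul_self_nonneg m)

theorem e1_eq (m : ℤ) : (2 * e1 m : ℤ) = m * (3 * m + 1) := by
  obtain ⟨p, hp⟩ := (Int.even_mul_succ_self m).two_dvd
  have h : m * (3 * m + 1) = 2 * (m * m + p) := by linarith
  have q1 : 0 ≤ m * m + p := by nlinarith [sq_nonneg (2 * m + 1)]
  rw [e1, h]
  simp [q1]

theorem e1_le (m : ℤ) : |m| ≤ e1 m + 2 := by
  have := e1_eq m
  rw [abs_le]; constructor <;> nlinarith [sq_nonneg (m - 1), sq_nonneg (m + 1)]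
theorem e2_le (m : ℤ) : |m| ≤ e2 m + 2 := by
  have := e2_eq m
  rw [abs_le]; constructor <;> nlinarith [sq_nonneg (m - 1), sq_nonneg (m + 1)]
theorem e3_le (m : ℤ) : |m| ≤ e3 m + 2 := by
  have := e3_eq m
  rw [abs_le]; constructor <;> nlinarith [sq_nonneg (m - 1), sq_nonneg (m + 1), sq_nonneg (m-2)]

theorem cube0 (N : ℕ) : -(poch (X : PowerSeries ℤ) N * poch X (N + 1)) =
    ∑ m ∈ Finset.Icc (-((N + 1 : ℕ) : ℤ)) (N + 1 : ℕ), gB (X : PowerSeries ℤ) (N + 1) m *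
      (C ((-1) ^ m.natAbs * m) * X ^ e3 m) := by
  let E := PowerSeries ℤ
  let u : TrivSqZeroExt E E := 1 + TrivSqZeroExt.inr 1
  let w : TrivSqZeroExt E E := TrivSqZeroExt.inl X * (1 - TrivSqZeroExt.inr 1)
  have huw : u * w = TrivSqZeroExt.inlHom E E X := by
    refine TrivSqZeroExt.ext ?_ ?_
    · simp [u, w]
    · simp [u, w]; ring
  have hfp : ∀ (s : Finset ℕ) (f : ℕ → TrivSqZeroExt E E), TrivSqZeroExt.fst (∏ i ∈ s, f i) = ∏ i ∈ s, (f i).fst := by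
    intro s f
    induction s using Finset.induction_on with
    | empty => simp
    | insert i s hi ih => rw [Finset.prod_insert hi, Finset.prod_insert hi, TrivSqZeroExt.fst_mul, ih]
  have h := finJTP u w (N + 1)
  rw [huw] at h
  have h2 := congrArg TrivSqZeroExt.snd h
  rw [Finset.prod_mul_distrib, Finset.prod_range_succ', mul_comm (∏ k ∈ Finset.range N, _), mul_assoc] at h2
  have f1 : (1 - u * (TrivSqZeroExt.inlHom E E) X ^ 0) = - TrivSqZeroExt.inr 1 := by simp [u]
  rw [f1, TrivSqZeroExt.snd_mul] at h2
  simp only [TrivSqZeroExt.fst_neg, TrivSqZeroExt.fst_inr, neg_zero, zero_smul, zero_add,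
    TrivSqZeroExt.snd_neg, TrivSqZeroExt.snd_inr, gB_map, TrivSqZeroExt.fst_mul,
    MulOpposite.smul_eq_mul_unop, MulOpposite.unop_op] at h2
  have f2 : TrivSqZeroExt.fst (∏ k ∈ Finset.range N, (1 - u * (TrivSqZeroExt.inlHom E E) X ^ (k + 1))) = poch X N := by
    rw [poch, hfp]
    refine Finset.prod_congr rfl fun k _ => ?_
    simp [u]
  have f3 : TrivSqZeroExt.fst (∏ k ∈ Finset.range (N + 1), (1 - w * (TrivSqZeroExt.inlHom E E) X ^ k)) = poch X (N + 1) := by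
    rw [poch, hfp]
    refine Finset.prod_congr rfl fun k _ => ?_
    simp [w, pow_succ']
  rw [f2, f3, neg_one_mul] at h2
  rw [h2]
  have hs : ∀ (s : Finset ℤ) (f : ℤ → TrivSqZeroExt E E), TrivSqZeroExt.snd (∑ i ∈ s, f i) = ∑ i ∈ s, (f i).snd := by
    intro s f
    exact map_sum (TrivSqZeroExt.sndHom E E) f s
  rw [hs]
  refine Finset.sum_congr rfl fun m _ => ?_
  rw [TrivSqZeroExt.snd_mul, TrivSqZeroExt.inlHom_apply]
  simp only [TrivSqZeroExt.fst_inl, TrivSqZeroExt.snd_inl, MulOpposite.op_zero, zero_smul, add_zero, smul_eq_mul]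
  congr 1
  unfold TT
  obtain ⟨p, hp⟩ := (Int.even_mul_succ_self m).two_dvd
  obtain ⟨p1, hp1⟩ := (Int.even_mul_pred_self m).two_dvd
  have q0 : 0 ≤ p := by nlinarith [sq_nonneg (2 * m + 1)]
  have q1 : 0 ≤ p1 := by nlinarith [sq_nonneg (2 * m - 1)]
  rw [e3, hp, hp1]
  simp only [ne_eq, OfNat.ofNat_ne_zero, not_false_eq_true, Int.mul_ediv_cancel_left]
  obtain ⟨a, rfl⟩ := Int.eq_ofNat_of_zero_le q0
  obtain ⟨b, rfl⟩ := Int.eq_ofNat_of_zero_le q1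
  have hab : m = (a : ℤ) - b := by linarith
  simp only [Int.toNat_natCast]
  have s1 : ((-1 : TrivSqZeroExt E E) ^ m.natAbs) = TrivSqZeroExt.inlHom E E ((-1) ^ m.natAbs) := by rw [map_pow, map_neg, map_one]
  have fu : u.fst = 1 := by simp [u]
  have su : u.snd = 1 := by simp [u]
  have fw : w.fst = X := by simp [w]
  have sw : w.snd = -X := by simp [w]; ring
  rw [s1, TrivSqZeroExt.snd_mul, TrivSqZeroExt.snd_mul, TrivSqZeroExt.inlHom_apply,
    TrivSqZeroExt.snd_pow, TrivSqZeroExt.snd_pow, TrivSqZeroExt.fst_pow, TrivSqZeroExt.fst_pow, fu, su, fw, sw]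
  simp only [TrivSqZeroExt.fst_inl, TrivSqZeroExt.snd_inl, MulOpposite.op_zero, zero_smul, add_zero, smul_eq_mul,
    one_pow, one_mul, nsmul_eq_mul, mul_one, MulOpposite.smul_eq_mul_unop, MulOpposite.unop_op]
  have hb : (b : PowerSeries ℤ) * ((X : PowerSeries ℤ) ^ b.pred * -X) = - ((b : PowerSeries ℤ) * (X : PowerSeries ℤ) ^ b) := by
    rcases b with _ | b
    · simp
    · simp only [Nat.pred_succ, pow_succ]; ring
  have hm : (m : PowerSeries ℤ) = a - b := by rw [hab]; push_cast; ring
  have hC : (C m : PowerSeries ℤ) = (m : PowerSeries ℤ) := by simp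
  rw [hb, map_mul, map_pow, map_neg, map_one, hC, hm]
  ring

theorem cube : J 1 ^ 3 = - TS (fun m => (-1) ^ m.natAbs * m) e3 := by
  have h0 : Lim (fun N => poch (X : PowerSeries ℤ) N) (J 1) := by
    intro K
    refine ⟨K, fun N hN => dvd_trans (pow_dvd_pow _ hN) ?_⟩
    simpa using poch_dvd 1 N le_rfl
  have h1 := theta_lim (fun m => (-1) ^ m.natAbs * m) e3 e3_le 1 le_rfl
  have h2 := h1.sub_seq (fun N => N + 1) (fun n => Nat.le_succ n)
  have h3 := ((Lim.const (J 1)).mul ((Lim.const (-1)).mul (h0.mul (h0.sub_seq (fun N => N + 1) (fun n => Nat.le_succ n)))))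
  have h4 : Lim (fun N => J 1 * (-1 * (poch (X : PowerSeries ℤ) N * poch X (N + 1)))) (TS (fun m => (-1) ^ m.natAbs * m) e3) := by
    convert h2 using 2 with N
    congr 1
    rw [neg_one_mul, cube0]; simp
  have := h3.unique h4
  linear_combination -this

theorem TS_fin (c : ℤ → ℤ) (e : ℤ → ℕ) (he : ∀ m, |m| ≤ e m + 2) (n : ℕ) :
    (Function.support fun m => if e m = n then c m else 0).Finite := by
  refine (Set.finite_Icc (-(n : ℤ) - 2) (n + 2)).subset fun m hm => ?_
  simp only [Function.mem_support, ne_eq, ite_eq_right_iff, Classical.not_imp] at hm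
  have := he m
  rw [abs_le] at this
  simp only [Set.mem_Icc]
  omega

theorem TS_add (c c' : ℤ → ℤ) (e : ℤ → ℕ) (he : ∀ m, |m| ≤ e m + 2) :
    TS c e + TS c' e = TS (fun m => c m + c' m) e := by
  ext n
  simp only [map_add, TS, coeff_mk]
  rw [← finsum_add_distrib (TS_fin c e he n) (TS_fin c' e he n)]
  exact finsum_congr fun m => by split_ifs <;> simp

theorem TS_map (c c' : ℤ → ℤ) (e e' : ℤ → ℕ) (n : ℕ) (σ : ℤ → ℤ) (hσ : Function.Injective σ) (k : ℤ)
    (hc : ∀ m, c (σ m) = k * c' m) (he : ∀ m, e (σ m) = e' m)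
    (h : ∀ m, e m = n → c m ≠ 0 → m ∈ Set.range σ) :
    coeff n (TS c e) = k * coeff n (TS c' e') := by
  simp only [TS, coeff_mk]
  have : ∑ᶠ m, (if e m = n then c m else 0) = ∑ᶠ m ∈ Set.range σ, (if e m = n then c m else 0) := by
    rw [← finsum_mem_univ]
    apply finsum_mem_inter_support_eq
    · ext m
      simp only [Set.mem_inter_iff, Function.mem_support, ne_eq, ite_eq_right_iff, Classical.not_imp, Set.mem_univ, true_and]
      exact ⟨fun h' => ⟨h m h'.1 h'.2, h'⟩, fun h' => h'.2⟩
  rw [this, finsum_mem_range hσ]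
  by_cases hk : k = 0
  · subst hk
    rw [zero_mul]
    rw [finsum_congr (g := fun _ => 0), finsum_zero]
    intro m; rw [hc]; simp
  rw [← smul_eq_mul (a := k), smul_finsum]
  refine finsum_congr fun m => ?_
  rw [hc, he]; split_ifs <;> simp

theorem TS_zero (c : ℤ → ℤ) (e : ℤ → ℕ) (n : ℕ) (h : ∀ m, e m ≠ n) : coeff n (TS c e) = 0 := by
  simp only [TS, coeff_mk]
  rw [finsum_congr (g := fun _ => 0), finsum_zero]
  intro m; rw [if_neg (h m)]

theorem TS_expand (k : ℕ) (hk : k ≠ 0) (c : ℤ → ℤ) (e : ℤ → ℕ) :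
    expand k hk (TS c e) = TS c (fun m => k * e m) := by
  ext n
  by_cases h : k ∣ n
  · obtain ⟨n, rfl⟩ := h
    rw [coeff_expand_mul]
    simp only [TS, coeff_mk]
    refine finsum_congr fun m => ?_
    simp [hk]
  · rw [coeff_expand_of_not_dvd _ _ _ h, TS_zero]
    rintro m rfl
    exact h (Dvd.intro _ rfl)

theorem TS_shift (r : ℕ) (c : ℤ → ℤ) (e : ℤ → ℕ) :
    X ^ r * (TS c e) = TS c (fun m => e m + r) := by
  ext n
  rw [coeff_X_pow_mul']
  split_ifs with h
  · simp only [TS, coeff_mk]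
    refine finsum_congr fun m => ?_
    congr 1
    rw [eq_iff_iff]; omega
  · rw [TS_zero]; intro m; omega

theorem mod7 (m : ℤ) : ∃ k r : ℤ, 0 ≤ r ∧ r < 7 ∧ m = 7 * k + r :=
  ⟨m / 7, m % 7, by omega, by omega, by omega⟩

theorem J1_TS : J 1 = TS (fun m => (-1) ^ m.natAbs) e1 := by
  rw [← JTP 2 1 3 rfl (by norm_num) le_rfl e1 (fun m => by rw [e1_eq]; push_cast; ring)]
  rw [J_eq 1, PP_split 1 1 3 le_rfl (by norm_num), J_eq]
  simp only [Finset.prod_range_succ, Finset.prod_range_zero]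
  norm_num; ring

def phi : PowerSeries ℤ := TS (fun m => (-1) ^ m.natAbs) e2

theorem phi_eq : J 2 * phi = J 1 ^ 2 := by
  have h : PP 1 1 = PP 1 2 * PP 2 2 := by
    rw [PP_split 1 1 2 le_rfl (by norm_num)]
    simp [Finset.prod_range_succ]
  rw [phi, ← JTP 1 1 2 rfl le_rfl le_rfl e2 (fun m => by rw [e2_eq]; push_cast; ring), J_eq 1, h, J_eq]
  ring

theorem J1_zero (n : ℕ) (h : n % 7 = 3 ∨ n % 7 = 4 ∨ n % 7 = 6) : coeff n (J 1) = 0 := by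
  rw [J1_TS]
  apply TS_zero
  rintro m rfl
  have := e1_eq m
  obtain ⟨k, r, h0, h1, rfl⟩ := mod7 m
  interval_cases r <;> ring_nf at this h <;> omega

theorem neg_pow_par (a b : ℤ) (h : (a - b) % 2 = 0) : (-1 : ℤ) ^ a.natAbs = (-1) ^ b.natAbs := by
  rw [neg_one_pow_eq_pow_mod_two, neg_one_pow_eq_pow_mod_two (n := b.natAbs)]
  congr 1; omega
theorem neg_pow_par1 (a b : ℤ) (h : (a - b) % 2 = 1) : (-1 : ℤ) ^ a.natAbs = -(-1) ^ b.natAbs := by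
  rw [neg_one_pow_eq_pow_mod_two, neg_one_pow_eq_pow_mod_two (n := b.natAbs)]
  rcases Nat.mod_two_eq_zero_or_one b.natAbs with h | h
  · rw [h, show a.natAbs % 2 = 1 by omega]; simp
  · rw [h, show a.natAbs % 2 = 0 by omega]; simp

theorem J1_two (n : ℕ) (h : n % 7 = 2) : coeff n (J 1) = - coeff n (X ^ 2 * J 49) := by
  have : J 49 = expand 49 (by norm_num) (J 1) := by rw [J_expand _ _ _ le_rfl]
  rw [this, J1_TS, TS_expand, TS_shift, ← neg_one_mul (coeff n _)]
  refine TS_map _ _ _ _ n (fun m => 7 * m + 1) (fun a b h => by simpa using h) _ (fun m => ?_) (fun m => ?_) ?_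
  · rw [neg_one_mul]; apply neg_pow_par1; omega
  · have h1 := e1_eq m
    have h2 := e1_eq (7 * m + 1)
    ring_nf at h1 h2 ⊢
    omega
  · rintro m rfl _
    have := e1_eq m
    obtain ⟨k, r, h0, h1, rfl⟩ := mod7 m
    interval_cases r <;> [ring_nf at this h; exact ⟨k, rfl⟩; ring_nf at this h; ring_nf at this h; ring_nf at this h; ring_nf at this h; ring_nf at this h] <;> omega

theorem cube2 : 2 * J 1 ^ 3 = TS (fun m => (-1) ^ m.natAbs * (1 - 2 * m)) e3 := by
  have h1 : TS (fun m => (-1) ^ m.natAbs * m) e3 = - TS (fun m => (-1) ^ m.natAbs * (1 - m)) e3 := by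
    ext n
    rw [map_neg, ← neg_one_mul (coeff n _)]
    refine TS_map _ _ _ _ n (fun m => 1 - m) (fun a b h => by simpa using h) _ (fun m => ?_) (fun m => ?_) ?_
    · rw [neg_pow_par1 (1 - m) m (by omega)]; ring
    · have h1 := e3_eq m
      have h2 := e3_eq (1 - m)
      ring_nf at h1 h2; omega
    · intro m _ _; exact ⟨1 - m, by ring⟩
  have h2 : TS (fun m => (-1) ^ m.natAbs * m) e3 = - TS (fun m => - ((-1) ^ m.natAbs * m)) e3 := by
    have := TS_add (fun m => (-1) ^ m.natAbs * m) (fun m => - ((-1) ^ m.natAbs * m)) e3 e3_le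
    rw [eq_neg_iff_add_eq_zero, this]
    ext n; simp [TS]
  have h3 := TS_add (fun m => (-1) ^ m.natAbs * (1 - m)) (fun m => - ((-1) ^ m.natAbs * m)) e3 e3_le
  have h4 := cube
  have h5 : (fun m : ℤ => (-1) ^ m.natAbs * (1 - m) + -((-1) ^ m.natAbs * m)) =
    fun m : ℤ => (-1) ^ m.natAbs * (1 - 2 * m) := by ext m; ring
  rw [h5] at h3
  linear_combination 2 * h4 - h1 - h2 + h3

theorem J3_zero (n : ℕ) (h : n % 7 = 2 ∨ n % 7 = 4 ∨ n % 7 = 5) : coeff n (J 1 ^ 3) = 0 := by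
  have : coeff n (2 * J 1 ^ 3) = 0 := by
    rw [cube2]
    apply TS_zero
    rintro m rfl
    have := e3_eq m
    obtain ⟨k, r, h0, h1, rfl⟩ := mod7 m
    interval_cases r <;> ring_nf at this h <;> omega
  rw [two_mul, map_add] at this
  omega

theorem J3_six (n : ℕ) (h : n % 7 = 6) : coeff n (J 1 ^ 3) = -7 * coeff n (X ^ 6 * J 49 ^ 3) := by
  have h49 : 2 * (X ^ 6 * J 49 ^ 3) = X ^ 6 * expand 49 (by norm_num) (2 * J 1 ^ 3) := by
    rw [map_mul, map_pow, J_expand _ _ _ le_rfl, map_ofNat]; ring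
  have : coeff n (2 * J 1 ^ 3) = -7 * coeff n (2 * (X ^ 6 * J 49 ^ 3)) := by
    rw [h49, cube2, TS_expand, TS_shift]
    refine TS_map _ _ _ _ n (fun m => 7 * m - 3) (fun a b h => by simpa using h) _ (fun m => ?_) (fun m => ?_) ?_
    · rw [neg_pow_par1 (7 * m - 3) m (by omega)]; ring
    · have h1 := e3_eq m
      have h2 := e3_eq (7 * m - 3)
      ring_nf at h1 h2 ⊢
      omega
    · rintro m rfl _
      have := e3_eq m
      obtain ⟨k, r, h0, h1, rfl⟩ := mod7 m
      interval_cases r <;> first | exact ⟨k + 1, by ring1⟩ | (ring_nf at this h; omega)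
  rw [two_mul, two_mul, map_add, map_add] at this
  omega

theorem phi_zero (n : ℕ) (h : n % 7 = 3 ∨ n % 7 = 5 ∨ n % 7 = 6) : coeff n phi = 0 := by
  apply TS_zero
  rintro m rfl
  have := e2_eq m
  obtain ⟨k, r, h0, h1, rfl⟩ := mod7 m
  interval_cases r <;> ring_nf at this h <;> omega

theorem phi_0 (n : ℕ) (h : n % 7 = 0) : coeff n phi = coeff n (expand 49 (by norm_num) phi) := by
  rw [phi, TS_expand, ← one_mul ((coeff n) (TS _ fun m => 49 * e2 m))]
  refine TS_map _ _ _ _ n (fun m => 7 * m) (fun a b h => by simpa using h) _ (fun m => ?_) (fun m => ?_) ?_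
  · rw [one_mul]; apply neg_pow_par; omega
  · have h1 := e2_eq m
    have h2 := e2_eq (7 * m)
    ring_nf at h1 h2 ⊢
    omega
  · rintro m rfl _
    have := e2_eq m
    obtain ⟨k, r, h0, h1, rfl⟩ := mod7 m
    interval_cases r
    · exact ⟨k, by ring⟩
    all_goals
      ring_nf at this h; omega

def tht (k : ℕ) : PowerSeries ℤ := J 98 * (PP (49 + 14 * k) 98 * PP (49 - 14 * k) 98)

theorem phi_k (k : ℕ) (hk : k = 1 ∨ k = 2 ∨ k = 3) (n : ℕ) (h : n % 7 = k * k % 7) :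
    coeff n phi = 2 * (-1) ^ k * coeff n (X ^ (k * k) * tht k) := by
  let eh : ℤ → ℕ := fun m => (49 * m * m + 14 * k * m).toNat
  have hpos : ∀ m : ℤ, 0 ≤ 49 * m * m + 14 * k * m := by
    intro m
    have : (k : ℤ) ≤ 3 := by omega
    rcases le_or_gt 0 m with h | h
    · positivity
    · nlinarith [mul_nonneg (neg_nonneg.2 h.le) (sub_nonneg.2 this)]
  have heh : ∀ m, (eh m : ℤ) = 49 * m * m + 14 * k * m := fun m => Int.toNat_of_nonneg (hpos m)
  have h1 : tht k = TS (fun m => (-1) ^ m.natAbs) eh := by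
    refine JTP _ _ 98 (by omega) (by omega) (by omega) _ fun m => ?_
    rw [heh, Nat.cast_sub (by omega)]; push_cast; ring
  have h2 : coeff n phi = coeff n (TS (fun m => if m % 7 = k then (-1) ^ m.natAbs else 0) e2 +
      TS (fun m => if (-m) % 7 = k then (-1) ^ m.natAbs else 0) e2) := by
    rw [TS_add _ _ _ e2_le, phi]
    simp only [TS, coeff_mk]
    refine finsum_congr fun m => ?_
    split_ifs with h3 h4 h5 h5
    · omega
    · simp
    · simp
    · exfalso
      have := e2_eq m
      obtain ⟨k, r, h0, h1, rfl⟩ := mod7 m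
      subst h3
      rcases hk with rfl | rfl | rfl <;> interval_cases r <;> ring_nf at this h <;> omega
    · rfl
  have h3 : coeff n (TS (fun m => if (-m) % 7 = k then (-1) ^ m.natAbs else 0) e2) =
      1 * coeff n (TS (fun m => if m % 7 = k then (-1) ^ m.natAbs else 0) e2) := by
    refine TS_map _ _ _ _ n (fun m => -m) (fun a b h => by simpa using h) _ (fun m => ?_) (fun m => ?_) ?_
    · simp
    · have h1 := e2_eq m
      have h2 := e2_eq (- m)
      ring_nf at h1 h2 ⊢
      omega
    · intro m _ _; exact ⟨-m, by ring⟩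
  have h4 : coeff n (TS (fun m => if m % 7 = k then (-1) ^ m.natAbs else 0) e2) =
      (-1) ^ k * coeff n (X ^ (k * k) * tht k) := by
    rw [h1, TS_shift]
    refine TS_map _ _ _ _ n (fun m => 7 * m + k) (fun a b h => by simpa using h) _ (fun m => ?_) (fun m => ?_) ?_
    · rw [if_pos (by omega)]
      rcases hk with rfl | rfl | rfl
      · rw [neg_pow_par1 _ m (by omega)]; simp
      · rw [neg_pow_par _ m (by omega)]; simp
      · rw [neg_pow_par1 _ m (by omega)]; norm_num
    · have h1 := heh m
      have h2 := e2_eq (7 * m + k)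
      zify
      rw [h1, h2]; ring
    · intro m _ hm
      have : m % 7 = k := by
        by_contra hc
        exact hm (if_neg hc)
      exact ⟨m / 7, by simp only; omega⟩
  rw [h2, map_add, h3, h4]; ring

theorem tht_prod : tht 1 * tht 2 * tht 3 * (J 14 * J 49) = J 98 ^ 4 * J 7 := by
  have h7 := PP_split 7 7 14 (by norm_num) (by norm_num)
  have h14 := PP_split 14 14 7 (by norm_num) (by norm_num)
  have h49 := PP_split 49 49 2 (by norm_num) (by norm_num)
  simp only [Finset.prod_range_succ, Finset.prod_range_zero] at h7 h14 h49
  norm_num at h7 h14 h49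
  simp only [tht, J_eq, h7, h14, h49]
  norm_num
  ring
end QS

namespace QS
open PowerSeries

abbrev FF := LaurentSeries ℤ
abbrev io : PowerSeries ℤ →+* FF := HahnSeries.ofPowerSeries ℤ ℤ

theorem io_nat (f : PowerSeries ℤ) (n : ℕ) : (io f).coeff n = coeff n f :=
  HahnSeries.ofPowerSeries_apply_coeff f n

theorem io_neg (f : PowerSeries ℤ) (n : ℤ) (h : n < 0) : (io f).coeff n = 0 := by
  rw [HahnSeries.ofPowerSeries_apply]
  apply HahnSeries.embDomain_notin_range
  rintro ⟨k, rfl⟩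
  simp at h
  omega

theorem io_ext {f : FF} {g : PowerSeries ℤ} (h : ∀ n < 0, f.coeff n = 0) (h' : ∀ n : ℕ, f.coeff n = coeff n g) :
    f = io g := by
  ext n
  rcases lt_or_ge n 0 with hn | hn
  · rw [h n hn, io_neg g n hn]
  · obtain ⟨k, rfl⟩ := Int.eq_ofNat_of_zero_le hn
    rw [io_nat]; exact h' k

def ex (k : ℕ) (hk : 0 < k) : FF →+* FF :=
  HahnSeries.embDomainRingHom (AddMonoidHom.mulLeft (k : ℤ))
    (fun a b h => by
      have : (k : ℤ) ≠ 0 := by exact_mod_cast hk.ne'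
      exact mul_left_cancel₀ this h)
    (fun a b => by
      have : (0 : ℤ) < k := by exact_mod_cast hk
      exact mul_le_mul_iff_right₀ this)

theorem ex_coeff (k : ℕ) (hk : 0 < k) (f : FF) (n : ℤ) : (ex k hk f).coeff (k * n) = f.coeff n := by
  unfold ex HahnSeries.embDomainRingHom
  exact HahnSeries.embDomain_coeff

theorem ex_coeff_not (k : ℕ) (hk : 0 < k) (f : FF) (n : ℤ) (h : ¬ (k : ℤ) ∣ n) : (ex k hk f).coeff n = 0 := by
  unfold ex HahnSeries.embDomainRingHom
  apply HahnSeries.embDomain_notin_range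
  rintro ⟨m, rfl⟩
  exact h (Dvd.intro _ rfl)

theorem ex_inj (k : ℕ) (hk : 0 < k) : Function.Injective (ex k hk) := by
  intro f g h
  ext n
  rw [← ex_coeff k hk f, h, ex_coeff]

theorem ex_io (k : ℕ) (hk : 0 < k) (f : PowerSeries ℤ) : ex k hk (io f) = io (expand k hk.ne' f) := by
  ext n
  by_cases h : (k : ℤ) ∣ n
  · obtain ⟨m, rfl⟩ := h
    rw [ex_coeff]
    rcases lt_or_ge m 0 with hn | hn
    · rw [io_neg _ _ hn, io_neg]
      have : (0 : ℤ) < k := by exact_mod_cast hk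
      nlinarith
    · obtain ⟨j, rfl⟩ := Int.eq_ofNat_of_zero_le hn
      rw [io_nat, ← Nat.cast_mul, io_nat, coeff_expand_mul]
  · rw [ex_coeff_not _ _ _ _ h]
    rcases lt_or_ge n 0 with hn | hn
    · rw [io_neg _ _ hn]
    · obtain ⟨j, rfl⟩ := Int.eq_ofNat_of_zero_le hn
      rw [io_nat, coeff_expand_of_not_dvd]
      exact_mod_cast h

/-- monomial `q^n` -/
def qp (n : ℤ) : FF := HahnSeries.single n 1

theorem qp_mul (m n : ℤ) : qp m * qp n = qp (m + n) := by simp [qp]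
theorem qp_zero : qp 0 = 1 := rfl
theorem qp_io (n : ℕ) : io (X ^ n) = qp n := HahnSeries.ofPowerSeries_X_pow n
theorem qp_coeff (n m : ℤ) (f : FF) : (qp n * f).coeff m = f.coeff (m - n) := by
  rw [qp, HahnSeries.coeff_single_mul, one_mul]
theorem ex_qp (k : ℕ) (hk : 0 < k) (n : ℤ) : ex k hk (qp n) = qp (k * n) := by
  ext m
  by_cases h : (k : ℤ) ∣ m
  · obtain ⟨m, rfl⟩ := h
    rw [ex_coeff]
    have : (k : ℤ) ≠ 0 := by exact_mod_cast hk.ne'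
    simp [qp, HahnSeries.coeff_single, hk.ne']
  · rw [ex_coeff_not _ _ _ _ h, qp, HahnSeries.coeff_single, if_neg]
    rintro rfl; exact h (Dvd.intro _ rfl)
theorem qp_pow (m : ℤ) (n : ℕ) : qp m ^ n = qp (n * m) := by
  induction n with
  | zero => simp [qp_zero]
  | succ n ih => rw [pow_succ, ih, qp_mul]; congr 1; push_cast; ring

def Res (r : ℤ) (f : FF) : Prop := ∀ n, f.coeff n ≠ 0 → n % 7 = r % 7
def NR (r : ℤ) (f : FF) : Prop := ∀ n, n % 7 = r % 7 → f.coeff n = 0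

theorem Res.mul {r s : ℤ} {f g : FF} (hf : Res r f) (hg : Res s g) : Res (r + s) (f * g) := by
  intro n hn
  obtain ⟨a, ha, b, hb, rfl⟩ := HahnSeries.support_mul_subset (x := f) (y := g) hn
  have h1 := hf a ha
  have h2 := hg b hb
  simp only
  omega

theorem Res.cast {r s : ℤ} {f : FF} (hf : Res r f) (h : r % 7 = s % 7) : Res s f :=
  fun n hn => (hf n hn).trans h
theorem Res.neg {r : ℤ} {f : FF} (hf : Res r f) : Res r (-f) := fun n hn => hf n (by simpa using hn)
theorem Res.add {r : ℤ} {f g : FF} (hf : Res r f) (hg : Res r g) : Res r (f + g) := by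
  intro n hn
  by_contra hc
  have h1 : f.coeff n = 0 := by by_contra h; exact hc (hf n h)
  have h2 : g.coeff n = 0 := by by_contra h; exact hc (hg n h)
  simp [h1, h2] at hn
theorem Res.sub {r : ℤ} {f g : FF} (hf : Res r f) (hg : Res r g) : Res r (f - g) := by
  rw [sub_eq_add_neg]; exact hf.add hg.neg
theorem Res.nr {r s : ℤ} {f : FF} (hf : Res r f) (h : r % 7 ≠ s % 7) : NR s f := by
  intro n hn
  by_contra hc
  have := hf n hc
  omega
theorem NR.add {r : ℤ} {f g : FF} (hf : NR r f) (hg : NR r g) : NR r (f + g) := by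
  intro n hn
  rw [HahnSeries.coeff_add, hf n hn, hg n hn, add_zero]
theorem res_int (k : ℤ) : Res 0 (k : FF) := by
  intro n hn
  have : ((k : ℤ) : FF) = HahnSeries.single 0 k := (map_intCast (HahnSeries.C : ℤ →+* FF) k).symm
  rw [this, HahnSeries.coeff_single] at hn
  split_ifs at hn with h
  · rw [h]
  · simp at hn
theorem res_one : Res 0 (1 : FF) := by simpa using res_int 1
theorem Res.int_mul {r : ℤ} {f : FF} (hf : Res r f) (k : ℤ) : Res r (k * f) := ((res_int k).mul hf).cast (by omega)
theorem res_zero_of {r : ℤ} {f g : FF} (hf : Res r f) (hg : NR r g) (h : f + g = 0) : f = 0 := by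
  ext n
  rw [HahnSeries.coeff_zero]
  by_contra hc
  have h1 := hg n (hf n hc)
  have h2 := congrArg (fun x => HahnSeries.coeff x n) h
  simp only [HahnSeries.coeff_add, h1, add_zero, HahnSeries.coeff_zero] at h2
  exact hc h2
theorem res_qp (n : ℤ) : Res n (qp n) := by
  intro m hm
  rw [qp, HahnSeries.coeff_single] at hm
  split_ifs at hm with h
  · rw [h]
  · simp at hm
theorem res_ex7 (f : FF) : Res 0 (ex 7 (by norm_num) f) := by
  intro m hm
  by_contra hc
  exact hm (ex_coeff_not _ _ _ _ (by omega))
theorem Res.ex2 {r : ℤ} {f : FF} (hf : Res r f) : Res (2 * r) (ex 2 (by norm_num) f) := by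
  intro m hm
  by_cases h : ((2 : ℕ) : ℤ) ∣ m
  · obtain ⟨m, rfl⟩ := h
    rw [ex_coeff] at hm
    have := hf m hm
    omega
  · rw [ex_coeff_not _ _ _ _ h] at hm; simp at hm

def Pr (r : ℤ) (f : FF) : FF :=
  ⟨fun n => if n % 7 = r % 7 then f.coeff n else 0, f.isPWO_support.mono fun n hn => by
    simp only [Function.mem_support, ne_eq, ite_eq_right_iff, Classical.not_imp] at hn
    exact hn.2⟩
theorem Pr_coeff (r : ℤ) (f : FF) (n : ℤ) : (Pr r f).coeff n = if n % 7 = r % 7 then f.coeff n else 0 := rfl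
theorem Pr_res (r : ℤ) (f : FF) : Res r (Pr r f) := by
  intro n hn
  rw [Pr_coeff] at hn
  by_contra hc; rw [if_neg hc] at hn; simp at hn
theorem sum_Pr (f : FF) : f = Pr 0 f + Pr 1 f + Pr 2 f + Pr 3 f + Pr 4 f + Pr 5 f + Pr 6 f := by
  ext n
  simp only [HahnSeries.coeff_add, Pr_coeff]
  have h : n % 7 = 0 ∨ n % 7 = 1 ∨ n % 7 = 2 ∨ n % 7 = 3 ∨ n % 7 = 4 ∨ n % 7 = 5 ∨ n % 7 = 6 := by omega
  rcases h with h | h | h | h | h | h | h <;> simp [h]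
/-- identify a projection of a power series -/
theorem Pr_io (r : ℤ) (f g : PowerSeries ℤ) (hg : Res r (io g))
    (h : ∀ n : ℕ, (n : ℤ) % 7 = r % 7 → coeff n f = coeff n g) : Pr r (io f) = io g := by
  ext n
  rw [Pr_coeff]
  split_ifs with hn
  · rcases lt_or_ge n 0 with h0 | h0
    · rw [io_neg _ _ h0, io_neg _ _ h0]
    · obtain ⟨k, rfl⟩ := Int.eq_ofNat_of_zero_le h0
      rw [io_nat, io_nat, h k hn]
  · by_contra hc
    exact hn (hg n (Ne.symm hc))

def Lead (n : ℤ) (c : ℤ) (f : FF) : Prop := ∃ g : PowerSeries ℤ, f = qp n * io g ∧ constantCoeff g = c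
theorem Lead.mul {m n c d : ℤ} {f g : FF} (hf : Lead m c f) (hg : Lead n d g) : Lead (m + n) (c * d) (f * g) := by
  obtain ⟨a, rfl, rfl⟩ := hf
  obtain ⟨b, rfl, rfl⟩ := hg
  exact ⟨a * b, by rw [map_mul, ← qp_mul]; ring, by simp⟩
theorem Lead.coeff {n c : ℤ} {f : FF} (hf : Lead n c f) : f.coeff n = c := by
  obtain ⟨a, rfl, rfl⟩ := hf
  rw [qp_coeff, sub_self]
  have := io_nat a 0
  simpa using this
theorem Lead.coeff_lt {n c : ℤ} {f : FF} (hf : Lead n c f) (m : ℤ) (h : m < n) : f.coeff m = 0 := by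
  obtain ⟨a, rfl, rfl⟩ := hf
  rw [qp_coeff, io_neg _ _ (by omega)]
theorem lead_of {n : ℤ} {f : FF} (h : ∀ m < n, f.coeff m = 0) : Lead n (f.coeff n) f := by
  refine ⟨PowerSeries.mk fun k => f.coeff (n + k), ?_, by simp [← coeff_zero_eq_constantCoeff_apply]⟩
  ext m
  rw [qp_coeff]
  rcases lt_or_ge m n with hm | hm
  · rw [h m hm, io_neg _ _ (by omega)]
  · obtain ⟨k, hk⟩ := Int.eq_ofNat_of_zero_le (sub_nonneg.2 hm)
    rw [hk, io_nat, coeff_mk]; congr 1; omega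
theorem lead_qp (n : ℤ) : Lead n 1 (qp n) := ⟨1, by simp, by simp⟩
theorem lead_io (f : PowerSeries ℤ) (c : ℤ) (h : constantCoeff f = c) : Lead 0 c (io f) := ⟨f, by simp [qp_zero], h⟩
theorem Lead.ex {n c : ℤ} {f : FF} (hf : Lead n c f) (k : ℕ) (hk : 0 < k) : Lead (k * n) c (ex k hk f) := by
  obtain ⟨a, rfl, rfl⟩ := hf
  exact ⟨expand k hk.ne' a, by rw [map_mul, ex_qp, ex_io], by simp⟩

def jj (b : ℕ) : FF := io (J b)
def ji (b : ℕ) : FF := io (invOfUnit (J b) 1)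
theorem jj_ji (b : ℕ) (hb : 1 ≤ b) : jj b * ji b = 1 := by
  rw [jj, ji, ← map_mul, mul_invOfUnit _ _ (by simp [J_const b hb]), map_one]
theorem ex_jj (k : ℕ) (hk : 0 < k) (b : ℕ) (hb : 1 ≤ b) : ex k hk (jj b) = jj (k * b) := by
  rw [jj, ex_io, J_expand _ _ _ hb]; rfl
theorem ex_ji (k : ℕ) (hk : 0 < k) (b : ℕ) (hb : 1 ≤ b) : ex k hk (ji b) = ji (k * b) := by
  have h1 := jj_ji (k * b) (Nat.mul_pos hk hb)
  have h2 := congrArg (ex k hk) (jj_ji b hb)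
  rw [map_mul, ex_jj k hk b hb, map_one] at h2
  linear_combination ji (k * b) * h2 - ex k hk (ji b) * h1
theorem lead_jj (b : ℕ) (hb : 1 ≤ b) : Lead 0 1 (jj b) := lead_io _ _ (J_const b hb)
theorem lead_ji (b : ℕ) (hb : 1 ≤ b) : Lead 0 1 (ji b) := lead_io _ _ (by simp)
theorem res_jj (b : ℕ) (hb : 1 ≤ b) : Res 0 (jj (7 * b)) := by
  rw [← ex_jj 7 (by norm_num) b hb]; exact res_ex7 _
theorem res_ji (b : ℕ) (hb : 1 ≤ b) : Res 0 (ji (7 * b)) := by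
  rw [← ex_ji 7 (by norm_num) b hb]; exact res_ex7 _
end QS

namespace QS
open PowerSeries

theorem Res.pow {r : ℤ} {f : FF} (hf : Res r f) (n : ℕ) : Res (n * r) (f ^ n) := by
  induction n with
  | zero => simpa using res_one
  | succ n ih => rw [pow_succ]; exact (ih.mul hf).cast (by congr 1; push_cast; ring)
theorem res_nat (k : ℕ) [k.AtLeastTwo] : Res 0 (OfNat.ofNat k : FF) := by simpa using res_int (OfNat.ofNat k)
theorem res_zero (r : ℤ) : Res r (0 : FF) := by intro n hn; simp at hn
theorem Res.sq {r : ℤ} {f : FF} (hf : Res r f) : Res (2 * r) (f ^ 2) := by simpa using hf.pow 2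
theorem Res.cu {r : ℤ} {f : FF} (hf : Res r f) : Res (3 * r) (f ^ 3) := by simpa using hf.pow 3

theorem grade7 {g0 g1 g2 g3 g4 g5 g6 : FF} (h0 : Res 0 g0) (h1 : Res 1 g1) (h2 : Res 2 g2) (h3 : Res 3 g3)
    (h4 : Res 4 g4) (h5 : Res 5 g5) (h6 : Res 6 g6) (h : g0 + g1 + g2 + g3 + g4 + g5 + g6 = 0) :
    g0 = 0 ∧ g1 = 0 ∧ g2 = 0 ∧ g3 = 0 ∧ g4 = 0 ∧ g5 = 0 ∧ g6 = 0 := by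
  refine ⟨res_zero_of h0 (g := g1 + g2 + g3 + g4 + g5 + g6) ?_ (by rw [← h]; ring),
    res_zero_of h1 (g := g0 + g2 + g3 + g4 + g5 + g6) ?_ (by rw [← h]; ring),
    res_zero_of h2 (g := g0 + g1 + g3 + g4 + g5 + g6) ?_ (by rw [← h]; ring),
    res_zero_of h3 (g := g0 + g1 + g2 + g4 + g5 + g6) ?_ (by rw [← h]; ring),
    res_zero_of h4 (g := g0 + g1 + g2 + g3 + g5 + g6) ?_ (by rw [← h]; ring),
    res_zero_of h5 (g := g0 + g1 + g2 + g3 + g4 + g6) ?_ (by rw [← h]; ring),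
    res_zero_of h6 (g := g0 + g1 + g2 + g3 + g4 + g5) ?_ (by rw [← h]; ring)⟩ <;>
  refine NR.add (NR.add (NR.add (NR.add (NR.add ?_ ?_) ?_) ?_) ?_) ?_ <;>
  first
  | exact h0.nr (by norm_num)
  | exact h1.nr (by norm_num)
  | exact h2.nr (by norm_num)
  | exact h3.nr (by norm_num)
  | exact h4.nr (by norm_num)
  | exact h5.nr (by norm_num)
  | exact h6.nr (by norm_num)

abbrev V7 : FF →+* FF := ex 7 (by norm_num)
abbrev E2 : FF →+* FF := ex 2 (by norm_num)

def UA (U : FF → FF) (hU : ∀ (f : FF) (n : ℤ), (U f).coeff n = f.coeff (7 * n)) : FF →+ FF where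
  toFun := U
  map_zero' := by ext n; simp [hU]
  map_add' f g := by ext n; simp [hU]


theorem U_V (U : FF → FF) (hU : ∀ (f : FF) (n : ℤ), (U f).coeff n = f.coeff (7 * n)) (f : FF) : U (V7 f) = f := by
  ext n; rw [hU]; exact ex_coeff 7 _ f n
theorem V_U (U : FF → FF) (hU : ∀ (f : FF) (n : ℤ), (U f).coeff n = f.coeff (7 * n)) {f : FF} (hf : Res 0 f) : V7 (U f) = f := by
  ext n
  by_cases h : ((7 : ℕ) : ℤ) ∣ n
  · obtain ⟨m, rfl⟩ := h
    rw [ex_coeff, hU]; rfl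
  · rw [ex_coeff_not _ _ _ _ h]
    by_contra hc
    have := hf n (Ne.symm hc)
    omega
theorem U_res (U : FF → FF) (hU : ∀ (f : FF) (n : ℤ), (U f).coeff n = f.coeff (7 * n)) {r : ℤ} {f : FF} (hf : Res r f) (h : r % 7 ≠ 0) : U f = 0 := by
  ext n; rw [hU, HahnSeries.coeff_zero]
  exact hf.nr (s := 0) (by omega) _ (by omega)
theorem U_mul (U : FF → FF) (hU : ∀ (f : FF) (n : ℤ), (U f).coeff n = f.coeff (7 * n)) (a b : FF) : U (V7 a * b) = a * U b := by
  have key : ∀ f, UA U hU f = U f := fun _ => rfl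
  have hb := sum_Pr b
  have hp : ∀ r : ℤ, r % 7 ≠ 0 → U (Pr r b) = 0 := fun r hr => U_res U hU (Pr_res r b) hr
  have hq : ∀ r : ℤ, r % 7 ≠ 0 → U (V7 a * Pr r b) = 0 := fun r hr =>
    U_res U hU ((res_ex7 a).mul (Pr_res r b)) (by omega)
  have h0 : U (V7 a * Pr 0 b) = a * U (Pr 0 b) := by
    conv_lhs => rw [← V_U U hU (Pr_res 0 b), ← map_mul, U_V U hU]
  rw [← key, ← key] at *
  rw [hb]
  simp only [mul_add, map_add]
  simp only [key] at *
  rw [h0, hq 1 (by norm_num), hq 2 (by norm_num), hq 3 (by norm_num), hq 4 (by norm_num), hq 5 (by norm_num), hq 6 (by norm_num),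
    hp 1 (by norm_num), hp 2 (by norm_num), hp 3 (by norm_num), hp 4 (by norm_num), hp 5 (by norm_num), hp 6 (by norm_num)]
  ring

def dD : FF := qp 2 * jj 49
def dI : FF := qp (-2) * ji 49
theorem dD_dI : dD * dI = 1 := by
  have h1 := jj_ji 49 (by norm_num)
  have h2 : qp 2 * qp (-2) = 1 := by rw [qp_mul]; rfl
  unfold dD dI
  linear_combination jj 49 * ji 49 * h2 + h1
theorem res_dD : Res 2 dD := (res_qp 2).mul (res_jj 7 (by norm_num)) |>.cast (by norm_num)
theorem res_dI : Res (-2) dI := (res_qp (-2)).mul (res_ji 7 (by norm_num)) |>.cast (by norm_num)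
theorem lead_dI : Lead (-2) 1 dI := by simpa [dI] using (lead_qp (-2)).mul (lead_ji 49 (by norm_num))
theorem dD_io : dD = io (X ^ 2 * J 49) := by rw [map_mul, qp_io]; rfl

def aL : FF := dI * Pr 0 (jj 1)
def bE : FF := dI * Pr 1 (jj 1)
def gA : FF := dI * Pr 5 (jj 1)
def yY : FF := dI * jj 1

theorem res_aL : Res 5 aL := (res_dI.mul (Pr_res 0 _)).cast (by norm_num)
theorem res_bE : Res 6 bE := (res_dI.mul (Pr_res 1 _)).cast (by norm_num)
theorem res_gA : Res 3 gA := (res_dI.mul (Pr_res 5 _)).cast (by norm_num)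

theorem Pr_zero_of (r : ℤ) (f : PowerSeries ℤ) (h : ∀ n : ℕ, (n : ℤ) % 7 = r % 7 → coeff n f = 0) : Pr r (io f) = 0 := by
  have := Pr_io r f 0 (by rw [map_zero]; exact res_zero _) (by simpa using h)
  rw [this, map_zero]

theorem jj1_sum : jj 1 = Pr 0 (jj 1) + Pr 1 (jj 1) + Pr 5 (jj 1) - dD := by
  have h3 : Pr 3 (jj 1) = 0 := Pr_zero_of 3 _ fun n hn => J1_zero n (by omega)
  have h4 : Pr 4 (jj 1) = 0 := Pr_zero_of 4 _ fun n hn => J1_zero n (by omega)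
  have h6 : Pr 6 (jj 1) = 0 := Pr_zero_of 6 _ fun n hn => J1_zero n (by omega)
  have h2 : Pr 2 (jj 1) = - dD := by
    have := Pr_io 2 (J 1) (- (X ^ 2 * J 49)) (by rw [map_neg, ← dD_io]; exact res_dD.neg)
      (fun n hn => by rw [J1_two n (by omega), map_neg])
    rw [jj, this, map_neg, ← dD_io]
  conv_lhs => rw [sum_Pr (jj 1), h2, h3, h4, h6]
  ring
theorem yY_eq : yY = aL + bE + gA - 1 := by
  have := dD_dI
  unfold yY aL bE gA
  conv_lhs => rw [jj1_sum]
  linear_combination -this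

theorem jj1_cube : ∃ K1 K2 K4 : FF, Res 1 K1 ∧ Res 2 K2 ∧ Res 4 K4 ∧ yY ^ 3 = K1 + K2 + K4 - 7 := by
  have h2 : Pr 2 (io (J 1 ^ 3)) = 0 := Pr_zero_of 2 _ fun n hn => J3_zero n (by omega)
  have h4 : Pr 4 (io (J 1 ^ 3)) = 0 := Pr_zero_of 4 _ fun n hn => J3_zero n (by omega)
  have h5 : Pr 5 (io (J 1 ^ 3)) = 0 := Pr_zero_of 5 _ fun n hn => J3_zero n (by omega)
  have h6 : Pr 6 (io (J 1 ^ 3)) = - 7 * dD ^ 3 := by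
    have e : io (- 7 * (X ^ 6 * J 49 ^ 3)) = - 7 * dD ^ 3 := by
      rw [dD_io]; simp only [map_mul, map_neg, map_pow, map_ofNat]; ring
    rw [Pr_io 6 (J 1 ^ 3) (- 7 * (X ^ 6 * J 49 ^ 3)), e]
    · rw [e]
      exact ((res_nat 7).neg.mul res_dD.cu).cast (by norm_num)
    · intro n hn
      rw [J3_six n (by omega)]
      have : (-7 : PowerSeries ℤ) = C (-7 : ℤ) := by simp
      rw [this, coeff_C_mul]
  have hs := sum_Pr (io (J 1 ^ 3))
  rw [h2, h4, h5, h6] at hs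
  refine ⟨dI ^ 3 * Pr 0 (io (J 1 ^ 3)), dI ^ 3 * Pr 1 (io (J 1 ^ 3)), dI ^ 3 * Pr 3 (io (J 1 ^ 3)),
    (res_dI.cu.mul (Pr_res 0 _)).cast (by norm_num), (res_dI.cu.mul (Pr_res 1 _)).cast (by norm_num),
    (res_dI.cu.mul (Pr_res 3 _)).cast (by norm_num), ?_⟩
  have e := dD_dI
  have e3 : dD ^ 3 * dI ^ 3 = 1 := by rw [← mul_pow, e, one_pow]
  have : yY ^ 3 = dI ^ 3 * io (J 1 ^ 3) := by rw [map_pow, ← mul_pow]; rfl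
  rw [this]
  linear_combination dI ^ 3 * hs - 7 * e3

theorem cancel_nat {k : ℕ} [k.AtLeastTwo] {f : FF} (h : (OfNat.ofNat k : FF) * f = 0) : f = 0 := by
  rcases mul_eq_zero.1 h with h | h
  · exfalso
    have := congrArg (fun x => HahnSeries.coeff x 0) h
    have e : (OfNat.ofNat k : FF) = io (OfNat.ofNat k) := (map_ofNat io k).symm
    rw [e] at this
    have h3 := io_nat (OfNat.ofNat k) 0
    simp only [Nat.cast_zero] at h3
    simp only [h3] at this
    have e2 : (OfNat.ofNat k : PowerSeries ℤ) = C (OfNat.ofNat k : ℤ) := (map_ofNat (C : ℤ →+* _) k).symm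
    rw [e2, coeff_zero_C] at this
    simp at this
  · exact h

theorem abg : aL * bE * gA = -1 ∧ aL ^ 2 * gA - gA ^ 2 + bE = 0 ∧ bE ^ 2 * aL - aL ^ 2 + gA = 0 ∧
    gA ^ 2 * bE - bE ^ 2 + aL = 0 := by
  obtain ⟨K1, K2, K4, r1, r2, r4, hY⟩ := jj1_cube
  rw [yY_eq] at hY
  have ra := res_aL
  have rb := res_bE
  have rg := res_gA
  generalize aL = a at *
  generalize bE = b at *
  generalize gA = g at *
  have h := grade7 (g0 := 6 * (a * b * g + 1)) (g1 := a ^ 3 + 3 * (b ^ 2 * g) - 6 * (a * g) - K1)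
    (g2 := g ^ 3 + 3 * (a ^ 2 * b) - 6 * (b * g) - K2) (g3 := 3 * (b ^ 2 * a - a ^ 2 + g))
    (g4 := b ^ 3 + 3 * (g ^ 2 * a) - 6 * (a * b) - K4)
    (g5 := 3 * (g ^ 2 * b - b ^ 2 + a)) (g6 := 3 * (a ^ 2 * g - g ^ 2 + b))
    (((res_nat 6).mul ((((ra.mul rb).mul rg).cast (by norm_num)).add res_one)).cast (by norm_num))
    ((((ra.cu.cast (by norm_num)).add (((res_nat 3).mul (rb.sq.mul rg)).cast (by norm_num))).sub (((res_nat 6).mul (ra.mul rg)).cast (by norm_num))).sub r1)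
    ((((rg.cu.cast (by norm_num)).add (((res_nat 3).mul (ra.sq.mul rb)).cast (by norm_num))).sub (((res_nat 6).mul (rb.mul rg)).cast (by norm_num))).sub r2)
    (((res_nat 3).mul (r := 0) (s := 3) ((((rb.sq.mul ra).cast (by norm_num)).sub (ra.sq.cast (by norm_num))).add rg)).cast (by norm_num))
    ((((rb.cu.cast (by norm_num)).add (((res_nat 3).mul (rg.sq.mul ra)).cast (by norm_num))).sub (((res_nat 6).mul (ra.mul rb)).cast (by norm_num))).sub r4)
    (((res_nat 3).mul (r := 0) (s := 5) ((((rg.sq.mul rb).cast (by norm_num)).sub (rb.sq.cast (by norm_num))).add ra)).cast (by norm_num))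
    (((res_nat 3).mul (r := 0) (s := 6) ((((ra.sq.mul rg).cast (by norm_num)).sub (rg.sq.cast (by norm_num))).add rb)).cast (by norm_num))
    (by linear_combination hY)
  obtain ⟨h0, -, -, h3, -, h5, h6⟩ := h
  exact ⟨by linear_combination cancel_nat h0, cancel_nat h6, cancel_nat h3, cancel_nat h5⟩
end QS

namespace QS
open PowerSeries

theorem TS_one (c : ℤ → ℤ) (e : ℤ → ℕ) (m0 : ℤ) (h : ∀ m, e m = e m0 → m = m0) : coeff (e m0) (TS c e) = c m0 := by
  simp only [TS, coeff_mk]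
  rw [finsum_eq_single _ m0]
  · simp
  · intro m hm
    rw [if_neg]
    intro h'
    exact hm (h m h')
theorem J1_c (m0 : ℤ) : coeff (e1 m0) (J 1) = (-1) ^ m0.natAbs := by
  rw [J1_TS]
  apply TS_one
  intro m hm
  have := e1_eq m
  have h0 := e1_eq m0
  rw [hm] at this
  have h : (m - m0) * (3 * m + 3 * m0 + 1) = 0 := by linear_combination h0 - this
  rcases mul_eq_zero.1 h with h | h <;> omega
theorem J1_c0 : (jj 1).coeff 0 = 1 := by
  have h := J1_c 0
  rw [← io_nat] at h
  simpa [e1, jj] using h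
theorem J1_c1 : (jj 1).coeff 1 = -1 := by
  have h := J1_c (-1)
  rw [← io_nat] at h
  simpa [e1, jj] using h
theorem J1_c5 : (jj 1).coeff 5 = 1 := by
  have h := J1_c (-2)
  rw [← io_nat] at h
  simpa [e1, jj] using h

theorem lead_Pr (r : ℤ) (h0 : 0 ≤ r) (h1 : r < 7) (f : PowerSeries ℤ) : Lead r ((io f).coeff r) (Pr r (io f)) := by
  have h : (Pr r (io f)).coeff r = (io f).coeff r := by rw [Pr_coeff, if_pos rfl]
  rw [← h]
  apply lead_of
  intro m hm
  rw [Pr_coeff]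
  split_ifs with h'
  · exact io_neg _ _ (by omega)
  · rfl
theorem lead_aL : Lead (-2) 1 aL := by
  have := lead_dI.mul (lead_Pr 0 (by norm_num) (by norm_num) (J 1))
  have e := J1_c0
  rw [jj] at e
  rw [e] at this
  exact this
theorem lead_bE : Lead (-1) (-1) bE := by
  have := lead_dI.mul (lead_Pr 1 (by norm_num) (by norm_num) (J 1))
  have e := J1_c1
  rw [jj] at e
  rw [e] at this
  exact this
theorem lead_gA : Lead 3 1 gA := by
  have := lead_dI.mul (lead_Pr 5 (by norm_num) (by norm_num) (J 1))
  have e := J1_c5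
  rw [jj] at e
  rw [e] at this
  exact this

theorem phi_eq49 : ex 49 (by norm_num) (io phi) * jj 98 = jj 49 ^ 2 := by
  have h := congrArg (fun x => ex 49 (by norm_num) (io x)) phi_eq
  simp only [map_mul, map_pow] at h
  have e1 : ex 49 (by norm_num) (io (J 1)) = jj 49 := ex_jj 49 (by norm_num) 1 le_rfl
  have e2 : ex 49 (by norm_num) (io (J 2)) = jj 98 := ex_jj 49 (by norm_num) 2 (by norm_num)
  rw [e1, e2] at h
  rw [← h, mul_comm]

def pI : FF := jj 98 * ji 49 ^ 2
def a1 : FF := pI * Pr 1 (io phi)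
def a2 : FF := pI * Pr 2 (io phi)
def a4 : FF := pI * Pr 4 (io phi)
theorem res_pI : Res 0 pI := ((res_jj 14 (by norm_num)).mul (res_ji 7 (by norm_num)).sq).cast (by norm_num)
theorem res_a1 : Res 1 a1 := (res_pI.mul (Pr_res 1 _)).cast (by norm_num)
theorem res_a2 : Res 2 a2 := (res_pI.mul (Pr_res 2 _)).cast (by norm_num)
theorem res_a4 : Res 4 a4 := (res_pI.mul (Pr_res 4 _)).cast (by norm_num)
theorem res_ex49 (f : PowerSeries ℤ) : Res 0 (io (expand 49 (by norm_num) f)) := by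
  have e : ex 49 (by norm_num) (io f) = io (expand 49 (by norm_num) f) := ex_io 49 (by norm_num) f
  rw [← e]
  intro m hm
  by_contra hc
  exact hm (ex_coeff_not _ _ _ _ (by omega))

theorem phi_pI : pI * io phi = 1 + a1 + a2 + a4 := by
  have h3 : Pr 3 (io phi) = 0 := Pr_zero_of 3 _ fun n hn => phi_zero n (by omega)
  have h5 : Pr 5 (io phi) = 0 := Pr_zero_of 5 _ fun n hn => phi_zero n (by omega)
  have h6 : Pr 6 (io phi) = 0 := Pr_zero_of 6 _ fun n hn => phi_zero n (by omega)
  have h0 : Pr 0 (io phi) = ex 49 (by norm_num) (io phi) := by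
    have e : ex 49 (by norm_num) (io phi) = io (expand 49 (by norm_num) phi) := ex_io 49 (by norm_num) phi
    rw [e]
    exact Pr_io 0 phi _ (res_ex49 _) fun n hn => phi_0 n (by omega)
  have hs := sum_Pr (io phi)
  rw [h3, h5, h6, h0] at hs
  have k1 := phi_eq49
  have k2 := jj_ji 49 (by norm_num)
  have k3 : pI * ex 49 (by norm_num) (io phi) = 1 := by
    unfold pI
    linear_combination ji 49 ^ 2 * k1 + (jj 49 * ji 49 + 1) * k2
  unfold a1 a2 a4
  linear_combination pI * hs + k3

theorem lt_prod (k : ℕ) (hk : k = 1 ∨ k = 2 ∨ k = 3) : Pr (k * k) (io phi) = 2 * (-1) ^ k * (qp (k * k) * io (tht k)) := by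
  have hr : ∃ s, tht k = expand 7 (by norm_num) s := by
    have e1 := J_expand 7 (by norm_num) 14 (by norm_num)
    have e2 := PP_expand 7 (by norm_num) (7 + 2 * k) 14 (by norm_num)
    have e3 := PP_expand 7 (by norm_num) (7 - 2 * k) 14 (by norm_num)
    rw [show 7 * (7 + 2 * k) = 49 + 14 * k by ring] at e2
    rw [show 7 * (7 - 2 * k) = 49 - 14 * k by omega] at e3
    exact ⟨J 14 * (PP (7 + 2 * k) 14 * PP (7 - 2 * k) 14), by rw [map_mul, map_mul, e1, e2, e3]; rfl⟩
  obtain ⟨s, hs⟩ := hr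
  have hres : Res 0 (io (tht k)) := by
    rw [hs]
    have e : ex 7 (by norm_num) (io s) = io (expand 7 (by norm_num) s) := ex_io 7 (by norm_num) s
    rw [← e]; exact res_ex7 _
  have e : io (((2 * (-1) ^ k : ℤ) : PowerSeries ℤ) * (X ^ (k * k) * tht k)) = 2 * (-1) ^ k * (qp (k * k) * io (tht k)) := by
    rw [map_mul, map_mul, qp_io, map_intCast]; push_cast; rfl
  rw [← e]
  apply Pr_io
  · rw [map_mul, map_mul, qp_io, map_intCast]
    exact ((res_int _).mul ((res_qp _).mul hres)).cast (by push_cast; simp)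
  · intro n hn
    rw [phi_k k hk n (by rw [← Nat.cast_mul] at hn; omega)]
    rw [← zsmul_eq_mul, map_zsmul, smul_eq_mul]

theorem a_prod : a1 * a2 * a4 = 8 * (qp 14 * (jj 98 ^ 7 * jj 7 * (ji 49 ^ 7 * ji 14))) := by
  have h1 := lt_prod 1 (by norm_num)
  have h2 := lt_prod 2 (by norm_num)
  have h3 := lt_prod 3 (by norm_num)
  have h2' : Pr 2 (io phi) = Pr (((3:ℕ):ℤ) * ((3:ℕ):ℤ)) (io phi) := by
    ext n; simp only [Pr_coeff]; norm_num
  norm_num at h1 h2 h3 h2'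
  rw [h3] at h2'
  have ht := congrArg io tht_prod
  simp only [map_mul, map_pow] at ht
  have hq : qp 1 * qp 4 * qp 9 = qp 14 := by rw [qp_mul, qp_mul]; rfl
  have j14 := jj_ji 14 (by norm_num)
  have j49 := jj_ji 49 (by norm_num)
  unfold a1 a2 a4 pI
  rw [h1, h2, h2']
  rw [← hq]
  change io (tht 1) * io (tht 2) * io (tht 3) * (jj 14 * jj 49) = jj 98 ^ 4 * jj 7 at ht
  generalize io (tht 1) = t1 at *
  generalize io (tht 2) = t2 at *
  generalize io (tht 3) = t3 at *
  generalize jj 98 = z at *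
  generalize jj 7 = s at *
  generalize jj 14 = w at *
  generalize ji 14 = wi at *
  generalize jj 49 = x at *
  generalize ji 49 = xi at *
  linear_combination 8 * qp 1 * qp 4 * qp 9 * z ^ 3 * xi ^ 6 * (t1 * t2 * t3) * (- (w * wi) * j49 - j14) + 8 * qp 1 * qp 4 * qp 9 * z ^ 3 * xi ^ 7 * wi * ht

def aL2 : FF := E2 aL
def bE2 : FF := E2 bE
def gA2 : FF := E2 gA
def zZ : FF := E2 yY
theorem zZ_eq : zZ = aL2 + bE2 + gA2 - 1 := by
  unfold zZ aL2 bE2 gA2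
  rw [yY_eq]; simp
theorem zZ_jj : zZ = qp (-4) * ji 98 * jj 2 := by
  unfold zZ yY dI
  rw [map_mul, map_mul, ex_qp, ex_ji _ _ _ (by norm_num), ex_jj _ _ _ (by norm_num)]
  norm_num
theorem yz : yY ^ 2 = zZ * (1 + a1 + a2 + a4) := by
  rw [← phi_pI, zZ_jj]
  have h := congrArg io phi_eq
  simp only [map_mul, map_pow] at h
  change jj 2 * io phi = jj 1 ^ 2 at h
  have hq : qp (-2) * qp (-2) = qp (-4) := by rw [qp_mul]; rfl
  have j98 := jj_ji 98 (by norm_num)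
  unfold yY dI pI
  rw [← hq]
  linear_combination - qp (-2) ^ 2 * ji 49 ^ 2 * h - qp (-2) ^ 2 * ji 49 ^ 2 * jj 2 * io phi * j98

theorem res_aL2 : Res 3 aL2 := res_aL.ex2.cast (by norm_num)
theorem res_bE2 : Res 5 bE2 := res_bE.ex2.cast (by norm_num)
theorem res_gA2 : Res 6 gA2 := res_gA.ex2.cast (by norm_num)

theorem phi_graded : gA2 * a1 + bE2 * a2 + aL2 * a4 = 2 ∧ 2 * (aL * gA) = gA2 * a2 - a1 ∧
    2 * (bE * gA) = bE2 * a4 - a2 ∧ aL ^ 2 - 2 * gA = aL2 + gA2 * a4 ∧ 2 * (aL * bE) = aL2 * a1 - a4 ∧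
    bE ^ 2 - 2 * aL = bE2 + aL2 * a2 ∧ gA ^ 2 - 2 * bE = gA2 + bE2 * a1 := by
  have h := yz
  rw [yY_eq, zZ_eq] at h
  have ra := res_aL
  have rb := res_bE
  have rg := res_gA
  have ra2 := res_aL2
  have rb2 := res_bE2
  have rg2 := res_gA2
  have r1 := res_a1
  have r2 := res_a2
  have r4 := res_a4
  generalize aL = a at *
  generalize bE = b at *
  generalize gA = g at *
  generalize aL2 = A at *
  generalize bE2 = B at *
  generalize gA2 = G at *
  generalize a1 = u at *
  generalize a2 = v at *
  generalize a4 = w at *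
  have n2 := res_nat 2
  obtain ⟨h0, h1, h2, h3, h4, h5, h6⟩ := grade7 (g0 := 2 - G * u - B * v - A * w) (g1 := 2 * (a * g) - G * v + u)
    (g2 := 2 * (b * g) - B * w + v) (g3 := a ^ 2 - 2 * g - A - G * w) (g4 := 2 * (a * b) - A * u + w)
    (g5 := b ^ 2 - 2 * a - B - A * v) (g6 := g ^ 2 - 2 * b - G - B * u)
    (((n2.sub ((rg2.mul r1).cast (by norm_num))).sub ((rb2.mul r2).cast (by norm_num))).sub ((ra2.mul r4).cast (by norm_num)))
    ((((n2.mul (ra.mul rg)).cast (by norm_num)).sub ((rg2.mul r2).cast (by norm_num))).add r1)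
    ((((n2.mul (rb.mul rg)).cast (by norm_num)).sub ((rb2.mul r4).cast (by norm_num))).add r2)
    ((((ra.sq.cast (by norm_num)).sub ((n2.mul rg).cast (by norm_num))).sub ra2).sub ((rg2.mul r4).cast (by norm_num)))
    ((((n2.mul (ra.mul rb)).cast (by norm_num)).sub ((ra2.mul r1).cast (by norm_num))).add r4)
    ((((rb.sq.cast (by norm_num)).sub ((n2.mul ra).cast (by norm_num))).sub rb2).sub ((ra2.mul r2).cast (by norm_num)))
    ((((rg.sq.cast (by norm_num)).sub ((n2.mul rb).cast (by norm_num))).sub rg2).sub ((rb2.mul r1).cast (by norm_num)))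
    (by linear_combination h)
  refine ⟨?_, ?_, ?_, ?_, ?_, ?_, ?_⟩
  · linear_combination -h0
  · linear_combination h1
  · linear_combination h2
  · linear_combination h3
  · linear_combination h4
  · linear_combination h5
  · linear_combination h6
end QS

namespace QS
open PowerSeries

section elim
variable {F : Type*} [CommRing F] [IsDomain F]

theorem elim_C (A B C l m b2 b4 b1 x y z : F) (hx : x = A * m) (hz : z = C * l)
    (h2 : (2 : F) ≠ 0) (hxyz : x * y * z = 1)
    (s1 : 1 + B + B * C = 0) (s2 : 1 + C + C * A = 0)
    (f1 : b4 + 2 + z * b1 = 0) (f2 : b1 + 2 + y * b2 = 0) (f3 : b2 + 2 + x * b4 = 0)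
    (k1 : - B - 2 = m + l * b2 * B * C) :
    b2 = -1 + x - z * x ∧
    (2 - x) * (y * C - (1 - y - z)) = - (1 - x - y - z + x * y + y * z + z * x) := by
  have hb : b2 = -1 + x - z * x := by
    apply mul_left_cancel₀ h2
    linear_combination f3 - x * f1 + z * x * f2 - b2 * hxyz
  have hC : C * (2 - x) = z * b2 - 1 := by
    rw [hz, hx]
    linear_combination -(1 + C) * k1 - (1 + C * l * b2) * s1 - m * s2
  refine ⟨hb, ?_⟩
  linear_combination y * hC + y * z * hb + (1 - z) * hxyz

theorem elim_x (A C l x z : F) (hz : z = C * l) (s2 : 1 + C + C * A = 0) (h : z * A = 1 - z - x) : x = 1 + l := by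
  rw [hz] at h
  linear_combination h - l * s2

theorem elim_all (A B C l m n b1 b2 b4 : F) (h2 : (2 : F) ≠ 0) (hABC : A * B * C = 1) (hlmn : l * m * n = 1)
    (s1 : 1 + B + B * C = 0) (s2 : 1 + C + C * A = 0) (s3 : 1 + A + A * B = 0)
    (f1 : b4 + 2 + C * l * b1 = 0) (f2 : b1 + 2 + B * n * b2 = 0) (f3 : b2 + 2 + A * m * b4 = 0)
    (k1 : - B - 2 = m + l * b2 * B * C) (k2 : - A - 2 = l + n * b4 * A * B) (k3 : - C - 2 = n + m * b1 * C * A)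
    (n1 : 2 - A * m ≠ 0) (n2 : 2 - B * n ≠ 0) (n3 : 2 - C * l ≠ 0) (n4 : 1 + C * l + B * n * (C * l) ≠ 0) :
    A * m = 1 + l ∧ B * n = 1 + m ∧ C * l = 1 + n ∧ b1 = -1 - l - l * m ∧ b2 = -1 - n - l * n ∧ b4 = -1 - m - m * n := by
  have hxyz : A * m * (B * n) * (C * l) = 1 := by linear_combination l * m * n * hABC + hlmn
  obtain ⟨x, hx⟩ : ∃ x, x = A * m := ⟨_, rfl⟩
  obtain ⟨y, hy⟩ : ∃ y, y = B * n := ⟨_, rfl⟩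
  obtain ⟨z, hz⟩ : ∃ z, z = C * l := ⟨_, rfl⟩
  rw [← hx] at n1 f3 hxyz ⊢
  rw [← hy] at n2 n4 f2 hxyz ⊢
  rw [← hz] at n3 n4 f1 hxyz ⊢
  obtain ⟨c2, p1⟩ := elim_C A B C l m b2 b4 b1 x y z hx hz h2 hxyz s1 s2 f1 f2 f3 k1
  obtain ⟨c1, p2⟩ := elim_C B C A m n b1 b2 b4 y z x hy hx h2 (by linear_combination hxyz) s2 s3 f3 f1 f2 k3
  obtain ⟨c4, p3⟩ := elim_C C A B n l b4 b1 b2 z x y hz hy h2 (by linear_combination hxyz) s3 s1 f2 f3 f1 k2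
  have hG : (1 - x - y - z + x * y + y * z + z * x) * (1 + z + y * z) = 0 := by
    linear_combination (2 - x) * (2 - y) * y * z * s2 - (2 - y) * (1 - x) * p1 - (2 - x) * (1 - y - z) * p2
      - ((2 - y) * (z * A - (1 - z - x))) * p1 + (1 - x - y - z + x * y + y * z + z * x) * p2
  have hG0 := (mul_eq_zero.1 hG).resolve_right n4
  have P0 := (mul_eq_zero.1 (p1.trans (by linear_combination - hG0))).resolve_left n1
  have Q0 := (mul_eq_zero.1 (p2.trans (by linear_combination - hG0))).resolve_left n2
  have R0 := (mul_eq_zero.1 (p3.trans (by linear_combination - hG0))).resolve_left n3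
  have e1 := elim_x A C l x z hz s2 (by linear_combination Q0)
  have e2 := elim_x B A m y x hx s3 (by linear_combination R0)
  have e3 := elim_x C B n z y hy s1 (by linear_combination P0)
  refine ⟨e1, e2, e3, ?_, ?_, ?_⟩
  · rw [c1, e1, e2]; ring
  · rw [c2, e1, e3]; ring
  · rw [c4, e2, e3]; ring
end elim

def la : FF := - aL2 * aL * bE
def mu : FF := - bE2 * bE * gA
def nu : FF := - gA2 * aL * gA
theorem res_la : Res 0 la := ((res_aL2.neg.mul res_aL).mul res_bE).cast (by norm_num)
theorem res_mu : Res 0 mu := ((res_bE2.neg.mul res_bE).mul res_gA).cast (by norm_num)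
theorem res_nu : Res 0 nu := ((res_gA2.neg.mul res_aL).mul res_gA).cast (by norm_num)
theorem lead_aL2 : Lead (-4) 1 aL2 := lead_aL.ex 2 (by norm_num)
theorem lead_bE2 : Lead (-2) (-1) bE2 := lead_bE.ex 2 (by norm_num)
theorem lead_gA2 : Lead 6 1 gA2 := lead_gA.ex 2 (by norm_num)
theorem abg2 : aL2 * bE2 * gA2 = -1 := by
  have := congrArg E2 abg.1
  simpa [aL2, bE2, gA2] using this
theorem aL2_eq : aL2 = la * gA := by have := abg.1; unfold la; linear_combination aL2 * this
theorem bE2_eq : bE2 = mu * aL := by have := abg.1; unfold mu; linear_combination bE2 * this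
theorem gA2_eq : gA2 = nu * bE := by have := abg.1; unfold nu; linear_combination gA2 * this

theorem coeff_two (n : ℤ) : (2 : FF).coeff n = if n = 0 then 2 else 0 := by
  have : (2 : FF) = HahnSeries.C (2 : ℤ) := (map_ofNat (HahnSeries.C : ℤ →+* FF) 2).symm
  rw [this]
  simp only [HahnSeries.C_apply, HahnSeries.coeff_single]
  split_ifs <;> rfl

theorem lmn_main : aL ^ 3 * bE * mu = 1 + la ∧ bE ^ 3 * gA * nu = 1 + mu ∧ gA ^ 3 * aL * la = 1 + nu ∧
    - a1 * bE = -1 - la - la * mu ∧ - a2 * aL = -1 - nu - la * nu ∧ - a4 * gA = -1 - mu - mu * nu ∧ la * mu * nu = 1 := by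
  obtain ⟨h, e1, e2, e3⟩ := abg
  obtain ⟨q0, q1, q2, q3, q4, q5, q6⟩ := phi_graded
  have h' := abg2
  have hx : aL ^ 3 * bE * mu = aL ^ 2 * bE * bE2 := by rw [bE2_eq]; ring
  have hy : bE ^ 3 * gA * nu = bE ^ 2 * gA * gA2 := by rw [gA2_eq]; ring
  have hz : gA ^ 3 * aL * la = gA ^ 2 * aL * aL2 := by rw [aL2_eq]; ring
  have lx : Lead (-7) 1 (aL ^ 3 * bE * mu) := by
    rw [hx, pow_two]
    simpa using ((lead_aL.mul lead_aL).mul lead_bE).mul lead_bE2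
  have ly : Lead 7 1 (bE ^ 3 * gA * nu) := by
    rw [hy, pow_two]
    simpa using ((lead_bE.mul lead_bE).mul lead_gA).mul lead_gA2
  have lz : Lead 0 1 (gA ^ 3 * aL * la) := by
    rw [hz, pow_two]
    simpa using ((lead_gA.mul lead_gA).mul lead_aL).mul lead_aL2
  have hl : la * mu * nu = 1 := by
    unfold la mu nu
    linear_combination -(aL * bE * gA) ^ 2 * h' + (aL * bE * gA - 1) * h
  have n2 : (2 : FF) ≠ 0 := by
    intro hc
    have := congrArg (fun f => HahnSeries.coeff f 0) hc
    simp [coeff_two] at this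
  have lyz := (ly.mul lz)
  have main := elim_all (aL ^ 3 * bE) (bE ^ 3 * gA) (gA ^ 3 * aL) la mu nu (- a1 * bE) (- a2 * aL) (- a4 * gA) n2
    (by linear_combination (aL * bE * gA - 1) * ((aL * bE * gA)^2+1) * h)
    hl
    (by linear_combination -bE * gA * e3 + (bE ^ 2 * gA ^ 3 + 1) * h)
    (by linear_combination -gA * aL * e1 + (gA ^ 2 * aL ^ 3 + 1) * h)
    (by linear_combination -aL * bE * e2 + (aL ^ 2 * bE ^ 3 + 1) * h)
    (by rw [aL2_eq] at q4; linear_combination -gA * q4 + (2 - la * gA ^ 2 * a1) * h)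
    (by rw [gA2_eq] at q1; linear_combination -bE * q1 + (2 - nu * bE ^ 2 * a2) * h)
    (by rw [bE2_eq] at q2; linear_combination -aL * q2 + (2 - mu * aL ^ 2 * a4) * h)
    (by rw [bE2_eq, aL2_eq] at q5; linear_combination -bE * gA * q5 + (-2 - mu + la * a2 * bE * gA ^ 2 * (aL * bE * gA - 1)) * h)
    (by rw [aL2_eq, gA2_eq] at q3; linear_combination -aL * bE * q3 + (-2 - la + nu * a4 * aL * bE ^ 2 * (aL * bE * gA - 1)) * h)
    (by rw [gA2_eq, bE2_eq] at q6; linear_combination -gA * aL * q6 + (-2 - nu + mu * a1 * gA * aL ^ 2 * (aL * bE * gA - 1)) * h)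
    (by
      intro hc
      have := congrArg (fun f => HahnSeries.coeff f (-7)) hc
      simp [coeff_two, lx.coeff] at this)
    (by
      intro hc
      have := congrArg (fun f => HahnSeries.coeff f 0) hc
      simp [coeff_two, ly.coeff_lt 0 (by norm_num)] at this)
    (by
      intro hc
      have := congrArg (fun f => HahnSeries.coeff f 0) hc
      simp [coeff_two, lz.coeff] at this)
    (by
      intro hc
      have := congrArg (fun f => HahnSeries.coeff f 0) hc
      simp [lz.coeff, lyz.coeff_lt 0 (by norm_num)] at this)
  obtain ⟨m1, m2, m3, m4, m5, m6⟩ := main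
  exact ⟨m1, m2, m3, m4, m5, m6, hl⟩
end QS

namespace QS
open PowerSeries

theorem aa_up : aL ^ 2 = - (la * nu * (1 + la)) * gA ∧ bE ^ 2 = - (la * mu * (1 + mu)) * aL ∧
    gA ^ 2 = - (mu * nu * (1 + nu)) * bE := by
  obtain ⟨m1, m2, m3, m4, m5, m6, hl⟩ := lmn_main
  have h := abg.1
  refine ⟨?_, ?_, ?_⟩
  · linear_combination -(la * nu * gA * m1) + gA * aL ^ 3 * bE * hl + aL ^ 2 * h
  · linear_combination -(la * mu * aL * m2) + aL * bE ^ 3 * gA * hl + bE ^ 2 * h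
  · linear_combination -(mu * nu * bE * m3) + bE * gA ^ 3 * aL * hl + gA ^ 2 * h
theorem r2_up : la + mu + nu + la * mu + mu * nu + nu * la = -1 := by
  obtain ⟨m1, m2, m3, m4, m5, m6, hl⟩ := lmn_main
  have h := abg.1
  have e : (1 + la) * (1 + mu) * (1 + nu) = 1 := by
    rw [← m1, ← m2, ← m3]
    linear_combination (aL * bE * gA) ^ 4 * hl + ((aL * bE * gA) ^ 2 + 1) * (aL * bE * gA - 1) * h
  linear_combination e - hl

theorem dis (U : FF → FF) (hU : ∀ (f : FF) (n : ℤ), (U f).coeff n = f.coeff (7 * n)) :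
    Dis V7 (UA U hU) aL bE gA (U la) (U mu) (U nu) := by
  have hl := V_U U hU res_la
  have hm := V_U U hU res_mu
  have hn := V_U U hU res_nu
  have inj := ex_inj 7 (by norm_num)
  refine ⟨fun a b => U_mul U hU a b, ?_, U_res U hU res_aL (by norm_num), U_res U hU res_bE (by norm_num),
    U_res U hU res_gA (by norm_num), U_res U hU (res_aL.mul res_bE) (by norm_num),
    U_res U hU (res_bE.mul res_gA) (by norm_num), U_res U hU (res_gA.mul res_aL) (by norm_num), abg.1, ?_, ?_, ?_, ?_, ?_⟩
  · have := U_V U hU 1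
    rwa [map_one] at this
  · simp only [map_mul, map_add, map_one, hl, hm, hn]; exact aa_up.1
  · simp only [map_mul, map_add, map_one, hl, hm, hn]; exact aa_up.2.1
  · simp only [map_mul, map_add, map_one, hl, hm, hn]; exact aa_up.2.2
  · apply inj
    change V7 _ = V7 _
    simp only [map_mul, map_add, map_one, hl, hm, hn]; exact lmn_main.2.2.2.2.2.2
  · apply inj
    change V7 _ = V7 _
    simp only [map_mul, map_add, map_one, map_neg, hl, hm, hn]; exact r2_up
end QS

namespace QS
open PowerSeries

theorem monic7 {R : Type*} [CommRing R] [IsDomain R] (p : Polynomial R) (hp : p.Monic) (hd : p.natDegree = 7)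
    (u : ℕ → R) (hu : Set.InjOn u (Finset.range 7)) (hr : ∀ j ∈ Finset.range 7, p.eval (u j) = 0) :
    p = ∏ j ∈ Finset.range 7, (Polynomial.X - Polynomial.C (u j)) := by
  have hm : (∏ j ∈ Finset.range 7, (Polynomial.X - Polynomial.C (u j))).Monic :=
    Polynomial.monic_prod_of_monic _ _ fun j _ => Polynomial.monic_X_sub_C _
  have hd1 : p.degree = 7 := by rw [Polynomial.degree_eq_natDegree hp.ne_zero, hd]; rfl
  have hd2 : (∏ j ∈ Finset.range 7, (Polynomial.X - Polynomial.C (u j))).degree = 7 := by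
    rw [Polynomial.degree_prod]; simp
  refine Polynomial.eq_of_degree_le_of_eval_index_eq (Finset.range 7) hu ?_ (hd1.trans hd2.symm)
    (by rw [hp.leadingCoeff, hm.leadingCoeff]) fun j hj => ?_
  · rw [hd1]; simp
  · rw [hr j hj, Polynomial.eval_prod, Finset.prod_eq_zero hj]
    simp

theorem prim_inj {w : ℂ} (hw : IsPrimitiveRoot w 7) : Set.InjOn (fun j : ℕ => (w ^ 6) ^ j) (Finset.range 7) := by
  have h6 : IsPrimitiveRoot (w ^ 6) 7 := hw.pow_of_coprime 6 (by norm_num)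
  intro i hi j hj hij
  simp at hi hj
  exact h6.pow_inj hi hj hij

theorem prod_w {w : ℂ} (hw : IsPrimitiveRoot w 7) (T : PowerSeries ℂ) :
    ∏ j ∈ Finset.range 7, (1 - C (w ^ j) * T) = 1 - T ^ 7 := by
  have h7 := hw.pow_eq_one
  have := monic7 (R := PowerSeries ℂ) (Polynomial.X ^ 7 - Polynomial.C 1) (Polynomial.monic_X_pow_sub_C _ (by norm_num)) (Polynomial.natDegree_X_pow_sub_C)
    (fun j => C ((w ^ 6) ^ j)) (fun i hi j hj hij => prim_inj hw hi hj (C_injective hij)) (by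
      intro j hj
      simp only [Polynomial.eval_sub, Polynomial.eval_pow, Polynomial.eval_X, Polynomial.eval_C]
      rw [← map_pow, ← pow_mul, ← pow_mul, show 6 * (j * 7) = 7 * (6 * j) by ring, pow_mul, h7, one_pow, map_one, sub_self])
  have h2 := congrArg (Polynomial.eval T) this
  simp only [Polynomial.eval_sub, Polynomial.eval_pow, Polynomial.eval_X, Polynomial.eval_C, Polynomial.eval_prod] at h2
  have h3 : ∀ j, (1 - C (w ^ j) * T) = - C (w ^ j) * (T - C ((w ^ 6) ^ j)) := by
    intro j
    have : C (w ^ j) * C ((w ^ 6) ^ j) = 1 := by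
      rw [← map_mul, ← pow_mul, ← pow_add, show j + 6 * j = 7 * j by ring, pow_mul, h7, one_pow, map_one]
    linear_combination -this
  simp_rw [h3]
  rw [Finset.prod_mul_distrib, ← h2]
  have h4 : ∏ j ∈ Finset.range 7, (-C (w ^ j)) = (-1 : PowerSeries ℂ) := by
    simp only [Finset.prod_range_succ, Finset.prod_range_zero, map_pow]
    have : (C w : PowerSeries ℂ) ^ 7 = 1 := by rw [← map_pow, h7, map_one]
    linear_combination -((C w) ^ 14 + C w ^ 7 + 1) * this
  rw [h4]; ring

def mc : PowerSeries ℤ →+* PowerSeries ℂ := PowerSeries.map (Int.castRingHom ℂ)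
theorem mc_inj : Function.Injective mc := PowerSeries.map_injective _ Int.cast_injective
theorem mc_X : mc X = X := PowerSeries.map_X _

theorem prod_pow {w : ℂ} (hw : IsPrimitiveRoot w 7) (n : ℕ) (hn : 1 ≤ n) :
    ∏ j ∈ Finset.range 7, rescale (w ^ j) (1 - (X : PowerSeries ℂ) ^ n) =
      if 7 ∣ n then (1 - (X : PowerSeries ℂ) ^ n) ^ 7 else 1 - X ^ (7 * n) := by
  have e : ∀ j : ℕ, rescale (w ^ j) (1 - (X : PowerSeries ℂ) ^ n) = 1 - C ((w ^ n) ^ j) * X ^ n := by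
    intro j
    rw [map_sub, map_one, map_pow, rescale_X, mul_pow, ← map_pow, ← pow_mul, ← pow_mul, mul_comm n]
  simp_rw [e]
  split_ifs with h
  · obtain ⟨k, rfl⟩ := h
    simp [pow_mul w, hw.pow_eq_one]
  · rw [prod_w (hw.pow_of_coprime n ((Nat.Prime.coprime_iff_not_dvd (by norm_num)).2 h).symm), ← pow_mul, mul_comm n]

theorem prod_fin (f : ℕ → PowerSeries ℂ) (g : ℕ → PowerSeries ℂ) (M : ℕ) :
    (∏ k ∈ Finset.range (7 * M), if 7 ∣ k + 1 then (f (k + 1)) ^ 7 else g (k + 1)) * ∏ k ∈ Finset.range M, g (7 * (k + 1)) =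
    (∏ k ∈ Finset.range M, f (7 * (k + 1))) ^ 7 * ∏ k ∈ Finset.range (7 * M), g (k + 1) := by
  induction M with
  | zero => simp
  | succ M ih =>
    have d1 : ¬ 7 ∣ 7 * M + 1 := by omega
    have d2 : ¬ 7 ∣ 7 * M + 1 + 1 := by omega
    have d3 : ¬ 7 ∣ 7 * M + 2 + 1 := by omega
    have d4 : ¬ 7 ∣ 7 * M + 3 + 1 := by omega
    have d5 : ¬ 7 ∣ 7 * M + 4 + 1 := by omega
    have d6 : ¬ 7 ∣ 7 * M + 5 + 1 := by omega
    have d7 : 7 ∣ 7 * M + 6 + 1 := by omega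
    rw [show 7 * (M + 1) = 7 * M + 7 by ring]
    simp only [Finset.prod_range_succ _ M, Finset.prod_range_succ _ (7 * M), Finset.prod_range_succ _ (7 * M + 1), Finset.prod_range_succ _ (7 * M + 2),
      Finset.prod_range_succ _ (7 * M + 3), Finset.prod_range_succ _ (7 * M + 4), Finset.prod_range_succ _ (7 * M + 5), Finset.prod_range_succ _ (7 * M + 6),
      d1, d2, d3, d4, d5, d6, d7, if_true, if_false]
    rw [show 7 * (M + 1) = 7 * M + 6 + 1 by ring]
    linear_combination ih * (f (7 * M + 6 + 1) ^ 7 * g (7 * M + 6 + 1) * (g (7 * M + 1) * g (7 * M + 1 + 1) * g (7 * M + 2 + 1) * g (7 * M + 3 + 1) * g (7 * M + 4 + 1) * g (7 * M + 5 + 1)))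

theorem J_lim (b : ℕ) (hb : 1 ≤ b) : Lim (fun N => ∏ k ∈ Finset.range N, (1 - (X : PowerSeries ℤ) ^ (b * (k + 1)))) (J b) := by
  have := PP_lim b b hb
  rw [← J_eq] at this
  convert this using 6
  ring

theorem norm_J {w : ℂ} (hw : IsPrimitiveRoot w 7) :
    (∏ j ∈ Finset.range 7, rescale (w ^ j) (mc (J 1))) * mc (J 49) = mc (J 7) ^ 8 := by
  have s7 : ∀ n : ℕ, n ≤ 7 * n := fun n => by omega
  have hX : (X : PowerSeries ℂ) ∣ mc X := by rw [mc_X]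
  have l1 := Lim.prod (Finset.range 7) (f := fun j N => rescale (w ^ j) (mc (∏ k ∈ Finset.range (7 * N), (1 - (X : PowerSeries ℤ) ^ (1 * (k + 1))))))
    (g := fun j => rescale (w ^ j) (mc (J 1)))
    fun j _ => (((J_lim 1 le_rfl).sub_seq _ s7).map mc hX).map (rescale (w ^ j)) (by rw [rescale_X]; exact dvd_mul_left _ _)
  have l2 := l1.mul ((J_lim 49 (by norm_num)).map mc hX)
  have l3 := (J_lim 7 (by norm_num)).map mc hX
  have l4 := ((J_lim 7 (by norm_num)).sub_seq _ s7).map mc hX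
  have l5 := (Lim.prod (Finset.range 7) (fun _ _ => l3)).mul l4
  rw [Finset.prod_const, Finset.card_range, ← pow_succ] at l5
  refine l2.unique ?_
  convert l5 using 2 with N
  simp only [map_prod, map_sub, map_one, map_pow, mc_X, one_mul, Finset.prod_const, Finset.card_range]
  have h := prod_fin (fun n => 1 - X ^ n) (fun n => 1 - X ^ (7 * n)) N
  simp only [← mul_assoc] at h
  rw [← h, Finset.prod_comm]
  congr 1
  refine Finset.prod_congr rfl fun k _ => ?_
  rw [← prod_pow hw _ (by omega)]
  simp
end QS

namespace QS
open PowerSeries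

theorem io_inj : Function.Injective io := HahnSeries.ofPowerSeries_injective

theorem Pr_ex (r : ℤ) (f : PowerSeries ℤ) : ∃ g, Pr r (io f) = io g := by
  refine ⟨PowerSeries.mk fun n => (Pr r (io f)).coeff n, io_ext ?_ ?_⟩
  · intro n hn
    rw [Pr_coeff, io_neg _ _ hn]; simp
  · intro n; rw [coeff_mk]

theorem resc {w : ℂ} (hw : w ^ 7 = 1) (r : ℕ) (f : PowerSeries ℤ) (hf : Res r (io f)) (j : ℕ) :
    rescale (w ^ j) (mc f) = C (w ^ j) ^ r * mc f := by
  ext n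
  rw [← map_pow, coeff_rescale, coeff_C_mul]
  have hc : coeff n (mc f) = ((coeff n f : ℤ) : ℂ) := by simp [mc]
  rw [hc]
  by_cases h : coeff n f = 0
  · simp [h]
  · have := hf n (by rwa [io_nat])
    have h7 : (w ^ j) ^ 7 = 1 := by rw [← pow_mul, mul_comm, pow_mul, hw, one_pow]
    rw [pow_eq_pow_mod n h7, pow_eq_pow_mod r h7, show n % 7 = r % 7 by omega]

/-- the product of the roots of the degree seven polynomial -/
theorem norm_poly {w : ℂ} (hw : IsPrimitiveRoot w 7) (x D h c : PowerSeries ℂ) (hD : D ≠ 0)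
    (hDc : D * c = h ^ 2) (hx : constantCoeff x = 1)
    (he : x ^ 7 + 7 * D * x ^ 6 + 21 * D ^ 2 * x ^ 5 + 49 * D ^ 3 * x ^ 4 + (7 * h + 147 * D ^ 4) * x ^ 3
      + (35 * h * D + 343 * D ^ 5) * x ^ 2 + (49 * h * D ^ 2 + 343 * D ^ 6) * x = c)
    (rD : ∀ j : ℕ, rescale (w ^ j) D = C (w ^ j) ^ 2 * D) (rh : ∀ j : ℕ, rescale (w ^ j) h = C (w ^ j) ^ 1 * h) :
    ∏ j ∈ Finset.range 7, rescale (w ^ j) x = c := by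
  have hw7 := hw.pow_eq_one
  have hW : ∀ j : ℕ, (C (w ^ j) : PowerSeries ℂ) ^ 7 = 1 := by
    intro j
    rw [← map_pow, ← pow_mul, mul_comm, pow_mul, hw7, one_pow, map_one]
  have rc : ∀ j : ℕ, rescale (w ^ j) c = c := by
    intro j
    have h1 := congrArg (rescale (w ^ j)) hDc
    rw [map_mul, map_pow, rD, rh] at h1
    have hne : C (w ^ j) ^ 2 * D ≠ 0 := by
      refine mul_ne_zero (pow_ne_zero _ fun h0 => ?_) hD
      have := hW j
      rw [h0] at this; simp at this
    apply mul_left_cancel₀ hne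
    linear_combination h1 - C (w ^ j) ^ 2 * hDc
  let p : Polynomial (PowerSeries ℂ) := Polynomial.X ^ 7 + Polynomial.C (7 * D) * Polynomial.X ^ 6 + Polynomial.C (21 * D ^ 2) * Polynomial.X ^ 5
    + Polynomial.C (49 * D ^ 3) * Polynomial.X ^ 4 + Polynomial.C (7 * h + 147 * D ^ 4) * Polynomial.X ^ 3
    + Polynomial.C (35 * h * D + 343 * D ^ 5) * Polynomial.X ^ 2 + Polynomial.C (49 * h * D ^ 2 + 343 * D ^ 6) * Polynomial.X + Polynomial.C (- c)
  have hpm : p.Monic := by unfold p; monicity!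
  have hpd : p.natDegree = 7 := by unfold p; compute_degree!
  have ev : ∀ y, p.eval y = y ^ 7 + 7 * D * y ^ 6 + 21 * D ^ 2 * y ^ 5 + 49 * D ^ 3 * y ^ 4 + (7 * h + 147 * D ^ 4) * y ^ 3
      + (35 * h * D + 343 * D ^ 5) * y ^ 2 + (49 * h * D ^ 2 + 343 * D ^ 6) * y - c := by
    intro y; unfold p
    simp only [Polynomial.eval_add, Polynomial.eval_mul, Polynomial.eval_pow, Polynomial.eval_X, Polynomial.eval_C]
    ring
  have key := monic7 p hpm hpd (fun j => C (w ^ j) ^ 5 * rescale (w ^ j) x) (by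
      intro i hi j hj hij
      have := congrArg constantCoeff hij
      have e : ∀ i : ℕ, constantCoeff (rescale (w ^ i) x) = 1 := fun i => by
        rw [← coeff_zero_eq_constantCoeff_apply, coeff_rescale]; simp [hx]
      simp only [map_mul, map_pow, e, constantCoeff_C, mul_one] at this
      have h5 : IsPrimitiveRoot (w ^ 5) 7 := hw.pow_of_coprime 5 (by norm_num)
      simp at hi hj
      refine h5.pow_inj hi hj ?_
      rw [← pow_mul, ← pow_mul, mul_comm 5, mul_comm 5, pow_mul, pow_mul]; exact this) (by
      intro j _
      rw [ev]
      have h1 := congrArg (rescale (w ^ j)) he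
      simp only [map_add, map_mul, map_pow (rescale (w ^ j)), map_ofNat, rD, rh, rc] at h1
      have W7 := hW j
      generalize C (w ^ j) = W at *
      generalize rescale (w ^ j) x = y at *
      have W8 : W ^ 8 = W := by linear_combination W * W7
      have W12 : W ^ 12 = W ^ 5 := by linear_combination W ^ 5 * W7
      have W10 : W ^ 10 = W ^ 3 := by linear_combination W ^ 3 * W7
      have W15 : W ^ 15 = W := by linear_combination (W ^ 8 + W) * W7
      have W20 : W ^ 20 = W ^ 6 := by linear_combination (W ^ 13 + W ^ 6) * W7
      have W25 : W ^ 25 = W ^ 4 := by linear_combination (W ^ 18 + W ^ 11 + W ^ 4) * W7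
      have W30 : W ^ 30 = W ^ 2 := by linear_combination (W ^ 23 + W ^ 16 + W ^ 9 + W ^ 2) * W7
      have W35 : W ^ 35 = 1 := by linear_combination (W ^ 28 + W ^ 21 + W ^ 14 + W ^ 7 + 1) * W7
      linear_combination h1 + y ^ 7 * W35 + 7 * D * y ^ 6 * W30 + 21 * D ^ 2 * y ^ 5 * W25 + 49 * D ^ 3 * y ^ 4 * W20
        + 7 * h * y ^ 3 * W15 + 147 * D ^ 4 * y ^ 3 * (W15 - W8) + 35 * h * D * y ^ 2 * W10 - 343 * D ^ 6 * y * W12)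
  have h0 := congrArg (Polynomial.eval 0) key
  rw [ev, Polynomial.eval_prod] at h0
  simp only [Polynomial.eval_sub, Polynomial.eval_X, Polynomial.eval_C, Finset.prod_range_succ, Finset.prod_range_zero] at h0
  simp only [Finset.prod_range_succ, Finset.prod_range_zero]
  have e0 : ∀ i : ℕ, (C (w ^ i) : PowerSeries ℂ) = C w ^ i := fun i => map_pow _ _ _
  simp only [e0] at h0
  have e7 := hW 1
  rw [pow_one] at e7
  have e105 : (C w : PowerSeries ℂ) ^ 105 = 1 := by
    rw [show 105 = 7 * 15 by norm_num, pow_mul, e7, one_pow]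
  generalize rescale (w ^ 0) x = x0 at *
  generalize rescale (w ^ 1) x = x1 at *
  generalize rescale (w ^ 2) x = x2 at *
  generalize rescale (w ^ 3) x = x3 at *
  generalize rescale (w ^ 4) x = x4 at *
  generalize rescale (w ^ 5) x = x5 at *
  generalize rescale (w ^ 6) x = x6 at *
  linear_combination h0 - x0 * x1 * x2 * x3 * x4 * x5 * x6 * e105

def hH : FF := - (aL ^ 3 * bE + bE ^ 3 * gA + gA ^ 3 * aL) - 8

theorem hF_up (U : FF → FF) (hU : ∀ (f : FF) (n : ℤ), (U f).coeff n = f.coeff (7 * n)) :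
    V7 (hF (U la) (U mu) (U nu)) = hH := by
  have hl := V_U U hU res_la
  have hm := V_U U hU res_mu
  have hn := V_U U hU res_nu
  obtain ⟨m1, m2, m3, m4, m5, m6, h1⟩ := lmn_main
  have r2 := r2_up
  unfold hF hH
  simp only [map_mul, map_add, map_sub, map_pow, map_ofNat, hl, hm, hn]
  linear_combination r2 - aL ^ 3 * bE * h1 - bE ^ 3 * gA * h1 - gA ^ 3 * aL * h1 + la * nu * m1 + la * mu * m2 + mu * nu * m3

theorem res_hH : Res 0 hH :=
  ((((res_aL.cu.mul res_bE).cast (s := 0) (by norm_num)).add ((res_bE.cu.mul res_gA).cast (by norm_num))).add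
    ((res_gA.cu.mul res_aL).cast (by norm_num))).neg.sub (res_nat 8)

theorem hH_sq (U : FF → FF) (hU : ∀ (f : FF) (n : ℤ), (U f).coeff n = f.coeff (7 * n)) :
    hH ^ 2 * dD ^ 7 * jj 49 = jj 7 ^ 8 := by
  have W := (dis U hU).W_eq
  simp only [hF_up U hU, ← yY_eq] at W
  obtain ⟨a0, ha⟩ := Pr_ex 0 (J 1)
  obtain ⟨b0, hb⟩ := Pr_ex 1 (J 1)
  obtain ⟨c0, hc⟩ := Pr_ex 5 (J 1)
  have hd := dD_dI
  have hdi : dD * yY = io (J 1) := by unfold yY jj; linear_combination io (J 1) * hd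
  have ka : dD * aL = io a0 := by rw [← ha]; unfold aL jj; linear_combination Pr 0 (io (J 1)) * hd
  have kb : dD * bE = io b0 := by rw [← hb]; unfold bE jj; linear_combination Pr 1 (io (J 1)) * hd
  have kc : dD * gA = io c0 := by rw [← hc]; unfold gA jj; linear_combination Pr 5 (io (J 1)) * hd
  obtain ⟨D, hD⟩ : ∃ D, D = X ^ 2 * J 49 := ⟨_, rfl⟩
  have kD : dD = io D := by rw [hD]; exact dD_io
  obtain ⟨h, hh⟩ : ∃ h, h = - (a0 ^ 3 * b0 + b0 ^ 3 * c0 + c0 ^ 3 * a0) - 8 * D ^ 4 := ⟨_, rfl⟩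
  have kh : io h = hH * dD ^ 4 := by
    rw [hh]
    simp only [map_sub, map_neg, map_add, map_mul, map_pow, map_ofNat, ← ka, ← kb, ← kc, ← kD, hH]
    ring
  obtain ⟨c, hcc⟩ : ∃ c, c = J 1 ^ 7 + 7 * D * J 1 ^ 6 + 21 * D ^ 2 * J 1 ^ 5 + 49 * D ^ 3 * J 1 ^ 4 + (7 * h + 147 * D ^ 4) * J 1 ^ 3
      + (35 * h * D + 343 * D ^ 5) * J 1 ^ 2 + (49 * h * D ^ 2 + 343 * D ^ 6) * J 1 := ⟨_, rfl⟩
  have kcc : io c = hH ^ 2 * dD ^ 7 := by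
    rw [hcc]
    simp only [map_add, map_mul, map_pow, map_ofNat, kh, ← kD, ← hdi]
    linear_combination dD ^ 7 * W
  have hDc : D * c = h ^ 2 := by
    apply io_inj
    rw [map_mul, map_pow, kcc, kh, ← kD]; ring
  have hz : IsPrimitiveRoot (Complex.exp (2 * Real.pi * Complex.I / 7)) 7 := by
    simpa using Complex.isPrimitiveRoot_exp 7 (by norm_num)
  generalize Complex.exp (2 * Real.pi * Complex.I / 7) = w at hz
  have hw7 := hz.pow_eq_one
  have rD : Res (2 : ℕ) (io D) := by rw [← kD]; exact res_dD
  have rh : Res (1 : ℕ) (io h) := by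
    rw [kh]; exact (res_hH.mul (res_dD.pow 4)).cast (by norm_num)
  have D0 : mc D ≠ 0 := by
    intro h0
    have : D = 0 := mc_inj (by rw [h0, map_zero])
    rw [this, map_zero] at kD
    rw [kD] at hd
    simp at hd
  have key := norm_poly hz (mc (J 1)) (mc D) (mc h) (mc c) D0 (by rw [← map_mul, hDc, map_pow])
    (by rw [← coeff_zero_eq_constantCoeff_apply]; simp [mc, J_const 1 le_rfl])
    (by rw [hcc]; simp only [map_add, map_mul, map_pow, map_ofNat])
    (fun j => resc hw7 2 D rD j) (fun j => resc hw7 1 h rh j)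
  have nj := norm_J hz
  rw [key, ← map_mul, ← map_pow] at nj
  have := congrArg io (mc_inj nj)
  rw [map_mul, kcc, map_pow] at this
  exact this
end QS

namespace QS
open PowerSeries

abbrev KK := FractionRing FF
abbrev ka : FF →+* KK := algebraMap FF KK
theorem ka_inj : Function.Injective ka := IsFractionRing.injective FF KK
def kj (b : ℕ) : KK := ka (jj b)
def kq : KK := ka (qp 1)
theorem kj_ne {b : ℕ} (hb : 1 ≤ b) : kj b ≠ 0 := by
  intro h
  have h2 := congrArg ka (jj_ji b hb)
  rw [map_mul, map_one] at h2
  change kj b * _ = 1 at h2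
  rw [h] at h2; simp at h2
theorem kj_inv {b : ℕ} (hb : 1 ≤ b) : ka (ji b) = (kj b)⁻¹ := by
  have h2 := congrArg ka (jj_ji b hb)
  rw [map_mul, map_one] at h2
  exact eq_inv_of_mul_eq_one_right h2
theorem kq_ne : kq ≠ 0 := by
  intro h
  have h2 := congrArg ka (show qp 1 * qp (-1) = 1 by rw [qp_mul]; rfl)
  rw [map_mul, map_one] at h2
  change kq * _ = 1 at h2
  rw [h] at h2; simp at h2
theorem kq_nat (n : ℕ) : ka (qp n) = kq ^ n := by
  rw [kq, ← map_pow, qp_pow, mul_one]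
theorem kq_neg (n : ℕ) : ka (qp (-n)) = (kq ^ n)⁻¹ := by
  have h2 := congrArg ka (show qp n * qp (-n) = 1 by rw [qp_mul, add_neg_cancel]; rfl)
  rw [map_mul, map_one, kq_nat] at h2
  exact eq_inv_of_mul_eq_one_right h2

theorem kj_def (b : ℕ) : ka (jj b) = kj b := rfl

theorem hH_eq (U : FF → FF) (hU : ∀ (f : FF) (n : ℤ), (U f).coeff n = f.coeff (7 * n)) :
    hH = qp (-7) * jj 7 ^ 4 * ji 49 ^ 4 := by
  have h1 := hH_sq U hU
  have h2 : hH ^ 2 = (qp (-7) * jj 7 ^ 4 * ji 49 ^ 4) ^ 2 := by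
    apply ka_inj
    have h3 := congrArg ka h1
    unfold dD at h3
    have e1 := kq_nat 2
    have e2 := kq_neg 7
    push_cast at e1 e2
    simp only [map_mul, map_pow, e1, e2, kj_inv (show 1 ≤ 49 by norm_num)] at h3 ⊢
    simp only [kj_def] at h3 ⊢
    have n1 := kj_ne (show 1 ≤ 49 by norm_num)
    have n2 := kq_ne
    field_simp
    linear_combination h3
  rcases sq_eq_sq_iff_eq_or_eq_neg.1 h2 with h | h
  · exact h
  · exfalso
    have lR : Lead (-7) 1 (qp (-7) * jj 7 ^ 4 * ji 49 ^ 4) := by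
      have a := lead_jj 7 (by norm_num)
      have b := lead_ji 49 (by norm_num)
      have := ((lead_qp (-7)).mul (((a.mul a).mul a).mul a)).mul (((b.mul b).mul b).mul b)
      convert this using 1 <;> first | ring | norm_num
    have lA : Lead (-7) (-1) (aL ^ 3 * bE) := by
      have := (((lead_aL.mul lead_aL).mul lead_aL).mul lead_bE)
      convert this using 1 <;> first | ring | norm_num
    have lB : Lead 0 (-1) (bE ^ 3 * gA) := by
      have := (((lead_bE.mul lead_bE).mul lead_bE).mul lead_gA)
      convert this using 1 <;> first | ring | norm_num
    have lC : Lead 7 1 (gA ^ 3 * aL) := by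
      have := (((lead_gA.mul lead_gA).mul lead_gA).mul lead_aL)
      convert this using 1 <;> first | ring | norm_num
    have e8 : HahnSeries.coeff (8 : FF) (-7) = 0 := by
      have : (8 : FF) = HahnSeries.C (8 : ℤ) := (map_ofNat (HahnSeries.C : ℤ →+* FF) 8).symm
      rw [this, HahnSeries.C_apply, HahnSeries.coeff_single]
      simp
    have := congrArg (fun f => HahnSeries.coeff f (-7)) h
    simp [hH, lR.coeff, lA.coeff, lB.coeff_lt (-7) (by norm_num), lC.coeff_lt (-7) (by norm_num), e8] at this

theorem V_E (f : FF) : V7 (E2 f) = E2 (V7 f) := by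
  ext n
  by_cases h7 : ((7 : ℕ) : ℤ) ∣ n
  · by_cases h2 : ((2 : ℕ) : ℤ) ∣ n
    · obtain ⟨k, rfl⟩ : ∃ k, n = ((7 : ℕ) : ℤ) * (((2 : ℕ) : ℤ) * k) := ⟨n / 14, by omega⟩
      rw [ex_coeff, ex_coeff, mul_left_comm, ex_coeff, ex_coeff]
    · rw [ex_coeff_not 2 _ _ _ h2]
      obtain ⟨k, rfl⟩ := h7
      rw [ex_coeff, ex_coeff_not]
      omega
  · rw [ex_coeff_not 7 _ _ _ h7]
    by_cases h2 : ((2 : ℕ) : ℤ) ∣ n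
    · obtain ⟨k, rfl⟩ := h2
      rw [ex_coeff, ex_coeff_not]
      omega
    · rw [ex_coeff_not 2 _ _ _ h2]

theorem hF_eq (U : FF → FF) (hU : ∀ (f : FF) (n : ℤ), (U f).coeff n = f.coeff (7 * n)) :
    hF (U la) (U mu) (U nu) = qp (-1) * jj 1 ^ 4 * ji 7 ^ 4 := by
  apply ex_inj 7 (by norm_num)
  change V7 _ = V7 _
  rw [hF_up U hU, hH_eq U hU]
  simp only [map_mul, map_pow]
  rw [ex_qp, ex_jj _ _ _ (by norm_num), ex_ji _ _ _ (by norm_num)]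
  norm_num

theorem h2F_up (U : FF → FF) (hU : ∀ (f : FF) (n : ℤ), (U f).coeff n = f.coeff (7 * n)) :
    V7 (h2F (U la) (U mu) (U nu)) = E2 hH := by
  have hl := V_U U hU res_la
  have hm := V_U U hU res_mu
  have hn := V_U U hU res_nu
  obtain ⟨m1, m2, m3, m4, m5, m6, h1⟩ := lmn_main
  unfold h2F hH
  simp only [map_mul, map_add, map_sub, map_neg, map_pow, map_ofNat, hl, hm, hn]
  change _ = -(aL2 ^ 3 * bE2 + bE2 ^ 3 * gA2 + gA2 ^ 3 * aL2) - 8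
  rw [aL2_eq, bE2_eq, gA2_eq]
  linear_combination la ^ 2 * mu * m3 + mu ^ 2 * nu * m1 + nu ^ 2 * la * m2 + (la + mu + nu) * h1

theorem h2F_eq (U : FF → FF) (hU : ∀ (f : FF) (n : ℤ), (U f).coeff n = f.coeff (7 * n)) :
    h2F (U la) (U mu) (U nu) = qp (-2) * jj 2 ^ 4 * ji 14 ^ 4 := by
  apply ex_inj 7 (by norm_num)
  change V7 _ = V7 _
  rw [h2F_up U hU, hH_eq U hU]
  simp only [map_mul, map_pow]
  rw [ex_qp, ex_qp, ex_jj _ _ _ (by norm_num), ex_ji _ _ _ (by norm_num), ex_jj _ _ _ (by norm_num), ex_ji _ _ _ (by norm_num)]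
  norm_num

theorem vF_up (U : FF → FF) (hU : ∀ (f : FF) (n : ℤ), (U f).coeff n = f.coeff (7 * n)) :
    V7 (vF (U la) (U mu) (U nu)) = 8 * (qp 14 * (jj 98 ^ 7 * jj 7 * (ji 49 ^ 7 * ji 14))) := by
  have hl := V_U U hU res_la
  have hm := V_U U hU res_mu
  have hn := V_U U hU res_nu
  obtain ⟨m1, m2, m3, m4, m5, m6, h1⟩ := lmn_main
  rw [← a_prod]
  unfold vF
  simp only [map_mul, map_sub, map_neg, map_one, hl, hm, hn]
  rw [← m4, ← m5, ← m6]
  linear_combination - a1 * a2 * a4 * abg.1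

theorem vF_eq (U : FF → FF) (hU : ∀ (f : FF) (n : ℤ), (U f).coeff n = f.coeff (7 * n)) :
    vF (U la) (U mu) (U nu) = 8 * (qp 2 * (jj 14 ^ 7 * jj 1 * (ji 7 ^ 7 * ji 2))) := by
  apply ex_inj 7 (by norm_num)
  change V7 _ = V7 _
  rw [vF_up U hU]
  simp only [map_mul, map_pow, map_ofNat]
  rw [ex_qp, ex_jj _ _ _ (by norm_num), ex_jj _ _ _ (by norm_num), ex_ji _ _ _ (by norm_num), ex_ji _ _ _ (by norm_num)]
  norm_num
end QS

namespace QS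
open PowerSeries

theorem ka_I1 : ka (ji 1) = (kj 1)⁻¹ := kj_inv (by norm_num)
theorem zexpr (U : FF → FF) (hU : ∀ (f : FF) (n : ℤ), (U f).coeff n = f.coeff (7 * n)) :
    V7 (U mu) * aL + V7 (U nu) * bE + V7 (U la) * gA - 1 = qp (-4) * ji 98 * jj 2 := by
  rw [V_U U hU res_la, V_U U hU res_mu, V_U U hU res_nu, ← zZ_jj, zZ_eq, aL2_eq, bE2_eq, gA2_eq]
  ring

theorem qpI : io (X : PowerSeries ℤ) = qp 1 := by
  have := qp_io 1
  simpa using this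

set_option maxHeartbeats 4000000 in
theorem build (t : PowerSeries ℤ) (ht : t * (J 1) ^ 4 = PowerSeries.X * (J 7) ^ 4)
    (p0 : PowerSeries ℤ)
    (hp0 : (1 + 7 * p0) * ((J 1) ^ 7 * J 14) = 8 * (J 2) ^ 7 * J 7)
    (p1 : FF)
    (hp1 : p1 * io (PowerSeries.X * (J 1) ^ 4 * (J 14) ^ 4) = io ((J 2) ^ 4 * (J 7) ^ 4))
    (U : FF → FF)
    (hU : ∀ (f : FF) (n : ℤ), (U f).coeff n = f.coeff (7 * n))
    (A5 : FF)
    (hA5 : A5 * io ((J 1) ^ 16 * (J 98) ^ 5)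
        = io (PowerSeries.X ^ 12 * (J 2) ^ 5 * (J 49) ^ 16)) :
    ∃ tu : FFˣ, (tu : FF) = io t ∧
      Sys V7 (UA U hU) aL bE gA (U la) (U mu) (U nu) tu (dD * ji 1) (io p0) p1 A5 := by
  have n1 := kj_ne (show 1 ≤ 1 by norm_num)
  have n2 := kj_ne (show 1 ≤ 2 by norm_num)
  have n7 := kj_ne (show 1 ≤ 7 by norm_num)
  have n14 := kj_ne (show 1 ≤ 14 by norm_num)
  have n49 := kj_ne (show 1 ≤ 49 by norm_num)
  have n98 := kj_ne (show 1 ≤ 98 by norm_num)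
  have nq := kq_ne
  have i1 := kj_inv (show 1 ≤ 1 by norm_num)
  have i2 := kj_inv (show 1 ≤ 2 by norm_num)
  have i7 := kj_inv (show 1 ≤ 7 by norm_num)
  have i14 := kj_inv (show 1 ≤ 14 by norm_num)
  have i49 := kj_inv (show 1 ≤ 49 by norm_num)
  have i98 := kj_inv (show 1 ≤ 98 by norm_num)
  have q1 : ka (qp 1) = kq := rfl
  have q2 := kq_nat 2
  have q14 := kq_nat 14
  have m1 := kq_neg 1
  have m2 := kq_neg 2
  have m4 := kq_neg 4
  have m7 := kq_neg 7
  have m14 := kq_neg 14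
  push_cast at q2 q14 m1 m2 m4 m7 m14
  have jd : ∀ b, io (J b) = jj b := fun b => rfl
  have t1 := congrArg (fun f => ka (io f)) ht
  have t2 := congrArg (fun f => ka (io f)) hp0
  have t3 := congrArg ka hp1
  have t4 := congrArg ka hA5
  simp only [map_mul, map_pow, map_add, map_one, map_ofNat, qpI, jd, kj_def, q1] at t1 t2 t3 t4
  set T := ka (io t) with hT
  set P0 := ka (io p0) with hP0
  set P1 := ka p1 with hP1
  set A := ka A5 with hA
  have T1 : T = kq * kj 7 ^ 4 / kj 1 ^ 4 := by rw [eq_div_iff (pow_ne_zero _ n1)]; exact t1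
  have T2 : 1 + 7 * P0 = 8 * kj 2 ^ 7 * kj 7 / (kj 1 ^ 7 * kj 14) := by
    rw [eq_div_iff (mul_ne_zero (pow_ne_zero _ n1) n14)]; exact t2
  have T3 : P1 = kj 2 ^ 4 * kj 7 ^ 4 / (kq * kj 1 ^ 4 * kj 14 ^ 4) := by
    rw [eq_div_iff (mul_ne_zero (mul_ne_zero nq (pow_ne_zero _ n1)) (pow_ne_zero _ n14))]; exact t3
  have T4 : A = kq ^ 12 * kj 2 ^ 5 * kj 49 ^ 16 / (kj 1 ^ 16 * kj 98 ^ 5) := by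
    rw [eq_div_iff (mul_ne_zero (pow_ne_zero _ n1) (pow_ne_zero _ n98))]; exact t4
  have th : io t * hF (U la) (U mu) (U nu) = 1 := by
    rw [hF_eq U hU]
    apply ka_inj
    simp only [map_mul, map_pow, map_one, kj_def, i7, m1, ← hT, T1]
    field_simp
  have vh : V7 (hF (U la) (U mu) (U nu)) = qp (-7) * jj 7 ^ 4 * ji 49 ^ 4 := by
    rw [hF_up U hU, hH_eq U hU]
  have vh2 : V7 (h2F (U la) (U mu) (U nu)) = qp (-14) * jj 14 ^ 4 * ji 98 ^ 4 := by
    rw [h2F_up U hU, hH_eq U hU]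
    simp only [map_mul, map_pow]
    rw [ex_qp, ex_jj _ _ _ (by norm_num), ex_ji _ _ _ (by norm_num)]
    norm_num
  refine ⟨⟨io t, _, th, by rw [mul_comm]; exact th⟩, rfl, ?_⟩
  refine ⟨dis U hU, th, ?_, ?_, ?_, ?_, ?_, ?_, ?_, ?_⟩
  · rw [← yY_eq]
    have h1 := dD_dI
    have h2 := jj_ji 1 (by norm_num)
    unfold yY
    linear_combination jj 1 * ji 1 * h1 + h2
  · rw [vh]
    apply ka_inj
    simp only [dD, map_mul, map_pow, kj_def, i1, i49, m7, q2, ← hT, T1]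
    field_simp
  · rw [vh, vh2, zexpr U hU]
    apply ka_inj
    simp only [dD, map_mul, map_pow, kj_def, i1, i49, i98, m7, m14, m4, q2, ← hP1, T3]
    field_simp
  · rw [vF_up U hU, zexpr U hU]
    apply ka_inj
    simp only [dD, map_add, map_one, map_ofNat, map_mul, map_pow, kj_def, i1, i14, i49, i98, m4, q2, q14, ← hP0, T2]
    field_simp
  · rw [zexpr U hU]
    apply ka_inj
    simp only [dD, map_mul, map_pow, kj_def, i1, i49, i98, m4, q2, ← hA, T4]
    field_simp
  · rw [h2F_eq U hU]
    apply ka_inj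
    simp only [map_mul, map_pow, kj_def, i14, m2, ← hT, T1, ← hP1, T3]
    field_simp
  · rw [h2F_eq U hU, vF_eq U hU]
    apply ka_inj
    simp only [map_add, map_one, map_ofNat, map_mul, map_pow, kj_def, i2, i7, i14, m2, q2, ← hP0, T2, ← hT, T1]
    field_simp
  · rw [h2F_eq U hU]
    intro h
    have := congrArg ka h
    simp only [map_mul, map_pow, map_zero, kj_def, i14, m2] at this
    simp [n2, n14, nq] at this
end QS

namespace QS
open PowerSeries

theorem ts_add (t : PowerSeries ℤ) (f g h : ℕ → ℤ) (e : ∀ n, h n = f n + g n) :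
    tpowSum t h = tpowSum t f + tpowSum t g := by
  ext m
  simp only [tpowSum, map_add, coeff_mk, e, add_mul, Finset.sum_add_distrib]

theorem ts_neg (t : PowerSeries ℤ) (f h : ℕ → ℤ) (e : ∀ n, h n = - f n) :
    tpowSum t h = - tpowSum t f := by
  ext m
  simp only [tpowSum, map_neg, coeff_mk, e, neg_mul, Finset.sum_neg_distrib]

theorem ts_zero (t : PowerSeries ℤ) (h : ℕ → ℤ) (e : ∀ n, h n = 0) :
    tpowSum t h = 0 := by
  ext m
  simp [tpowSum, e]

theorem ts_single (t : PowerSeries ℤ) (ht : X ∣ t) (h : ℕ → ℤ) (M : ℕ) (c : ℤ) (e : ∀ n, h n = if n = M then c else 0) :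
    tpowSum t h = C c * t ^ M := by
  ext m
  simp only [tpowSum, coeff_mk, e, coeff_C_mul, ite_mul, zero_mul, Finset.sum_ite_eq', Finset.mem_range]
  split_ifs with hm
  · rfl
  · have := X_pow_dvd_iff.1 (pow_dvd_pow_of_dvd ht M) m (by omega)
    rw [this, mul_zero]

def Good (t p0 : PowerSeries ℤ) (p1 x : FF) : Prop :=
    ∃ d30 : ℤ, ∃ d : ℕ → ℕ → ℤ,
      x = ((7 * d30 : ℤ) : FF) * ((io p0 + p1) * (io t) ^ 3)
        + io (p0 * tpowSum t fun n =>
              if 4 ≤ n then d n 0 * 7 ^ ((7 * n - 20) / 4) else 0)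
        + p1 * io (tpowSum t fun n =>
              if 4 ≤ n then d n 1 * 7 ^ ((7 * n - 24) / 4) else 0)
        + io (tpowSum t fun n =>
              if 4 ≤ n then d n 2 * 7 ^ ((7 * n - 24) / 4) else 0)

theorem good_zero (t p0 : PowerSeries ℤ) (p1 : FF) : Good t p0 p1 0 := by
  refine ⟨0, fun _ _ => 0, ?_⟩
  rw [ts_zero t _ (fun n => by simp), ts_zero t _ (fun n => by simp)]
  simp

theorem good_add {t p0 : PowerSeries ℤ} {p1 x y : FF} (hx : Good t p0 p1 x) (hy : Good t p0 p1 y) :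
    Good t p0 p1 (x + y) := by
  obtain ⟨a, d, rfl⟩ := hx
  obtain ⟨b, e, rfl⟩ := hy
  refine ⟨a + b, fun n i => d n i + e n i, ?_⟩
  have h : ∀ (i k : ℕ), (tpowSum t fun n => if 4 ≤ n then (d n i + e n i) * 7 ^ ((7 * n - k) / 4) else 0)
      = (tpowSum t fun n => if 4 ≤ n then d n i * 7 ^ ((7 * n - k) / 4) else 0)
      + (tpowSum t fun n => if 4 ≤ n then e n i * 7 ^ ((7 * n - k) / 4) else 0) := by
    intro i k
    refine ts_add t _ _ _ fun n => ?_
    split_ifs <;> ring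
  rw [h, h, h]
  simp only [map_add, map_mul]
  push_cast
  ring

theorem good_neg {t p0 : PowerSeries ℤ} {p1 x : FF} (hx : Good t p0 p1 x) :
    Good t p0 p1 (-x) := by
  obtain ⟨a, d, rfl⟩ := hx
  refine ⟨-a, fun n i => - d n i, ?_⟩
  have h : ∀ (i k : ℕ), (tpowSum t fun n => if 4 ≤ n then (- d n i) * 7 ^ ((7 * n - k) / 4) else 0)
      = - (tpowSum t fun n => if 4 ≤ n then d n i * 7 ^ ((7 * n - k) / 4) else 0) := by
    intro i k
    refine ts_neg t _ _ fun n => ?_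
    split_ifs <;> ring
  rw [h, h, h]
  simp only [map_neg, map_mul]
  push_cast
  ring

theorem good_gen {t p0 : PowerSeries ℤ} (hX : X ∣ t) {p1 : FF} (tu : FFˣ) (htu : (tu : FF) = io t)
    {m a b c : ℤ} (h : OdC m a b c) :
    Good t p0 p1 ((a * io p0 + b * p1 + c) * ((tu ^ m : FFˣ) : FF)) := by
  obtain ⟨h1, h2, h3, h4, h5⟩ := h
  rcases lt_trichotomy m 3 with hm | hm | hm
  · obtain ⟨rfl, rfl, rfl⟩ := h1 hm
    simpa using good_zero t p0 p1
  · obtain ⟨⟨k, rfl⟩, rfl, rfl⟩ := h2 hm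
    subst hm
    refine ⟨k, fun _ _ => 0, ?_⟩
    rw [ts_zero t _ (fun n => by simp), ts_zero t _ (fun n => by simp)]
    rw [show (tu ^ (3 : ℤ) : FFˣ) = tu ^ (3 : ℕ) from by norm_cast, Units.val_pow_eq_pow_val, htu]
    push_cast
    simp only [mul_zero, map_zero]
    ring
  · obtain ⟨M, rfl⟩ : ∃ M : ℕ, m = M := ⟨m.toNat, by omega⟩
    have hM : 4 ≤ M := by omega
    rw [show ((7 * (M : ℤ) - 20) / 4).toNat = (7 * M - 20) / 4 by omega] at h3
    rw [show ((7 * (M : ℤ) - 24) / 4).toNat = (7 * M - 24) / 4 by omega] at h4 h5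
    obtain ⟨u, hu⟩ := h3
    obtain ⟨v, hv⟩ := h4
    obtain ⟨w, hw⟩ := h5
    refine ⟨0, fun n i => if n = M then (if i = 0 then u else if i = 1 then v else w) else 0, ?_⟩
    have key : ∀ (i k : ℕ) (s z : ℤ), z = 7 ^ ((7 * M - k) / 4) * s → s = (if i = 0 then u else if i = 1 then v else w) → 
      (tpowSum t fun n => if 4 ≤ n then (if n = M then (if i = 0 then u else if i = 1 then v else w) else 0) * 7 ^ ((7 * n - k) / 4) else 0)
      = C z * t ^ M := by
      intro i k s z hz hs
      refine ts_single t hX _ M z fun n => ?_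
      rw [← hs]
      by_cases hn : n = M
      · subst hn
        rw [if_pos hM, if_pos rfl, if_pos rfl, hz, mul_comm]
      · simp [hn]
    have hC : ∀ z : ℤ, io (C z) = (z : FF) := fun z => by
      rw [eq_intCast (C : ℤ →+* PowerSeries ℤ), map_intCast]
    rw [key 0 20 u a hu (by simp), key 1 24 v b hv (by simp), key 2 24 w c hw (by simp)]
    rw [zpow_natCast, Units.val_pow_eq_pow_val, htu]
    simp only [map_mul, map_pow, hC]
    push_cast
    ring

theorem X_dvd_t (t : PowerSeries ℤ) (ht : t * (J 1) ^ 4 = PowerSeries.X * (J 7) ^ 4) : X ∣ t := by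
  have h : X ∣ t * J 1 ^ 4 := ⟨_, ht⟩
  rw [X_dvd_iff, map_mul, map_pow] at h
  rw [X_dvd_iff]
  have h2 : constantCoeff (J 1) ≠ 0 := by
    rw [← coeff_zero_eq_constantCoeff_apply, J, coeff_mk]
    simp
  rcases mul_eq_zero.1 h with h | h
  · exact h
  · exact absurd (pow_eq_zero_iff (by norm_num) |>.1 h) h2

theorem good_mem {t p0 : PowerSeries ℤ} (hX : X ∣ t) {p1 : FF} (tu : FFˣ) (htu : (tu : FF) = io t)
    {x : FF} (hx : x ∈ Mod3 tu (io p0) p1 OdC) : Good t p0 p1 x := by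
  unfold Mod3 at hx
  induction hx using AddSubgroup.closure_induction with
  | mem x h =>
    obtain ⟨m, a, b, c, h, rfl⟩ := h
    exact good_gen hX tu htu h
  | zero => exact good_zero t p0 p1
  | add x y _ _ hx hy => exact good_add hx hy
  | neg x _ hx => exact good_neg hx

theorem ff_cz : CharZero FF :=
  charZero_of_injective_ringHom (f := (HahnSeries.C : ℤ →+* FF)) HahnSeries.C_injective
end QS

/-- in the d₅ tower, for every `α ≥ 1` there are integers `d(3,0)`, `d(n,i)`
with `L_{2α−1} = 7·d(3,0)·(p₀+p₁)·t³ + p₀·∑_{n≥4} d(n,0)·7^{⌊(7n−20)/4⌋}·tⁿ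
 + p₁·∑_{n≥4} d(n,1)·7^{⌊(7n−24)/4⌋}·tⁿ + ∑_{n≥4} d(n,2)·7^{⌊(7n−24)/4⌋}·tⁿ`.
Here `t = q·J_7^4/J_1^4`, `p₀ = (8·J_2^7·J_7/(J_1^7·J_14) − 1)/7`,
`p₁ = q⁻¹·J_2^4·J_7^4/(J_1^4·J_14^4)`, all given by their defining equations. -/
theorem stmt15
    (t : PowerSeries ℤ) (ht : t * (J 1) ^ 4 = PowerSeries.X * (J 7) ^ 4)
    (p0 : PowerSeries ℤ)
    (hp0 : (1 + 7 * p0) * ((J 1) ^ 7 * J 14) = 8 * (J 2) ^ 7 * J 7)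
    (p1 : LaurentSeries ℤ)
    (hp1 : p1 * HahnSeries.ofPowerSeries ℤ ℤ (PowerSeries.X * (J 1) ^ 4 * (J 14) ^ 4)
        = HahnSeries.ofPowerSeries ℤ ℤ ((J 2) ^ 4 * (J 7) ^ 4))
    (U : LaurentSeries ℤ → LaurentSeries ℤ)
    (hU : ∀ (f : LaurentSeries ℤ) (n : ℤ), (U f).coeff n = f.coeff (7 * n))
    (A5 : LaurentSeries ℤ)
    (hA5 : A5 * HahnSeries.ofPowerSeries ℤ ℤ ((J 1) ^ 16 * (J 98) ^ 5)
        = HahnSeries.ofPowerSeries ℤ ℤ (PowerSeries.X ^ 12 * (J 2) ^ 5 * (J 49) ^ 16))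
    (L : ℕ → LaurentSeries ℤ) (hL0 : L 0 = 1)
    (hLodd : ∀ β : ℕ, L (2 * β + 1) = U (A5 * L (2 * β)))
    (hLeven : ∀ β : ℕ, L (2 * β + 2) = U (L (2 * β + 1)))
    (α : ℕ) (hα : 1 ≤ α) :
    ∃ d30 : ℤ, ∃ d : ℕ → ℕ → ℤ,
      L (2 * α - 1)
        = ((7 * d30 : ℤ) : LaurentSeries ℤ) *
            ((HahnSeries.ofPowerSeries ℤ ℤ p0 + p1) *
              (HahnSeries.ofPowerSeries ℤ ℤ t) ^ 3)
        + HahnSeries.ofPowerSeries ℤ ℤ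
            (p0 * tpowSum t fun n =>
              if 4 ≤ n then d n 0 * 7 ^ ((7 * n - 20) / 4) else 0)
        + p1 * HahnSeries.ofPowerSeries ℤ ℤ
            (tpowSum t fun n =>
              if 4 ≤ n then d n 1 * 7 ^ ((7 * n - 24) / 4) else 0)
        + HahnSeries.ofPowerSeries ℤ ℤ
            (tpowSum t fun n =>
              if 4 ≤ n then d n 2 * 7 ^ ((7 * n - 24) / 4) else 0) := by
  obtain ⟨tu, htu, S⟩ := QS.build t ht p0 hp0 p1 hp1 U hU A5 hA5
  obtain ⟨i, rfl⟩ : ∃ i, α = i + 1 := ⟨α - 1, by omega⟩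
  haveI : CharZero (LaurentSeries ℤ) := QS.ff_cz
  have h := S.tower L hL0 hLodd hLeven i
  have e : 2 * (i + 1) - 1 = 2 * i + 1 := by omega
  rw [e]
  exact QS.good_mem (QS.X_dvd_t t ht) tu htu h
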